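/- For every integer r ≥ 2 and every ε > 0 there exists d₀ = d₀(r, ε) such that for every fixed integer d ≥ d₀ the following holds with high probability: |α(H_r(n,d)) − Y·n| ≤ ε·Y·n, where Y := (r log d/((r−1)d))^{1/(r−1)}. -/

import Mathlib

/-!
The argument compares a random regular hypergraph with a uniformly random *balanced word*
`w : Fin M × Fin r → Fin n` (each letter used `d` times, `M r = d n`), whose `M` rows are the edges
of a multi-hypergraph with independence number `wordAlpha w`.

* Transfer. Each `d`-regular `r`-uniform hypergraph comes from exactly `M! (r!)^M` words whose rows
  form a simple hypergraph (`card_fiber_edgesOf`). A word is simple with at least inverse polynomial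
  probability (`card_simple_ge`): on average it has `O(1)` bad slots (`sum_badSlot_le`), and each
  can be repaired by exchanging two letters (`card_few_bad_le`). Hence every event of
  exponentially small probability for words has probability `o(1)` for hypergraphs
  (`uniformProb_ge`).

* Upper bound. Up to polynomial factors a given set of density `s` is independent with probability
  at most `(1 - s ^ r) ^ M`, so a union bound over the sets of size `k > (1 + ε) Y n` gives an
  exponentially small probability (`card_upper_tail`).

* Lower bound. Fix `p = (1 - ε₁) Y`. For a suitable `k ≈ p n`, a given `k`-set is independent with
  probability `(1 - p ^ r) ^ M` up to polynomial factors and an exponential tilting factor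
  (`exists_size`, `card_avoids_ge`). The joint probability for two `k`-sets is bounded with the same
  tilting (`card_pair_avoids_le`), so that the tilting factors cancel in the Paley–Zygmund ratio.
  Summing over the overlap of the two sets (`overlap_pointwise`) shows that an independent `k`-set
  exists with probability at least `exp (-ε₁² Y² n / (128 d))`, up to polynomial factors
  (`card_second_moment`). Exchanging two letters changes `wordAlpha` by at most `2`, so a
  martingale argument (`perm_mgf`, `balanced_concentration`) shows that deviations of `ε₁ Y n` from
  the mean have probability at most `exp (-ε₁² Y² n / (64 d))`. This is smaller than the second
  moment bound, so the mean exceeds `k - ε₁ Y n`, and the same inequality bounds the lower tail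
  (`card_lower_tail`).
-/

open Finset Filter Real

open scoped Classical

/-- A set of vertices is independent if it contains no edge. -/
def IndepSet {n : ℕ} (E : Finset (Finset (Fin n))) (S : Finset (Fin n)) : Prop :=
  ∀ e ∈ E, ¬ e ⊆ S

/-- The independence number of the hypergraph with edge set `E`. -/
noncomputable def independenceNumber {n : ℕ} (E : Finset (Finset (Fin n))) : ℕ :=
  sSup {s : ℕ | ∃ S : Finset (Fin n), S.card = s ∧ IndepSet E S}

/-- The family of all `d`-regular `r`-uniform hypergraphs on vertex set `Fin n`. -/
noncomputable def regularFamily (n r d : ℕ) : Finset (Finset (Finset (Fin n))) :=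
  Finset.univ.filter (fun E : Finset (Finset (Fin n)) =>
    (∀ e ∈ E, e.card = r) ∧ ∀ v : Fin n, (E.filter (fun e => v ∈ e)).card = d)

/-- The probability that a uniformly random element of `family` satisfies `P`. -/
noncomputable def uniformProb {α : Type*} (family : Finset α) (P : α → Prop) : ℝ :=
  ((family.filter (fun x => P x)).card : ℝ) / (family.card : ℝ)

/-! ### Balanced words and their symmetry -/

/-- The words `w : I → Fin n` (one letter per slot of `I`) in which each letter occurs exactly
`d` times: the configuration model with indistinguishable half-edges. -/
noncomputable def balanced (I : Type*) [Fintype I] (n d : ℕ) : Finset (I → Fin n) :=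
  univ.filter fun w => ∀ v, (univ.filter fun x => w x = v).card = d

/-- The label patterns `χ : I → L` that arise by composing balanced words with `lab : Fin n → L`:
label `j` occurs `d` times the number of letters labelled `j`. -/
noncomputable def patterns (I : Type*) [Fintype I] {n : ℕ} (d : ℕ) {L : Type*} [Fintype L] [DecidableEq L]
    (lab : Fin n → L) : Finset (I → L) :=
  univ.filter fun χ => ∀ j, (univ.filter fun x => χ x = j).card
    = d * (univ.filter fun v => lab v = j).card

section Symmetry
variable {I : Type*} [Fintype I]

lemma exists_perm_of_card_fiber_eq {L : Type*} [DecidableEq L] (f g : I → L)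
    (h : ∀ j, (univ.filter fun x => f x = j).card = (univ.filter fun x => g x = j).card) :
    ∃ σ : Equiv.Perm I, f ∘ σ = g := by
  have e : ∀ j, Nonempty ({x // g x = j} ≃ {x // f x = j}) := fun j => by
    rw [← Fintype.card_eq, Fintype.card_subtype, Fintype.card_subtype, h j]
  replace e := fun j => (e j).some
  refine ⟨(Equiv.sigmaFiberEquiv g).symm.trans
    ((Equiv.sigmaCongrRight e).trans (Equiv.sigmaFiberEquiv f)), ?_⟩
  funext x
  simpa [Equiv.sigmaFiberEquiv] using! (e (g x) ⟨x, rfl⟩).2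

lemma card_fiber_comp_perm {L : Type*} [DecidableEq L] (f : I → L) (σ : Equiv.Perm I) (j : L) :
    (univ.filter fun x => (f ∘ σ) x = j).card = (univ.filter fun x => f x = j).card := by
  refine Finset.card_bij (fun x _ => σ x) (by simp) (by simp) ?_
  intro b hb
  exact ⟨σ.symm b, by simpa using hb, by simp⟩

lemma balanced_comp_perm {n d : ℕ} {w : I → Fin n} (hw : w ∈ balanced I n d)
    (σ : Equiv.Perm I) : w ∘ σ ∈ balanced I n d := by
  simp only [balanced, mem_filter, mem_univ, true_and] at hw ⊢
  intro v
  rw [card_fiber_comp_perm, hw v]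

/-- Counting balanced words is invariant under permuting the slots. -/
lemma card_balanced_filter_comp_perm {n d : ℕ} (P : (I → Fin n) → Prop) [DecidablePred P]
    (σ : Equiv.Perm I) :
    ((balanced I n d).filter fun w => P (w ∘ σ)).card = ((balanced I n d).filter P).card := by
  refine Finset.card_bij (fun w _ => w ∘ σ) ?_ ?_ ?_
  · intro w hw
    simp only [mem_filter] at hw ⊢
    exact ⟨balanced_comp_perm hw.1 σ, hw.2⟩
  · intro a _ b _ h
    funext x
    simpa using congrFun h (σ.symm x)
  · intro b hb
    simp only [mem_filter] at hb
    refine ⟨b ∘ σ.symm, ?_, ?_⟩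
    · simp only [mem_filter]
      refine ⟨balanced_comp_perm hb.1 _, ?_⟩
      have : (b ∘ σ.symm) ∘ σ = b := by funext x; simp
      rw [this]; exact hb.2
    · funext x; simp

lemma comp_mem_patterns {n d : ℕ} {L : Type*} [Fintype L] [DecidableEq L] (lab : Fin n → L) {w : I → Fin n}
    (hw : w ∈ balanced I n d) : lab ∘ w ∈ patterns I d lab := by
  simp only [balanced, patterns, mem_filter, mem_univ, true_and] at hw ⊢
  intro j
  rw [Finset.card_eq_sum_card_fiberwise (f := w) (t := univ.filter fun v => lab v = j)]
  · rw [mul_comm, ← smul_eq_mul, ← Finset.sum_const]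
    refine Finset.sum_congr rfl fun v hv => ?_
    rw [← hw v]
    congr 1
    ext x
    simp only [mem_filter, mem_univ, true_and, Function.comp] at hv ⊢
    constructor
    · exact fun h => h.2
    · exact fun h => ⟨by rw [h, hv], h⟩
  · intro x hx
    simpa using hx

/-- The label pattern of a uniform balanced word is uniform over `patterns`. -/
lemma card_pattern_mem {n d : ℕ} {L : Type*} [Fintype L] [DecidableEq L] (lab : Fin n → L) (G : Finset (I → L)) :
    ((balanced I n d).filter fun w => lab ∘ w ∈ G).card * (patterns I d lab).card
      = (G ∩ patterns I d lab).card * (balanced I n d).card := by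
  rcases (patterns I d lab).eq_empty_or_nonempty with h0 | ⟨χ₀, hχ₀⟩
  · simp [h0]
  set c := ((balanced I n d).filter fun w => lab ∘ w = χ₀).card with hc
  have hconst : ∀ χ ∈ patterns I d lab, ((balanced I n d).filter fun w => lab ∘ w = χ).card = c := by
    intro χ hχ
    obtain ⟨σ, hσ⟩ := exists_perm_of_card_fiber_eq χ₀ χ (fun j => by
      simp only [patterns, mem_filter, mem_univ, true_and] at hχ₀ hχ
      rw [hχ₀ j, hχ j])
    rw [← card_balanced_filter_comp_perm (fun w => lab ∘ w = χ) σ, hc]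
    congr 1
    ext w
    simp only [mem_filter, and_congr_right_iff]
    intro _
    rw [← hσ, ← Function.comp_assoc]
    constructor
    · intro h
      funext x
      simpa using congrFun h (σ.symm x)
    · intro h; rw [h]
  have h1 : ∀ G : Finset (I → L), ((balanced I n d).filter fun w => lab ∘ w ∈ G).card
      = (G ∩ patterns I d lab).card * c := by
    intro G
    rw [Finset.card_eq_sum_card_fiberwise (f := fun w => lab ∘ w) (t := G ∩ patterns I d lab)]
    · rw [← smul_eq_mul, ← Finset.sum_const]
      refine Finset.sum_congr rfl fun χ hχ => ?_
      rw [mem_inter] at hχ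
      rw [← hconst χ hχ.2, filter_filter]
      congr 1
      ext w
      simp only [mem_filter, and_congr_right_iff]
      intro _
      constructor
      · exact fun h => h.2
      · exact fun h => ⟨h ▸ hχ.1, h⟩
    · intro w hw
      simp only [coe_filter, Set.mem_ofPred_eq] at hw
      simp only [coe_inter, Set.mem_inter_iff, mem_coe]
      exact ⟨hw.2, comp_mem_patterns lab hw.1⟩
  have h2 := h1 univ
  simp only [mem_univ, filter_true, univ_inter] at h2
  rw [h1, h2]; ring

/-- The multinomial formula for the number of patterns. -/
lemma card_patterns_mul {n d : ℕ} (hI : Fintype.card I = d * n) {L : Type*} [Fintype L] [DecidableEq L]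
    (lab : Fin n → L) :
    (patterns I d lab).card * ∏ j, (d * (univ.filter fun v => lab v = j).card).factorial
      = (d * n).factorial := by
  have hne : (patterns I d lab).Nonempty := by
    have e : Nonempty (I ≃ Fin n × Fin d) := by
      rw [← Fintype.card_eq, hI]; simp [mul_comm]
    obtain ⟨e⟩ := e
    refine ⟨lab ∘ fun x => (e x).1, comp_mem_patterns lab ?_⟩
    simp only [balanced, mem_filter, mem_univ, true_and]
    intro v
    have : (univ : Finset (Fin d)).card = (univ.filter fun x => (e x).1 = v).card := by
      refine Finset.card_bij (fun t _ => e.symm (v, t)) (by simp) ?_ ?_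
      · intro a _ b _ h
        simpa using h
      · intro x hx
        simp only [mem_filter, mem_univ, true_and] at hx
        exact ⟨(e x).2, mem_univ _, by rw [← hx]; simp⟩
    rw [← this]; simp
  obtain ⟨χ₀, hχ₀⟩ := hne
  have hmem : ∀ {χ}, χ ∈ patterns I d lab ↔ ∀ j, (univ.filter fun x => χ x = j).card
      = d * (univ.filter fun v => lab v = j).card := by
    intro χ; simp [patterns]
  have hst : Fintype.card {g : Equiv.Perm I // χ₀ ∘ g = χ₀}
      = ∏ j, (d * (univ.filter fun v => lab v = j).card).factorial := by
    rw [DomMulAct.stabilizer_card]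
    refine Finset.prod_congr rfl fun j _ => ?_
    rw [Fintype.card_subtype, hmem.1 hχ₀ j]
  have hfib : ∀ χ ∈ patterns I d lab, (univ.filter fun σ : Equiv.Perm I => χ₀ ∘ σ = χ).card
      = Fintype.card {g : Equiv.Perm I // χ₀ ∘ g = χ₀} := by
    intro χ hχ
    obtain ⟨τ, hτ⟩ := exists_perm_of_card_fiber_eq χ₀ χ (fun j => by
      rw [hmem.1 hχ₀ j, hmem.1 hχ j])
    rw [Fintype.card_subtype]
    symm
    refine Finset.card_bij (fun σ _ => σ * τ) ?_ ?_ ?_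
    · intro σ hσ
      simp only [mem_filter, mem_univ, true_and] at hσ ⊢
      rw [Equiv.Perm.coe_mul, ← Function.comp_assoc, hσ, hτ]
    · intro a _ b _ h; simpa using h
    · intro b hb
      simp only [mem_filter, mem_univ, true_and] at hb
      refine ⟨b * τ⁻¹, ?_, by simp⟩
      simp only [mem_filter, mem_univ, true_and]
      rw [Equiv.Perm.coe_mul, ← Function.comp_assoc, hb, ← hτ]
      funext x; simp
  have : (univ : Finset (Equiv.Perm I)).card
      = (patterns I d lab).card * Fintype.card {g : Equiv.Perm I // χ₀ ∘ g = χ₀} := by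
    rw [Finset.card_eq_sum_card_fiberwise (f := fun σ : Equiv.Perm I => χ₀ ∘ σ)
      (t := patterns I d lab), Finset.sum_congr rfl hfib]
    · simp
    · intro σ _
      rw [mem_coe, hmem]
      intro j
      rw [card_fiber_comp_perm, hmem.1 hχ₀ j]
  rw [← hst, ← this, Finset.card_univ, Fintype.card_perm, hI]

lemma balanced_nonempty {n d : ℕ} (hI : Fintype.card I = d * n) : (balanced I n d).Nonempty := by
  have h := card_pattern_mem (I := I) (d := d) (lab := (id : Fin n → Fin n)) univ
  have h2 := card_patterns_mul (d := d) hI (id : Fin n → Fin n)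
  have h3 : 0 < (patterns I d (id : Fin n → Fin n)).card := by
    rcases Nat.eq_zero_or_pos (patterns I d (id : Fin n → Fin n)).card with h0 | h0
    · rw [h0, zero_mul] at h2
      exact absurd h2.symm (Nat.factorial_ne_zero _)
    · exact h0
  obtain ⟨χ, hχ⟩ := Finset.card_pos.1 h3
  refine ⟨χ, ?_⟩
  simp only [patterns, balanced, mem_filter, mem_univ, true_and] at hχ ⊢
  intro v
  rw [hχ v]
  simp [Finset.filter_eq']

end Symmetry

/-! ### Weighted counting of patterns -/

lemma factorial_le_stirling (m : ℕ) :
    (m.factorial : ℝ) ≤ Real.exp 1 * (m + 1) * ((m : ℝ) / Real.exp 1) ^ m := by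
  have key : ∀ m : ℕ, ((m + 1).factorial : ℝ)
      ≤ Real.exp 1 * (m + 1) * (((m + 1 : ℕ) : ℝ) / Real.exp 1) ^ (m + 1) := by
    intro m
    induction m with
    | zero => simp [Real.exp_ne_zero]
    | succ k ih =>
      have hk : (0 : ℝ) < k + 1 := by positivity
      have h1 : Real.exp 1 ≤ ((k + 2 : ℝ) / (k + 1)) ^ (k + 2) := by
        have hlog : 1 / (k + 2 : ℝ) ≤ Real.log ((k + 2 : ℝ) / (k + 1)) := by
          have := Real.log_le_sub_one_of_pos (x := (k + 1 : ℝ) / (k + 2)) (by positivity)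
          rw [← inv_div ((k : ℝ) + 1), Real.log_inv]
          have e : (k + 1 : ℝ) / (k + 2) - 1 = - (1 / (k + 2)) := by field_simp; ring
          linarith
        rw [← Real.exp_log (x := ((k + 2 : ℝ) / (k + 1)) ^ (k + 2)) (by positivity), Real.log_pow]
        apply Real.exp_le_exp.2
        calc (1 : ℝ) = (k + 2) * (1 / (k + 2)) := by field_simp
          _ ≤ (k + 2) * Real.log ((k + 2 : ℝ) / (k + 1)) := by gcongr
          _ = _ := by push_cast; ring
      have hE := Real.exp_pos 1
      rw [Nat.factorial_succ]
      push_cast at ih ⊢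
      calc ((k : ℝ) + 1 + 1) * ((k + 1).factorial : ℝ)
          ≤ (k + 1 + 1) * (Real.exp 1 * (k + 1) * (((k : ℝ) + 1) / Real.exp 1) ^ (k + 1)) := by
            gcongr
        _ = (Real.exp 1 * (k + 1 + 1) * (((k : ℝ) + 1) / Real.exp 1) ^ (k + 2)) * Real.exp 1 := by
            rw [pow_succ _ (k + 1)]; field_simp
        _ ≤ (Real.exp 1 * (k + 1 + 1) * (((k : ℝ) + 1) / Real.exp 1) ^ (k + 2)) *
              ((k + 2 : ℝ) / (k + 1)) ^ (k + 2) := by gcongr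
        _ = _ := by
            rw [mul_assoc, ← mul_pow]
            congr 2
            field_simp; ring
  rcases m with _ | m
  · simp
  · refine (key m).trans ?_
    push_cast
    gcongr
    linarith

/-- The most likely count vector of an i.i.d. labelling has at least inverse polynomial probability. -/
lemma patterns_weight_lower {I : Type*} [Fintype I] {n d : ℕ} (hn : 0 < n)
    (hI : Fintype.card I = d * n) {L : Type*} [Fintype L] [DecidableEq L] (lab : Fin n → L) :
    1 ≤ (Real.exp 1 * (d * n + 1)) ^ (Fintype.card L) * ((patterns I d lab).card *
      ∏ j, (((univ.filter fun v => lab v = j).card : ℝ) / n)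
        ^ (d * (univ.filter fun v => lab v = j).card)) := by
  set c : L → ℕ := fun j => (univ.filter fun v => lab v = j).card with hc
  have hsum : ∑ j, c j = n := by
    have := Finset.card_eq_sum_card_fiberwise (f := lab) (s := univ) (t := univ) (by simp)
    simpa [hc] using this.symm
  have hE := Real.exp_pos 1
  have hnR : (0 : ℝ) < n := by exact_mod_cast hn
  have hform : ((patterns I d lab).card : ℝ) * ∏ j, ((d * c j).factorial : ℝ)
      = ((d * n).factorial : ℝ) := by
    exact_mod_cast card_patterns_mul hI lab
  have hlow : ((d * n : ℕ) / Real.exp 1 : ℝ) ^ (d * n) ≤ ((d * n).factorial : ℝ) := by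
    have := Real.pow_div_factorial_le_exp (d * n : ℕ) (by positivity) (d * n)
    rw [div_le_iff₀ (by positivity)] at this
    rw [div_pow, div_le_iff₀ (by positivity), ← Real.exp_nat_mul, mul_one]
    linarith
  rcases Nat.eq_zero_or_pos d with rfl | hd
  · have : 1 ≤ (patterns I 0 lab).card := by
      by_contra h
      have h0 : (patterns I 0 lab).card = 0 := by omega
      rw [h0] at hform; simp at hform
    have h1 : (1 : ℝ) ≤ Real.exp 1 := Real.one_le_exp (by norm_num)
    simp only [Nat.cast_zero, zero_mul, zero_add, mul_one, pow_zero, prod_const_one]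
    exact one_le_mul_of_one_le_of_one_le (one_le_pow₀ h1) (by exact_mod_cast this)
  have hup : ∏ j, ((d * c j).factorial : ℝ) ≤ (Real.exp 1 * (d * n + 1)) ^ (Fintype.card L) *
      ((∏ j, ((c j : ℝ) / n) ^ (d * c j)) * ((d * n : ℕ) / Real.exp 1 : ℝ) ^ (d * n)) := by
    have e1 : ((d * n : ℕ) / Real.exp 1 : ℝ) ^ (d * n)
        = ∏ j, ((d * n : ℕ) / Real.exp 1 : ℝ) ^ (d * c j) := by
      rw [Finset.prod_pow_eq_pow_sum, ← Finset.mul_sum, hsum]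
    rw [e1, ← Finset.prod_mul_distrib, ← Finset.card_univ, ← Finset.prod_const,
      ← Finset.prod_mul_distrib]
    refine Finset.prod_le_prod (fun _ _ => by positivity) fun j _ => ?_
    refine (factorial_le_stirling _).trans ?_
    rw [← mul_pow]
    have hcj : c j ≤ n := hsum ▸ Finset.single_le_sum (f := c) (fun _ _ => Nat.zero_le _) (mem_univ j)
    have e2 : ((c j : ℝ) / n * ((d * n : ℕ) / Real.exp 1)) = ((d * c j : ℕ) : ℝ) / Real.exp 1 := by
      push_cast; field_simp
    rw [e2]
    have : (c j : ℝ) ≤ n := by exact_mod_cast hcj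
    gcongr
    push_cast
    gcongr
  have hpos : (0 : ℝ) < ((d * n : ℕ) / Real.exp 1 : ℝ) ^ (d * n) := by positivity
  have hfin := calc ((d * n : ℕ) / Real.exp 1 : ℝ) ^ (d * n)
      ≤ ((patterns I d lab).card : ℝ) * ∏ j, ((d * c j).factorial : ℝ) := by rw [hform]; exact hlow
    _ ≤ ((patterns I d lab).card : ℝ) * ((Real.exp 1 * (d * n + 1)) ^ (Fintype.card L) *
      ((∏ j, ((c j : ℝ) / n) ^ (d * c j)) * ((d * n : ℕ) / Real.exp 1 : ℝ) ^ (d * n))) := by gcongr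
    _ = ((Real.exp 1 * (d * n + 1)) ^ (Fintype.card L) * ((patterns I d lab).card *
      ∏ j, ((c j : ℝ) / n) ^ (d * c j))) * ((d * n : ℕ) / Real.exp 1 : ℝ) ^ (d * n) := by ring
  exact le_of_mul_le_mul_right (by simpa using hfin) hpos

lemma prod_comp_eq_prod_pow {I : Type*} [Fintype I] {L : Type*} [Fintype L] [DecidableEq L]
    (χ : I → L) (wt : L → ℝ) :
    ∏ x, wt (χ x) = ∏ j, wt j ^ (univ.filter fun x => χ x = j).card := by
  rw [← Finset.prod_fiberwise' univ χ wt]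
  simp

lemma patterns_weight_eq {I : Type*} [Fintype I] {n d : ℕ} {L : Type*} [Fintype L] [DecidableEq L]
    (lab : Fin n → L) {χ : I → L} (hχ : χ ∈ patterns I d lab) (wt : L → ℝ) :
    ∏ x, wt (χ x) = ∏ j, wt j ^ (d * (univ.filter fun v => lab v = j).card) := by
  rw [prod_comp_eq_prod_pow]
  simp only [patterns, mem_filter, mem_univ, true_and] at hχ
  simp_rw [hχ]

/-- All patterns in `patterns I d lab` carry the same product weight, so their number inside `G` is
at most the total weight of `G` divided by that common weight. -/
lemma card_inter_patterns_mul_le {I : Type*} [Fintype I] {n d : ℕ} {L : Type*} [Fintype L]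
    [DecidableEq L] (lab : Fin n → L) (G : Finset (I → L)) (wt : L → ℝ) (hwt : ∀ j, 0 ≤ wt j) :
    ((G ∩ patterns I d lab).card : ℝ) * ∏ j, wt j ^ (d * (univ.filter fun v => lab v = j).card)
      ≤ ∑ χ ∈ G, ∏ x, wt (χ x) := by
  rw [← nsmul_eq_mul, ← Finset.sum_const]
  calc _ = ∑ χ ∈ G ∩ patterns I d lab, ∏ x, wt (χ x) := by
        refine Finset.sum_congr rfl fun χ hχ => ?_
        rw [patterns_weight_eq lab (mem_inter.1 hχ).2]
    _ ≤ _ := Finset.sum_le_sum_of_subset_of_nonneg inter_subset_left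
        (fun _ _ _ => Finset.prod_nonneg fun _ _ => hwt _)

/-- The patterns on `Fin M × Fin r` all of whose rows belong to `g`. -/
noncomputable def rowPatterns (M r : ℕ) {L : Type*} [Fintype L] [DecidableEq L]
    (g : Finset (Fin r → L)) :
    Finset (Fin M × Fin r → L) :=
  univ.filter fun χ => ∀ i, (fun j => χ (i, j)) ∈ g

lemma sum_rowPatterns {M r : ℕ} {L : Type*} [Fintype L] [DecidableEq L]
    (g : Finset (Fin r → L)) (f : (Fin r → L) → ℝ) :
    ∑ χ ∈ rowPatterns M r g, ∏ i, f (fun j => χ (i, j)) = (∑ c ∈ g, f c) ^ M := by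
  have h := Finset.prod_univ_sum (fun _ : Fin M => g) (fun _ c => f c)
  simp only [Finset.prod_const, Finset.card_univ, Fintype.card_fin] at h
  rw [h]
  refine Finset.sum_bij' (fun χ _ => fun i j => χ (i, j)) (fun c _ => fun x => c x.1 x.2)
    ?_ ?_ ?_ ?_ ?_
  · intro χ hχ
    simpa [rowPatterns] using hχ
  · intro c hc
    simpa [rowPatterns] using hc
  · intro χ _; rfl
  · intro c _; rfl
  · intro χ _; rfl

lemma sum_rowPatterns_weight {M r : ℕ} {L : Type*} [Fintype L] [DecidableEq L]
    (g : Finset (Fin r → L)) (wt : L → ℝ) :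
    ∑ χ ∈ rowPatterns M r g, ∏ x, wt (χ x) = (∑ c ∈ g, ∏ j, wt (c j)) ^ M := by
  rw [← sum_rowPatterns]
  refine Finset.sum_congr rfl fun χ _ => ?_
  rw [Fintype.prod_prod_type]

/-- Patterns all of whose letters satisfy `P` have total weight `(∑_{P} wt)^r`. -/
lemma sum_prod_filter_forall {r : ℕ} {L : Type*} [Fintype L] [DecidableEq L]
    (P : L → Prop) [DecidablePred P] (wt : L → ℝ) :
    ∑ c ∈ (univ : Finset (Fin r → L)).filter (fun c => ∀ j, P (c j)), ∏ j, wt (c j)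
      = (∑ l ∈ univ.filter P, wt l) ^ r := by
  have h := Finset.prod_univ_sum (fun _ : Fin r => univ.filter P) (fun _ c => wt c)
  simp only [Finset.prod_const, Finset.card_univ, Fintype.card_fin] at h
  rw [h]
  refine Finset.sum_congr ?_ fun _ _ => rfl
  ext c; simp

/-! ### Concentration on balanced words -/

lemma decomposeFin_symm_eq_mul {N : ℕ} (p : Fin (N + 1)) (e : Equiv.Perm (Fin N)) :
    Equiv.Perm.decomposeFin.symm (p, e)
      = Equiv.swap 0 p * Equiv.Perm.decomposeFin.symm (0, e) := by
  ext x
  refine Fin.cases ?_ (fun i => ?_) x <;> simp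

lemma decomposeFin_symm_swap_mul {N : ℕ} (a b : Fin N) (e : Equiv.Perm (Fin N)) :
    Equiv.Perm.decomposeFin.symm ((0 : Fin (N + 1)), Equiv.swap a b * e)
      = Equiv.swap a.succ b.succ * Equiv.Perm.decomposeFin.symm (0, e) := by
  ext x
  refine Fin.cases ?_ (fun i => ?_) x
  · simp only [Equiv.Perm.decomposeFin_symm_apply_zero, Equiv.Perm.coe_mul, Function.comp]
    rw [Equiv.swap_apply_of_ne_of_ne (Fin.succ_ne_zero a).symm (Fin.succ_ne_zero b).symm]
  · simp only [Equiv.Perm.decomposeFin_symm_apply_succ, Equiv.Perm.coe_mul, Function.comp,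
      Equiv.swap_self, Equiv.refl_apply]
    rw [(Fin.succ_injective N).swap_apply]

/-- Exponential moment bound for functions of a uniform permutation that change by at most `c`
under a transposition; the martingale reveals one value of the permutation at a time. -/
lemma perm_mgf (N : ℕ) : ∀ (f : Equiv.Perm (Fin N) → ℝ) (c : ℝ),
    (∀ σ a b, |f (Equiv.swap a b * σ) - f σ| ≤ c) → ∀ t : ℝ, |t| * (2 * c) ≤ 1 →
    ∑ σ, Real.exp (t * (f σ - (∑ τ, f τ) / (N.factorial : ℝ)))
      ≤ N.factorial * Real.exp (4 * t ^ 2 * c ^ 2 * N) := by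
  induction N with
  | zero => intro f c _ t _; simp
  | succ N ih =>
    intro f c hf t ht
    set fp : Fin (N + 1) → Equiv.Perm (Fin N) → ℝ :=
      fun p e => f (Equiv.Perm.decomposeFin.symm (p, e)) with hfp
    set mp : Fin (N + 1) → ℝ := fun p => (∑ e, fp p e) / (N.factorial : ℝ) with hmp
    have hNf : (0 : ℝ) < N.factorial := by exact_mod_cast N.factorial_pos
    have hsplit : ∀ g : Equiv.Perm (Fin (N + 1)) → ℝ,
        ∑ σ, g σ = ∑ p, ∑ e, g (Equiv.Perm.decomposeFin.symm (p, e)) := by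
      intro g
      rw [← Equiv.sum_comp Equiv.Perm.decomposeFin.symm g, Fintype.sum_prod_type]
    set m : ℝ := (∑ τ, f τ) / ((N + 1).factorial : ℝ) with hm
    have hmavg : ∑ p, mp p = (N + 1) * m := by
      rw [hm, hsplit f, Nat.factorial_succ, ← Finset.sum_div]
      push_cast
      field_simp
      rfl
    have hc0 : 0 ≤ c := (abs_nonneg _).trans (hf 1 0 0)
    have hdiff : ∀ p q e, |fp p e - fp q e| ≤ 2 * c := by
      intro p q e
      simp only [hfp]
      rw [decomposeFin_symm_eq_mul p e, decomposeFin_symm_eq_mul q e]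
      have h1 := hf (Equiv.Perm.decomposeFin.symm (0, e)) 0 p
      have h2 := hf (Equiv.Perm.decomposeFin.symm (0, e)) 0 q
      rw [abs_le] at *
      constructor <;> linarith [h1.1, h1.2, h2.1, h2.2]
    have hmdiff : ∀ p q, |mp p - mp q| ≤ 2 * c := by
      intro p q
      simp only [hmp]
      rw [← sub_div, ← Finset.sum_sub_distrib, abs_div, abs_of_pos hNf, div_le_iff₀ hNf]
      refine (Finset.abs_sum_le_sum_abs _ _).trans ?_
      refine (Finset.sum_le_sum fun e _ => hdiff p q e).trans ?_
      simp [Fintype.card_perm, mul_comm]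
    have hN1 : (0 : ℝ) < N + 1 := by positivity
    have hmm : ∀ p, |mp p - m| ≤ 2 * c := by
      intro p
      have : mp p - m = (∑ q, (mp p - mp q)) / (N + 1) := by
        rw [Finset.sum_sub_distrib, hmavg]
        simp
        field_simp
      rw [this, abs_div, abs_of_pos hN1, div_le_iff₀ hN1]
      refine (Finset.abs_sum_le_sum_abs _ _).trans ?_
      refine (Finset.sum_le_sum fun q _ => hmdiff p q).trans ?_
      simp; linarith
    -- Conditionally on the first value the induction hypothesis applies; the conditional means
    -- `mp p` deviate from `m` by at most `2 c`.
    have hinner : ∀ p, ∑ e, Real.exp (t * (fp p e - mp p))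
        ≤ N.factorial * Real.exp (4 * t ^ 2 * c ^ 2 * N) := by
      intro p
      refine ih (fp p) c ?_ t ht
      intro e a b
      simp only [hfp]
      rw [decomposeFin_symm_eq_mul p, decomposeFin_symm_swap_mul, decomposeFin_symm_eq_mul p e,
        ← mul_assoc, Equiv.mul_swap_eq_swap_mul, mul_assoc]
      exact hf _ _ _
    have houter : ∑ p, Real.exp (t * (mp p - m)) ≤ (N + 1) * Real.exp (4 * t ^ 2 * c ^ 2) := by
      have hx : ∀ p, Real.exp (t * (mp p - m)) ≤ 1 + t * (mp p - m) + 4 * t ^ 2 * c ^ 2 := by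
        intro p
        have hb : |t * (mp p - m)| ≤ 1 := by
          rw [abs_mul]
          exact (mul_le_mul_of_nonneg_left (hmm p) (abs_nonneg _)).trans ht
        have h1 := (abs_le.1 (Real.abs_exp_sub_one_sub_id_le hb)).2
        have h2 : (t * (mp p - m)) ^ 2 ≤ 4 * t ^ 2 * c ^ 2 := by
          rw [mul_pow]
          have := sq_le_sq' (by linarith [(abs_le.1 (hmm p)).1]) (abs_le.1 (hmm p)).2
          nlinarith [sq_nonneg t]
        linarith
      refine (Finset.sum_le_sum fun p _ => hx p).trans ?_
      have h3 : ∑ p, (1 + t * (mp p - m) + 4 * t ^ 2 * c ^ 2)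
          = (N + 1) * (1 + 4 * t ^ 2 * c ^ 2) := by
        rw [Finset.sum_add_distrib, Finset.sum_add_distrib, ← Finset.mul_sum,
          Finset.sum_sub_distrib, hmavg]
        simp; ring
      rw [h3]
      have := Real.add_one_le_exp (4 * t ^ 2 * c ^ 2)
      gcongr
      linarith
    rw [hsplit]
    have hE : ∀ p, ∑ e, Real.exp (t * (f (Equiv.Perm.decomposeFin.symm (p, e)) - m))
        ≤ Real.exp (t * (mp p - m)) * (N.factorial * Real.exp (4 * t ^ 2 * c ^ 2 * N)) := by
      intro p
      refine le_trans (le_of_eq ?_) (mul_le_mul_of_nonneg_left (hinner p) (Real.exp_pos _).le)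
      rw [Finset.mul_sum]
      refine Finset.sum_congr rfl fun e _ => ?_
      rw [← Real.exp_add]
      congr 1
      simp only [hfp]; ring
    refine (Finset.sum_le_sum fun p _ => hE p).trans ?_
    rw [← Finset.sum_mul]
    refine (mul_le_mul_of_nonneg_right houter (by positivity)).trans (le_of_eq ?_)
    rw [Nat.factorial_succ]
    push_cast
    have : 4 * t ^ 2 * c ^ 2 * ((N : ℝ) + 1) = 4 * t ^ 2 * c ^ 2 + 4 * t ^ 2 * c ^ 2 * N := by ring
    rw [this, Real.exp_add]
    ring

lemma card_perm_filter_comp {I : Type*} [Fintype I] {n d : ℕ} {w₀ : I → Fin n}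
    (hw₀ : w₀ ∈ balanced I n d) (P : (I → Fin n) → Prop) [DecidablePred P] :
    (univ.filter fun σ : Equiv.Perm I => P (w₀ ∘ σ)).card * (balanced I n d).card
      = ((balanced I n d).filter P).card * (Fintype.card I).factorial := by
  have h1 : ∀ w ∈ balanced I n d, (univ.filter fun σ : Equiv.Perm I => P (w ∘ σ)).card
      = (univ.filter fun σ : Equiv.Perm I => P (w₀ ∘ σ)).card := by
    intro w hw
    simp only [balanced, mem_filter, mem_univ, true_and] at hw hw₀
    obtain ⟨τ, hτ⟩ := exists_perm_of_card_fiber_eq w₀ w (fun j => by rw [hw j, hw₀ j])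
    refine Finset.card_bij (fun σ _ => τ * σ) ?_ (by simp) ?_
    · intro σ hσ
      simp only [mem_filter, mem_univ, true_and] at hσ ⊢
      rwa [Equiv.Perm.coe_mul, ← Function.comp_assoc, hτ]
    · intro σ hσ
      simp only [mem_filter, mem_univ, true_and] at hσ
      refine ⟨τ⁻¹ * σ, ?_, by simp⟩
      simp only [mem_filter, mem_univ, true_and]
      rw [← hτ, Function.comp_assoc, ← Equiv.Perm.coe_mul]
      simpa using hσ
  have h2 := Finset.sum_card_bipartiteAbove_eq_sum_card_bipartiteBelow
    (s := balanced I n d) (t := (univ : Finset (Equiv.Perm I))) (fun w (σ : Equiv.Perm I) => P (w ∘ σ))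
  simp only [bipartiteAbove, bipartiteBelow] at h2
  rw [Finset.sum_congr rfl h1, Finset.sum_congr rfl
    (fun σ _ => card_balanced_filter_comp_perm P σ)] at h2
  simp only [Finset.sum_const, smul_eq_mul, Finset.card_univ, Fintype.card_perm] at h2
  rw [mul_comm, h2, mul_comm]

/-- Two-sided concentration of a function on balanced words that changes by at most `2` when the
letters of two slots are exchanged. -/
lemma balanced_concentration {I : Type*} [Fintype I] {n d N : ℕ} (hI : Fintype.card I = N)
    (hN : 0 < N) (F : (I → Fin n) → ℝ)
    (hF : ∀ w ∈ balanced I n d, ∀ a b, |F (w ∘ Equiv.swap a b) - F w| ≤ 2) :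
    ∃ m : ℝ, ∀ s : ℝ, 0 ≤ s → s ≤ 8 * N →
      (((balanced I n d).filter fun w => m + s ≤ F w).card : ℝ)
          ≤ (balanced I n d).card * Real.exp (-(s ^ 2 / (64 * N))) ∧
      (((balanced I n d).filter fun w => F w ≤ m - s).card : ℝ)
          ≤ (balanced I n d).card * Real.exp (-(s ^ 2 / (64 * N))) := by
  rcases (balanced I n d).eq_empty_or_nonempty with h0 | ⟨w₀, hw₀⟩
  · exact ⟨0, by simp [h0]⟩
  set e : I ≃ Fin N := Fintype.equivFinOfCardEq hI with he
  set f : Equiv.Perm (Fin N) → ℝ := fun σ => F (w₀ ∘ (e.permCongr.symm σ⁻¹)) with hf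
  have hLip : ∀ σ a b, |f (Equiv.swap a b * σ) - f σ| ≤ 2 := by
    intro σ a b
    simp only [hf]
    have : w₀ ∘ (e.permCongr.symm (Equiv.swap a b * σ)⁻¹)
        = (w₀ ∘ (e.permCongr.symm σ⁻¹)) ∘ Equiv.swap (e.symm a) (e.symm b) := by
      funext x
      simp only [mul_inv_rev, Equiv.swap_inv, Function.comp, Equiv.permCongr_symm,
        Equiv.permCongr_apply, Equiv.Perm.coe_mul, Equiv.symm_symm]
      have h := e.injective.swap_apply (e.symm a) (e.symm b) x
      simp only [Equiv.apply_symm_apply] at h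
      rw [h]
    rw [this]
    exact hF _ (balanced_comp_perm hw₀ _) _ _
  set m : ℝ := (∑ τ, f τ) / (N.factorial : ℝ) with hm
  have hNR : (0 : ℝ) < N := by exact_mod_cast hN
  have hbal : (0 : ℝ) < (balanced I n d).card := by exact_mod_cast Finset.card_pos.2 ⟨w₀, hw₀⟩
  have hNf : (0 : ℝ) < N.factorial := by exact_mod_cast N.factorial_pos
  have transfer : ∀ P : (I → Fin n) → Prop, ∀ x : ℝ,
      ((univ.filter fun σ : Equiv.Perm (Fin N) => P (w₀ ∘ (e.permCongr.symm σ⁻¹))).card : ℝ)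
        ≤ N.factorial * x →
      (((balanced I n d).filter P).card : ℝ) ≤ (balanced I n d).card * x := by
    intro P x hx
    have h1 := card_perm_filter_comp hw₀ P
    have h2 : (univ.filter fun σ : Equiv.Perm (Fin N) => P (w₀ ∘ (e.permCongr.symm σ⁻¹))).card
        = (univ.filter fun σ : Equiv.Perm I => P (w₀ ∘ σ)).card := by
      refine Finset.card_bij (fun σ _ => e.permCongr.symm σ⁻¹) ?_ ?_ ?_
      · intro σ hσ
        simp only [mem_filter, mem_univ, true_and] at hσ ⊢
        exact hσ
      · intro σ _ τ _ h; simpa using h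
      · intro σ hσ
        simp only [mem_filter, mem_univ, true_and] at hσ
        refine ⟨(e.permCongr σ)⁻¹, ?_, ?_⟩
        · simp only [mem_filter, mem_univ, true_and, inv_inv, Equiv.symm_apply_apply]
          exact hσ
        · simp only [inv_inv, Equiv.symm_apply_apply]
    rw [h2] at hx
    rw [hI] at h1
    have h3 : ((univ.filter fun σ : Equiv.Perm I => P (w₀ ∘ σ)).card : ℝ) * (balanced I n d).card
      = ((balanced I n d).filter P).card * N.factorial := by exact_mod_cast h1
    have h4 := mul_le_mul_of_nonneg_right hx hbal.le
    rw [h3] at h4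
    refine le_of_mul_le_mul_right (h4.trans (le_of_eq ?_)) hNf
    ring
  have tail : ∀ s : ℝ, 0 ≤ s → s ≤ 8 * N → ∀ t : ℝ, |t| = s / (32 * N) →
      ∀ Q : Equiv.Perm (Fin N) → Prop,
      (∀ σ, Q σ → s ^ 2 / (32 * N) ≤ t * (f σ - m)) →
      ((univ.filter fun σ => Q σ).card : ℝ) ≤ N.factorial * Real.exp (-(s ^ 2 / (64 * N))) := by
    intro s hs0 hs t ht Q hQ
    have hmgf := perm_mgf N f 2 hLip t (by
      rw [ht, div_mul_eq_mul_div, div_le_one (by positivity)]; linarith)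
    rw [← hm] at hmgf
    have ht2 : t ^ 2 = (s / (32 * N)) ^ 2 := by rw [← ht, sq_abs]
    have h1 : ((univ.filter fun σ => Q σ).card : ℝ) * Real.exp (s ^ 2 / (32 * N))
        ≤ N.factorial * Real.exp (4 * t ^ 2 * 2 ^ 2 * N) := by
      refine le_trans ?_ hmgf
      rw [← nsmul_eq_mul, ← Finset.sum_const]
      refine (Finset.sum_le_sum fun σ hσ => ?_).trans
        (Finset.sum_le_sum_of_subset_of_nonneg (Finset.filter_subset Q univ)
          fun _ _ _ => (Real.exp_pos _).le)
      exact Real.exp_le_exp.2 (hQ σ (Finset.mem_filter.1 hσ).2)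
    have h2 : 4 * t ^ 2 * 2 ^ 2 * N = s ^ 2 / (64 * N) := by
      rw [ht2]; field_simp; ring
    rw [h2] at h1
    have h3 : s ^ 2 / (32 * N) = s ^ 2 / (64 * N) + s ^ 2 / (64 * N) := by field_simp; ring
    rw [h3, Real.exp_add] at h1
    rw [Real.exp_neg]
    have hp := Real.exp_pos (s ^ 2 / (64 * N))
    rw [← div_eq_mul_inv, le_div_iff₀ hp]
    refine le_of_mul_le_mul_right ?_ hp
    linarith
  refine ⟨m, fun s hs0 hs => ⟨?_, ?_⟩⟩
  · refine transfer (fun w => m + s ≤ F w) _ ?_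
    refine tail s hs0 hs (s / (32 * N)) (abs_of_nonneg (by positivity)) _ fun σ hσ => ?_
    have : s ^ 2 / (32 * N) = s / (32 * N) * s := by ring
    rw [this]
    have : s ≤ f σ - m := by simp only [hf]; linarith
    gcongr
  · refine transfer (fun w => F w ≤ m - s) _ ?_
    refine tail s hs0 hs (-(s / (32 * N))) (by rw [abs_neg]; exact abs_of_nonneg (by positivity))
      _ fun σ hσ => ?_
    have : s ^ 2 / (32 * N) = s / (32 * N) * s := by ring
    rw [this]
    have : s ≤ m - f σ := by simp only [hf]; linarith
    have : s / (32 * N) * s ≤ s / (32 * N) * (m - f σ) := by gcongr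
    linarith

/-! ### From words to hypergraphs -/

/-- `S` contains no row of the word `w`. -/
def Avoids {M r n : ℕ} (w : Fin M × Fin r → Fin n) (S : Finset (Fin n)) : Prop :=
  ∀ i, ∃ j, w (i, j) ∉ S

/-- The independence number of the multi-hypergraph whose edges are the rows of `w`. -/
noncomputable def wordAlpha {M r n : ℕ} (w : Fin M × Fin r → Fin n) : ℕ :=
  (univ.filter fun S => Avoids w S).sup Finset.card

/-- The set of vertices in row `i` of `w`. -/
noncomputable def row {M r n : ℕ} (w : Fin M × Fin r → Fin n) (i : Fin M) : Finset (Fin n) :=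
  univ.image fun j => w (i, j)

/-- The hypergraph whose edges are the rows of `w`. -/
noncomputable def edgesOf {M r n : ℕ} (w : Fin M × Fin r → Fin n) : Finset (Finset (Fin n)) :=
  univ.image (row w)

/-- Rows have no repeated vertex and distinct rows have distinct vertex sets. -/
def SimpleWord {M r n : ℕ} (w : Fin M × Fin r → Fin n) : Prop :=
  (∀ i, Function.Injective fun j => w (i, j)) ∧ Function.Injective (row w)

section
variable {M r n : ℕ}

lemma Avoids.card_le {w : Fin M × Fin r → Fin n} {S : Finset (Fin n)} (h : Avoids w S) :
    S.card ≤ wordAlpha w :=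
  Finset.le_sup (f := Finset.card) (by simpa using h)

lemma exists_avoids_card_eq (hr : 0 < r) (w : Fin M × Fin r → Fin n) :
    ∃ S, Avoids w S ∧ S.card = wordAlpha w := by
  have hne : (univ.filter fun S => Avoids w S).Nonempty :=
    ⟨∅, by simp only [mem_filter, mem_univ, true_and]; exact fun i => ⟨⟨0, hr⟩, by simp⟩⟩
  obtain ⟨S, hS, h⟩ := Finset.exists_mem_eq_sup _ hne Finset.card
  exact ⟨S, by simpa using hS, h.symm⟩

lemma Avoids.mono {w : Fin M × Fin r → Fin n} {S T : Finset (Fin n)} (h : Avoids w S)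
    (hT : T ⊆ S) : Avoids w T := fun i => (h i).imp fun _ hj hm => hj (hT hm)

/-- Exchanging two letters only affects the rows containing them, and removing both letters from an
independent set keeps it independent. -/
lemma wordAlpha_swap_le (hr : 0 < r) (w : Fin M × Fin r → Fin n) (a b : Fin M × Fin r) :
    wordAlpha w ≤ wordAlpha (w ∘ Equiv.swap a b) + 2 := by
  obtain ⟨S, hS, hc⟩ := exists_avoids_card_eq hr w
  have h1 : Avoids (w ∘ Equiv.swap a b) (S \ {w a, w b}) := by
    intro i
    by_cases ha : a.1 = i
    · refine ⟨a.2, ?_⟩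
      have : (i, a.2) = a := by rw [← ha]
      simp [this]
    by_cases hb : b.1 = i
    · refine ⟨b.2, ?_⟩
      have : (i, b.2) = b := by rw [← hb]
      simp [this]
    obtain ⟨j, hj⟩ := hS i
    refine ⟨j, ?_⟩
    have : Equiv.swap a b (i, j) = (i, j) := by
      apply Equiv.swap_apply_of_ne_of_ne
      · rintro rfl; exact ha rfl
      · rintro rfl; exact hb rfl
    simp [this, hj]
  have h2 := h1.card_le
  have h3 : S.card ≤ (S \ {w a, w b}).card + ({w a, w b} : Finset (Fin n)).card := by
    rw [← Finset.card_sdiff_add_card_inter S {w a, w b}]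
    gcongr
    exact inter_subset_right
  have h4 : ({w a, w b} : Finset (Fin n)).card ≤ 2 := Finset.card_le_two
  omega

lemma wordAlpha_lipschitz (hr : 0 < r) (w : Fin M × Fin r → Fin n) (a b : Fin M × Fin r) :
    |(wordAlpha (w ∘ Equiv.swap a b) : ℝ) - wordAlpha w| ≤ 2 := by
  have h1 := wordAlpha_swap_le hr w a b
  have h2 := wordAlpha_swap_le hr (w ∘ Equiv.swap a b) a b
  have h3 : (w ∘ Equiv.swap a b) ∘ Equiv.swap a b = w := by funext x; simp
  rw [h3] at h2
  have h1' : (wordAlpha w : ℝ) ≤ wordAlpha (w ∘ Equiv.swap a b) + 2 := by exact_mod_cast h1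
  have h2' : (wordAlpha (w ∘ Equiv.swap a b) : ℝ) ≤ wordAlpha w + 2 := by exact_mod_cast h2
  rw [abs_le]; constructor <;> linarith

lemma indepSet_edgesOf (w : Fin M × Fin r → Fin n) (S : Finset (Fin n)) :
    IndepSet (edgesOf w) S ↔ Avoids w S := by
  simp [IndepSet, edgesOf, row, Avoids, Finset.subset_iff]

lemma independenceNumber_edgesOf (hr : 0 < r) (w : Fin M × Fin r → Fin n) :
    independenceNumber (edgesOf w) = wordAlpha w := by
  apply IsGreatest.csSup_eq
  constructor
  · obtain ⟨S, hS, h⟩ := exists_avoids_card_eq hr w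
    exact ⟨S, h, (indepSet_edgesOf w S).2 hS⟩
  · rintro s ⟨S, rfl, hS⟩
    exact ((indepSet_edgesOf w S).1 hS).card_le

lemma SimpleWord.card_letter {w : Fin M × Fin r → Fin n} (hw : SimpleWord w) (v : Fin n) :
    (univ.filter fun x => w x = v).card = ((edgesOf w).filter fun e => v ∈ e).card := by
  refine Finset.card_bij (fun x _ => row w x.1) ?_ ?_ ?_
  · intro x hx
    simp only [mem_filter, mem_univ, true_and] at hx
    simp only [mem_filter, edgesOf, mem_image, mem_univ, true_and, exists_apply_eq_apply, row]
    exact ⟨x.2, hx⟩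
  · intro x hx y hy h
    simp only [mem_filter, mem_univ, true_and] at hx hy
    have h1 : x.1 = y.1 := hw.2 h
    have h2 : x.2 = y.2 := by
      apply hw.1 x.1
      change w (x.1, x.2) = w (x.1, y.2)
      rw [h1]
      nth_rw 1 [← h1]
      exact hx.trans hy.symm
    exact Prod.ext h1 h2
  · intro e he
    simp only [mem_filter, edgesOf, mem_image, mem_univ, true_and] at he
    obtain ⟨⟨i, rfl⟩, hv⟩ := he
    simp only [row, mem_image, mem_univ, true_and] at hv
    obtain ⟨j, hj⟩ := hv
    exact ⟨(i, j), by simpa using hj, rfl⟩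

lemma SimpleWord.edgesOf_mem {d : ℕ} {w : Fin M × Fin r → Fin n} (hw : SimpleWord w)
    (hb : w ∈ balanced (Fin M × Fin r) n d) : edgesOf w ∈ regularFamily n r d := by
  simp only [regularFamily, balanced, mem_filter, mem_univ, true_and] at hb ⊢
  constructor
  · intro e he
    simp only [edgesOf, mem_image, mem_univ, true_and] at he
    obtain ⟨i, rfl⟩ := he
    rw [row, Finset.card_image_of_injective _ (hw.1 i)]
    simp
  · intro v
    rw [← hw.card_letter, hb v]

lemma card_edges_of_mem {d : ℕ} (hr : 0 < r) (hM : M * r = d * n) {E : Finset (Finset (Fin n))}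
    (hE : E ∈ regularFamily n r d) : E.card = M := by
  simp only [regularFamily, mem_filter, mem_univ, true_and] at hE
  have h := Finset.sum_card_bipartiteAbove_eq_sum_card_bipartiteBelow
    (s := E) (t := (univ : Finset (Fin n))) (fun e v => v ∈ e)
  simp only [bipartiteAbove, bipartiteBelow, hE.2] at h
  have h1 : ∀ e ∈ E, (univ.filter fun v => v ∈ e).card = r := by
    intro e he
    rw [← hE.1 e he]; congr 1; ext; simp
  rw [Finset.sum_congr rfl h1] at h
  simp only [Finset.sum_const, smul_eq_mul, Finset.card_univ, Fintype.card_fin] at h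
  apply Nat.eq_of_mul_eq_mul_right hr
  rw [h, hM, mul_comm]

lemma exists_word_of_mem {d : ℕ} (hr : 0 < r) (hM : M * r = d * n) {E : Finset (Finset (Fin n))}
    (hE : E ∈ regularFamily n r d) :
    ∃ w : Fin M × Fin r → Fin n, SimpleWord w ∧ edgesOf w = E := by
  have hc := card_edges_of_mem hr hM hE
  simp only [regularFamily, mem_filter, mem_univ, true_and] at hE
  have e : Fin M ≃ E := (Fintype.equivFinOfCardEq (by simpa using hc)).symm
  have f : ∀ i : Fin M, Fin r ≃ (e i).1 := fun i =>
    (Fintype.equivFinOfCardEq (by simpa using hE.1 _ (e i).2)).symm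
  have hrow : ∀ i, row (fun x : Fin M × Fin r => (f x.1 x.2 : Fin n)) i = (e i).1 := by
    intro i
    ext v
    simp only [row, mem_image, mem_univ, true_and]
    constructor
    · rintro ⟨j, rfl⟩; exact (f i j).2
    · intro hv
      exact ⟨(f i).symm ⟨v, hv⟩, by simp⟩
  refine ⟨fun x => (f x.1 x.2 : Fin n), ⟨?_, ?_⟩, ?_⟩
  · intro i j j' h
    exact (f i).injective (Subtype.ext h)
  · intro i i' h
    rw [hrow, hrow] at h
    exact e.injective (Subtype.ext h)
  · ext s
    simp only [edgesOf, mem_image, mem_univ, true_and, hrow]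
    constructor
    · rintro ⟨i, rfl⟩; exact (e i).2
    · intro hs
      exact ⟨e.symm ⟨s, hs⟩, by simp⟩

/-- Every regular hypergraph is represented by exactly `M! (r!)^M` balanced simple words. -/
lemma card_fiber_edgesOf {d : ℕ} (hr : 0 < r) (hM : M * r = d * n)
    {E : Finset (Finset (Fin n))} (hE : E ∈ regularFamily n r d) :
    ((balanced (Fin M × Fin r) n d).filter fun w => SimpleWord w ∧ edgesOf w = E).card
      = Fintype.card (Equiv.Perm (Fin M) × (Fin M → Equiv.Perm (Fin r))) := by
  obtain ⟨w, hw, hwE⟩ := exists_word_of_mem hr hM hE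
  symm
  rw [← Finset.card_univ]
  have hrow : ∀ (p : Equiv.Perm (Fin M) × (Fin M → Equiv.Perm (Fin r))) i,
      row (fun x => w (p.1 x.1, p.2 x.1 x.2)) i = row w (p.1 i) := by
    intro p i
    ext v
    simp only [row, mem_image, mem_univ, true_and]
    constructor
    · rintro ⟨j, rfl⟩; exact ⟨_, rfl⟩
    · rintro ⟨j, rfl⟩; exact ⟨(p.2 i).symm j, by simp⟩
  refine Finset.card_bij (fun p _ => fun x => w (p.1 x.1, p.2 x.1 x.2)) ?_ ?_ ?_
  · intro p _
    have hs : SimpleWord (fun x => w (p.1 x.1, p.2 x.1 x.2)) := by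
      constructor
      · intro i j j' h
        exact (p.2 i).injective (hw.1 (p.1 i) h)
      · intro i i' h
        rw [hrow, hrow] at h
        exact p.1.injective (hw.2 h)
    have he : edgesOf (fun x => w (p.1 x.1, p.2 x.1 x.2)) = E := by
      rw [← hwE]
      ext s
      simp only [edgesOf, mem_image, mem_univ, true_and, hrow]
      constructor
      · rintro ⟨i, rfl⟩; exact ⟨_, rfl⟩
      · rintro ⟨i, rfl⟩; exact ⟨p.1.symm i, by simp⟩
    simp only [mem_filter]
    refine ⟨?_, hs, he⟩
    simp only [balanced, mem_filter, mem_univ, true_and]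
    intro v
    rw [hs.card_letter, he]
    simp only [regularFamily, mem_filter, mem_univ, true_and] at hE
    exact hE.2 v
  · intro p _ q _ h
    have h1 : p.1 = q.1 := by
      ext i : 1
      apply hw.2
      rw [← hrow p, ← hrow q]
      exact congrArg (fun w => row w i) h
    refine Prod.ext h1 ?_
    funext i
    ext j : 1
    apply hw.1 (p.1 i)
    have := congrFun h (i, j)
    simp only at this ⊢
    rw [this, h1]
  · intro u hu
    simp only [mem_filter] at hu
    obtain ⟨_, hu, huE⟩ := hu
    have h1 : ∀ i, ∃ i', row w i' = row u i := by
      intro i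
      have : row u i ∈ edgesOf w := by
        rw [hwE, ← huE]; simp [edgesOf]
      simpa [edgesOf] using this
    choose σ hσ using h1
    have hσi : Function.Injective σ := by
      intro i i' h
      apply hu.2
      rw [← hσ, ← hσ, h]
    have h2 : ∀ i j, ∃ j', w (σ i, j') = u (i, j) := by
      intro i j
      have : u (i, j) ∈ row w (σ i) := by rw [hσ]; simp [row]
      simpa [row] using this
    choose τ hτ using h2
    have hτi : ∀ i, Function.Injective (τ i) := by
      intro i j j' h
      apply hu.1 i
      simp only
      rw [← hτ, ← hτ, h]
    refine ⟨(Equiv.ofBijective σ (Finite.injective_iff_bijective.1 hσi),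
      fun i => Equiv.ofBijective (τ i) (Finite.injective_iff_bijective.1 (hτi i))), mem_univ _, ?_⟩
    funext x
    simp [hτ]

lemma card_family_filter {d : ℕ} (hr : 0 < r) (hM : M * r = d * n)
    (Q : Finset (Finset (Fin n)) → Prop) :
    ((balanced (Fin M × Fin r) n d).filter fun w => SimpleWord w ∧ Q (edgesOf w)).card
      = ((regularFamily n r d).filter Q).card
        * Fintype.card (Equiv.Perm (Fin M) × (Fin M → Equiv.Perm (Fin r))) := by
  rw [Finset.card_eq_sum_card_fiberwise (f := edgesOf) (t := (regularFamily n r d).filter Q)]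
  · rw [← smul_eq_mul, ← Finset.sum_const]
    refine Finset.sum_congr rfl fun E hE => ?_
    rw [mem_filter] at hE
    rw [← card_fiber_edgesOf hr hM hE.1, filter_filter]
    congr 1
    ext w
    simp only [mem_filter, and_congr_right_iff]
    intro _
    constructor
    · exact fun h => ⟨h.1.1, h.2⟩
    · exact fun h => ⟨⟨h.1, h.2 ▸ hE.2⟩, h.2⟩
  · intro w hw
    simp only [coe_filter, Set.mem_ofPred_eq] at hw ⊢
    exact ⟨hw.2.1.edgesOf_mem hw.1, hw.2.2⟩

/-- Failure probabilities transfer from words to hypergraphs at the cost of the probability that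
a word is simple. -/
lemma uniformProb_ge {d : ℕ} (hr : 0 < r) (hM : M * r = d * n)
    (Q : ℕ → Prop) (κ δ : ℝ) (hκ : 0 < κ)
    (hs : κ * (balanced (Fin M × Fin r) n d).card
      ≤ ((balanced (Fin M × Fin r) n d).filter SimpleWord).card)
    (hQ : (((balanced (Fin M × Fin r) n d).filter fun w => ¬ Q (wordAlpha w)).card : ℝ)
      ≤ δ * (balanced (Fin M × Fin r) n d).card) :
    1 - δ / κ ≤ uniformProb (regularFamily n r d) (fun E => Q (independenceNumber E)) ∧
      uniformProb (regularFamily n r d) (fun E => Q (independenceNumber E)) ≤ 1 := by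
  set B := (balanced (Fin M × Fin r) n d) with hB
  set C := Fintype.card (Equiv.Perm (Fin M) × (Fin M → Equiv.Perm (Fin r))) with hC
  have hCpos : (0 : ℝ) < C := by
    have : 0 < C := Fintype.card_pos
    exact_mod_cast this
  have hBpos : (0 : ℝ) < B.card := by
    have := balanced_nonempty (I := Fin M × Fin r) (n := n) (d := d) (by simpa using hM)
    exact_mod_cast Finset.card_pos.2 this
  have h1 := card_family_filter (d := d) hr hM (fun _ => True)
  have h2 := card_family_filter (d := d) hr hM (fun E => ¬ Q (independenceNumber E))
  simp only [and_true, filter_true] at h1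
  have hfam : (0 : ℝ) < (regularFamily n r d).card := by
    have h3 : (0 : ℝ) < ((B.filter SimpleWord).card : ℝ) := lt_of_lt_of_le (by positivity) hs
    rcases Nat.eq_zero_or_pos (regularFamily n r d).card with h0 | h0
    · rw [h0, zero_mul] at h1
      rw [h1] at h3; simp at h3
    · exact_mod_cast h0
  have hsplit : ((regularFamily n r d).filter fun E => Q (independenceNumber E)).card
      + ((regularFamily n r d).filter fun E => ¬ Q (independenceNumber E)).card
      = (regularFamily n r d).card :=
    Finset.card_filter_add_card_filter_not _
  have hsplitR : (((regularFamily n r d).filter fun E => Q (independenceNumber E)).card : ℝ)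
      + ((regularFamily n r d).filter fun E => ¬ Q (independenceNumber E)).card
      = (regularFamily n r d).card := by exact_mod_cast hsplit
  have hbad : (((regularFamily n r d).filter fun E => ¬ Q (independenceNumber E)).card : ℝ) * C
      ≤ δ * B.card := by
    refine le_trans ?_ hQ
    have : ((regularFamily n r d).filter fun E => ¬ Q (independenceNumber E)).card * C
        ≤ (B.filter fun w => ¬ Q (wordAlpha w)).card := by
      refine le_trans (le_of_eq ?_) (Finset.card_le_card (s := (B.filter fun w => SimpleWord w ∧ ¬ Q (independenceNumber (edgesOf w)))) ?_)
      · convert h2.symm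

      intro w hw
      simp only [mem_filter] at hw ⊢
      refine ⟨hw.1, ?_⟩
      rw [← independenceNumber_edgesOf hr]; exact hw.2.2
    exact_mod_cast this
  have h1R : (((B.filter SimpleWord).card : ℝ)) = (regularFamily n r d).card * C := by
    exact_mod_cast h1
  rw [h1R] at hs
  unfold uniformProb
  constructor
  · rw [le_div_iff₀ hfam]
    have h5 : (((regularFamily n r d).filter fun E => ¬ Q (independenceNumber E)).card : ℝ)
        ≤ δ / κ * (regularFamily n r d).card := by
      have hδ : 0 ≤ δ := by
        by_contra h
        push Not at h
        have : δ * B.card < 0 := mul_neg_of_neg_of_pos h hBpos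
        have h6 : (0 : ℝ) ≤ ((B.filter fun w => ¬ Q (wordAlpha w)).card : ℝ) := by positivity
        linarith
      refine le_of_mul_le_mul_right (hbad.trans ?_) hCpos
      rw [mul_assoc, div_mul_eq_mul_div, le_div_iff₀ hκ]
      nlinarith
    linarith
  · rw [div_le_one hfam]
    have : (0 : ℝ) ≤ ((regularFamily n r d).filter fun E => ¬ Q (independenceNumber E)).card := by
      positivity
    linarith

end

/-! ### Simple words are polynomially likely -/

/-- Slot `x` is bad if its letter occurs twice in its row, or if two letters of its row, one of
them that of `x`, occur together in another row. -/
def BadSlot {M r n : ℕ} (w : Fin M × Fin r → Fin n) (x : Fin M × Fin r) : Prop :=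
  (∃ y, y ≠ x ∧ y.1 = x.1 ∧ w y = w x) ∨
    ∃ z a b, z ≠ x ∧ z.1 = x.1 ∧ a.1 ≠ x.1 ∧ b ≠ a ∧ b.1 = a.1 ∧ w a = w x ∧ w b = w z

section
variable {M r n : ℕ}

lemma simpleWord_of_forall_not_badSlot (hr : 2 ≤ r) {w : Fin M × Fin r → Fin n}
    (h : ∀ x, ¬ BadSlot w x) : SimpleWord w := by
  have h1 : ∀ i, Function.Injective fun j => w (i, j) := by
    intro i j j' hj
    by_contra hne
    exact h (i, j') (Or.inl ⟨(i, j), by simpa using hne, rfl, hj⟩)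
  refine ⟨h1, ?_⟩
  intro i i' hi
  by_contra hne
  have h2 : ∀ j, ∃ j', w (i', j') = w (i, j) := by
    intro j
    have : w (i, j) ∈ row w i' := by rw [← hi]; simp [row]
    simpa [row] using this
  obtain ⟨j0, h0⟩ := h2 ⟨0, by omega⟩
  obtain ⟨j1, h1'⟩ := h2 ⟨1, by omega⟩
  refine h (i, ⟨0, by omega⟩) (Or.inr ⟨(i, ⟨1, by omega⟩), (i', j0), (i', j1), by simp, rfl,
    fun h => hne h.symm, ?_, rfl, h0, h1'⟩)
  intro he
  simp only [Prod.mk.injEq, true_and] at he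
  rw [he, h0] at h1'
  have := h1 i h1'
  simp at this

/-- Exchanging the letter of a slot `x` with that of a slot in a far away row without bad slots
creates no bad slots and repairs `x`. -/
lemma badSlot_swap {w : Fin M × Fin r → Fin n} {x y : Fin M × Fin r} (hxy : x.1 ≠ y.1)
    (hgood : ∀ t, t.1 = y.1 → ¬ BadSlot w t)
    (hadj : ∀ s t, s.1 = x.1 → t.1 = y.1 → w s ≠ w t)
    (hadj2 : ∀ s t a b, s.1 = x.1 → t.1 = y.1 → a.1 = b.1 → w a = w s → w b = w t → False)
    {s : Fin M × Fin r} (hs : BadSlot (w ∘ Equiv.swap x y) s) : BadSlot w s ∧ s ≠ x := by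
  have hwx : (w ∘ Equiv.swap x y) x = w y := by simp
  have hwy : (w ∘ Equiv.swap x y) y = w x := by simp
  have hwo : ∀ t, t ≠ x → t ≠ y → (w ∘ Equiv.swap x y) t = w t := by
    intro t h1 h2; simp [Equiv.swap_apply_of_ne_of_ne h1 h2]
  generalize w ∘ Equiv.swap x y = w' at *
  rcases hs with ⟨t, hts, hrow, hw⟩ | ⟨z, a, b, hzs, hz, has, hba, hb, hwa, hwb⟩
  · by_cases h1 : s = x
    · subst h1
      have : t ≠ y := by rintro rfl; exact hxy hrow.symm
      exact absurd (by rw [hwo t hts this, hwx] at hw; exact hw) (hadj t y hrow rfl)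
    by_cases h2 : t = x
    · subst h2
      have : s ≠ y := by rintro rfl; exact hxy hrow
      exact absurd (by rw [hwo s h1 this, hwx] at hw; exact hw.symm) (hadj s y hrow.symm rfl)
    by_cases h3 : s = y
    · subst h3
      rw [hwo t h2 hts, hwy] at hw
      exact absurd hw.symm (hadj x t rfl hrow)
    by_cases h4 : t = y
    · subst h4
      rw [hwo s h1 h3, hwy] at hw
      exact absurd hw (hadj x s rfl hrow.symm)
    rw [hwo s h1 h3, hwo t h2 h4] at hw
    exact ⟨Or.inl ⟨t, hts, hrow, hw⟩, h1⟩
  · have key : s ≠ x ∧ w' s = w s ∧ w' z = w z ∧ w' a = w a ∧ w' b = w b → BadSlot w s ∧ s ≠ x := by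
      rintro ⟨h0, h1, h2, h3, h4⟩
      exact ⟨Or.inr ⟨z, a, b, hzs, hz, has, hba, hb, by rw [← h3, ← h1, hwa], by
        rw [← h4, ← h2, hwb]⟩, h0⟩
    have hin : ∀ u v, u.1 = y.1 → v.1 = y.1 → u ≠ v → w u ≠ w v := by
      intro u v hu hv huv he
      exact hgood v hv (Or.inl ⟨u, huv, hu.trans hv.symm, he⟩)
    have hel : ∀ p q a b : Fin M × Fin r, q ≠ p → q.1 = p.1 → a.1 ≠ p.1 → b ≠ a → b.1 = a.1 →
        w' a = w' p → w' b = w' q → p ≠ x ∧ p ≠ y := by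
      intro p q a b hqp hq hap hba hb hwa hwb
      constructor
      · rintro rfl
        have hqy : q ≠ y := by rintro rfl; exact hxy hq.symm
        have hap' : a ≠ p := by rintro rfl; exact hap rfl
        have hbp : b ≠ p := by rintro rfl; exact hap hb.symm
        rw [hwx] at hwa
        rw [hwo q hqp hqy] at hwb
        by_cases hay : a = y
        · rw [hay, hwy] at hwa; exact hadj p y rfl rfl hwa
        rw [hwo a hap' hay] at hwa
        by_cases hby : b = y
        · exact hin a y (by rw [← hby, hb]) rfl hay hwa
        rw [hwo b hbp hby] at hwb
        exact hadj2 q y b a hq rfl hb hwb hwa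
      · rintro rfl
        have hqx : q ≠ x := by rintro rfl; exact hxy hq
        have hap' : a ≠ p := by rintro rfl; exact hap rfl
        have hbp : b ≠ p := by rintro rfl; exact hap hb.symm
        rw [hwy] at hwa
        rw [hwo q hqx hqp] at hwb
        by_cases hax : a = x
        · rw [hax, hwx] at hwa; exact hadj x p rfl rfl hwa.symm
        rw [hwo a hax hap'] at hwa
        by_cases hbx : b = x
        · rw [hbx, hwx] at hwb
          exact hin q p hq rfl hqp hwb.symm
        rw [hwo b hbx hbp] at hwb
        exact hadj2 x q a b rfl hq hb.symm hwa hwb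
    obtain ⟨hsx, hsy⟩ := hel s z a b hzs hz has hba hb hwa hwb
    obtain ⟨hzx, hzy⟩ := hel z s b a hzs.symm hz.symm (by rwa [hb, hz]) hba.symm hb.symm hwb hwa
    obtain ⟨hax, hay⟩ := hel a b s z hba hb has.symm hzs hz hwa.symm hwb.symm
    obtain ⟨hbx, hby⟩ := hel b a z s hba.symm hb.symm (by rw [hb, hz]; exact has.symm) hzs.symm
      hz.symm hwb.symm hwa.symm
    exact key ⟨hsx, hwo s hsx hsy, hwo z hzx hzy, hwo a hax hay, hwo b hbx hby⟩

/-- The rows that share a letter with row `i`. -/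
noncomputable def nearRows (w : Fin M × Fin r → Fin n) (i : Fin M) : Finset (Fin M) :=
  (univ : Finset (Fin r)).biUnion fun j => (univ.filter fun x => w x = w (i, j)).image Prod.fst

lemma mem_nearRows {w : Fin M × Fin r → Fin n} {i h : Fin M} :
    h ∈ nearRows w i ↔ ∃ s t, s.1 = i ∧ t.1 = h ∧ w t = w s := by
  simp only [nearRows, mem_biUnion, mem_univ, true_and, mem_image, mem_filter]
  constructor
  · rintro ⟨j, t, h1, h2⟩
    exact ⟨(i, j), t, rfl, h2, h1⟩
  · rintro ⟨⟨_, j⟩, t, rfl, h2, h3⟩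
    exact ⟨j, t, h3, h2⟩

lemma card_nearRows_le {d : ℕ} {w : Fin M × Fin r → Fin n}
    (hw : w ∈ balanced (Fin M × Fin r) n d) (i : Fin M) : (nearRows w i).card ≤ r * d := by
  simp only [balanced, mem_filter, mem_univ, true_and] at hw
  refine (Finset.card_biUnion_le_card_mul _ _ d fun j _ => ?_).trans (by simp)
  exact Finset.card_image_le.trans (hw _).le

/-- As long as bad slots are few compared with `M`, some row without bad slots is at distance more
than two from the row of `x`, and exchanging with a slot of it repairs `x`. -/
lemma exists_swap_badSlot {d : ℕ} (hr : 0 < r) {w : Fin M × Fin r → Fin n}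
    (hw : w ∈ balanced (Fin M × Fin r) n d) {x : Fin M × Fin r} (hx : BadSlot w x)
    (hM : (univ.filter (BadSlot w)).card + r * d + (r * d) * (r * d) < M) :
    ∃ y, (univ.filter (BadSlot (w ∘ Equiv.swap x y))).card < (univ.filter (BadSlot w)).card := by
  set X : Finset (Fin M) := (univ.filter (BadSlot w)).image Prod.fst ∪ nearRows w x.1 ∪
    (nearRows w x.1).biUnion (nearRows w) with hX
  have hXc : X.card < M := by
    refine lt_of_le_of_lt ?_ hM
    refine (Finset.card_union_le _ _).trans ?_
    refine Nat.add_le_add ((Finset.card_union_le _ _).trans ?_) ?_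
    · exact Nat.add_le_add Finset.card_image_le (card_nearRows_le hw _)
    · refine (Finset.card_biUnion_le_card_mul _ _ (r * d) fun j _ => card_nearRows_le hw j).trans ?_
      exact Nat.mul_le_mul_right _ (card_nearRows_le hw _)
  obtain ⟨i, hi⟩ : ∃ i, i ∉ X := by
    by_contra h
    push Not at h
    have : X = univ := by ext; simp [h]
    rw [this] at hXc; simp at hXc
  simp only [hX, mem_union, not_or] at hi
  obtain ⟨⟨h1, h2⟩, h3⟩ := hi
  refine ⟨(i, ⟨0, hr⟩), Finset.card_lt_card ?_⟩
  have hxi : x.1 ≠ i := by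
    rintro rfl; exact h2 (mem_nearRows.2 ⟨x, x, rfl, rfl, rfl⟩)
  have hsub : ∀ s, BadSlot (w ∘ Equiv.swap x (i, ⟨0, hr⟩)) s → BadSlot w s ∧ s ≠ x := by
    intro s hs
    refine badSlot_swap (y := (i, ⟨0, hr⟩)) hxi ?_ ?_ ?_ hs
    · intro t ht hb
      exact h1 (Finset.mem_image.2 ⟨t, by simpa using hb, ht⟩)
    · intro s t hs ht he
      exact h2 (mem_nearRows.2 ⟨s, t, hs, ht, he.symm⟩)
    · intro s t a b hs ht hab ha hb
      exact h3 (mem_biUnion.2 ⟨a.1, mem_nearRows.2 ⟨s, a, hs, rfl, ha⟩,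
        mem_nearRows.2 ⟨b, t, hab.symm, ht, hb.symm⟩⟩)
  rw [Finset.ssubset_iff_of_subset]
  · exact ⟨x, by simpa using hx, fun h => (hsub x (by simpa using h)).2 rfl⟩
  · intro s hs
    simp only [mem_filter, mem_univ, true_and] at hs ⊢
    exact (hsub s hs).1

/-- Repairing the bad slots one exchange at a time: each exchange can be undone in at most
`(M r) ^ 2` ways, so words with at most `B` bad slots are at most `(M r) ^ (2 B)` times as many as
simple words. -/
lemma card_few_bad_le {d : ℕ} (hr : 2 ≤ r) (B : ℕ) (hM : B + r * d + (r * d) * (r * d) < M) :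
    ((balanced (Fin M × Fin r) n d).filter
        fun w => (univ.filter (BadSlot w)).card ≤ B).card
      ≤ (M * r) ^ (2 * B) * ((balanced (Fin M × Fin r) n d).filter SimpleWord).card := by
  induction B with
  | zero =>
    simp only [mul_zero, pow_zero, one_mul]
    apply Finset.card_le_card
    intro w hw
    simp only [mem_filter, nonpos_iff_eq_zero, Finset.card_eq_zero] at hw ⊢
    refine ⟨hw.1, simpleWord_of_forall_not_badSlot hr fun x hx => ?_⟩
    have : x ∈ univ.filter (BadSlot w) := by simpa using hx
    rw [hw.2] at this; simp at this
  | succ B ih =>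
    have ih := ih (by omega)
    set W := (balanced (Fin M × Fin r) n d).filter
        fun w => (univ.filter (BadSlot w)).card ≤ B
    have hsub : ((balanced (Fin M × Fin r) n d).filter
        fun w => (univ.filter (BadSlot w)).card ≤ B + 1) ⊆
        (W ×ˢ (univ : Finset ((Fin M × Fin r) × (Fin M × Fin r)))).image
          (fun p => p.1 ∘ Equiv.swap p.2.1 p.2.2) := by
      intro w hw
      simp only [mem_filter] at hw
      by_cases h : (univ.filter (BadSlot w)).card ≤ B
      · have z : Fin M × Fin r := (⟨0, by omega⟩, ⟨0, by omega⟩)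
        exact Finset.mem_image.2 ⟨(w, z, z), by simp [W, hw.1, h], by ext; simp⟩
      · have hpos : 0 < (univ.filter (BadSlot w)).card := by omega
        obtain ⟨x, hx⟩ := Finset.card_pos.1 hpos
        obtain ⟨y, hy⟩ := exists_swap_badSlot (by omega) hw.1 (by simpa using hx) (d := d) (by omega)
        refine Finset.mem_image.2 ⟨(w ∘ Equiv.swap x y, x, y), ?_, by ext; simp⟩
        simp only [mem_product, mem_univ, and_true, W, mem_filter]
        exact ⟨balanced_comp_perm hw.1 _, by omega⟩
    refine (Finset.card_le_card hsub).trans (Finset.card_image_le.trans ?_)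
    rw [Finset.card_product]
    simp only [card_univ, Fintype.card_prod, Fintype.card_fin]
    calc W.card * (M * r * (M * r)) ≤ ((M * r) ^ (2 * B) *
          ((balanced (Fin M × Fin r) n d).filter SimpleWord).card) * (M * r * (M * r)) :=
          Nat.mul_le_mul_right _ ih
      _ = _ := by ring

end

section
variable {I : Type*} [Fintype I]

/-- The slots of a balanced word are exchangeable: the probability of an event concerning the
letters in `k` given slots is the proportion of `k`-tuples of slots satisfying it. -/
lemma card_balanced_embedding {n d k : ℕ} (P : (Fin k → Fin n) → Prop)
    [DecidablePred P] (f : Fin k ↪ I) :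
    ((balanced I n d).filter fun w => P (w ∘ f)).card * (Fintype.card I).descFactorial k
      = ∑ w ∈ balanced I n d, (univ.filter fun g : Fin k ↪ I => P (w ∘ g)).card := by
  have h : ∀ g : Fin k ↪ I, ((balanced I n d).filter fun w => P (w ∘ g)).card
      = ((balanced I n d).filter fun w => P (w ∘ f)).card := by
    intro g
    obtain ⟨σ, hσ⟩ := (Equiv.Perm.isMultiplyPretransitive I k).exists_smul_eq g f
    have : (f : Fin k → I) = σ ∘ g := by
      rw [← hσ]; rfl
    rw [this, ← card_balanced_filter_comp_perm (fun w => P (w ∘ g)) σ]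
    rfl
  simp only [Finset.card_filter _ (univ : Finset (Fin k ↪ I))]
  rw [Finset.sum_comm]
  simp only [← Finset.card_filter, h]
  simp [mul_comm]

lemma card_equal_pairs {n d : ℕ} {w : I → Fin n} (hw : w ∈ balanced I n d) :
    (univ.filter fun p : I × I => w p.1 = w p.2).card = Fintype.card I * d := by
  simp only [balanced, mem_filter, mem_univ, true_and] at hw
  rw [Finset.card_filter, Fintype.sum_prod_type_right]
  simp only [← Finset.card_filter, hw]
  simp

lemma card_pair_event {n d : ℕ} {x y : I} (hxy : x ≠ y) (hI : 6 ≤ Fintype.card I) :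
    (((balanced I n d).filter fun w => w x = w y).card : ℝ)
      ≤ 2 * d / Fintype.card I * (balanced I n d).card := by
  have h := card_balanced_embedding (d := d) (n := n) (fun u : Fin 2 → Fin n => u 0 = u 1)
    ⟨![x, y], by
      intro i j; fin_cases i <;> fin_cases j <;> simp [hxy, hxy.symm]⟩
  have h2 : ∑ w ∈ balanced I n d, (univ.filter fun g : Fin 2 ↪ I => (w ∘ g) 0 = (w ∘ g) 1).card
      ≤ ∑ w ∈ balanced I n d, Fintype.card I * d := by
    refine Finset.sum_le_sum fun w hw => ?_
    rw [← card_equal_pairs hw]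
    refine Finset.card_le_card_of_injOn (fun g => (g 0, g 1)) ?_ ?_
    · intro g hg; simpa using hg
    · intro g _ g' _ he
      simp only [Prod.mk.injEq] at he
      ext i; fin_cases i <;> simp [he.1, he.2]
  rw [← h] at h2
  simp only [sum_const, smul_eq_mul] at h2
  set N := Fintype.card I
  set b := (balanced I n d).card
  have h3 : N.descFactorial 2 = N * (N - 1) := by
    simp [Nat.descFactorial_succ]; ring
  rw [h3] at h2
  obtain ⟨m, hm⟩ : ∃ m, N = m + 1 := ⟨N - 1, by omega⟩
  have h4 : (((balanced I n d).filter fun w => w x = w y).card : ℝ) * (N * (N - 1)) ≤ b * (N * d) := by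
    rw [hm] at h2 ⊢
    simp only [Nat.add_sub_cancel] at h2
    have : (((balanced I n d).filter fun w => w x = w y).card) * ((m + 1) * m) ≤ b * ((m + 1) * d) := h2
    have h5 := (Nat.cast_le (α := ℝ)).2 this
    push_cast at h5 ⊢
    refine le_trans (le_of_eq ?_) h5
    ring
  have hN : (6 : ℝ) ≤ N := by exact_mod_cast hI
  have hN0 : (0 : ℝ) < N := by linarith
  set c := (((balanced I n d).filter fun w => w x = w y).card : ℝ)
  have hc : 0 ≤ c := Nat.cast_nonneg _
  rw [div_mul_eq_mul_div, le_div_iff₀ hN0]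
  have h6 : c * (N - 1) ≤ b * d := by nlinarith
  nlinarith

lemma card_quad_event {n d : ℕ} {x y z t : I} (hxy : x ≠ y) (hxz : x ≠ z) (hxt : x ≠ t)
    (hyz : y ≠ z) (hyt : y ≠ t) (hzt : z ≠ t) (hI : 6 ≤ Fintype.card I) :
    (((balanced I n d).filter fun w => w x = w y ∧ w z = w t).card : ℝ)
      ≤ 8 * d ^ 2 / (Fintype.card I : ℝ) ^ 2 * (balanced I n d).card := by
  have h := card_balanced_embedding (d := d) (n := n)
    (fun u : Fin 4 → Fin n => u 0 = u 1 ∧ u 2 = u 3)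
    ⟨![x, y, z, t], by
      intro i j; fin_cases i <;> fin_cases j <;>
        simp [hxy, hxy.symm, hxz, hxz.symm, hxt, hxt.symm, hyz, hyz.symm, hyt, hyt.symm, hzt,
          hzt.symm]⟩
  have h2 : ∑ w ∈ balanced I n d,
      (univ.filter fun g : Fin 4 ↪ I => (w ∘ g) 0 = (w ∘ g) 1 ∧ (w ∘ g) 2 = (w ∘ g) 3).card
      ≤ ∑ w ∈ balanced I n d, (Fintype.card I * d) * (Fintype.card I * d) := by
    refine Finset.sum_le_sum fun w hw => ?_
    rw [← card_equal_pairs hw, ← Finset.card_product]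
    refine Finset.card_le_card_of_injOn (fun g => ((g 0, g 1), (g 2, g 3))) ?_ ?_
    · intro g hg; simpa using hg
    · intro g _ g' _ he
      simp only [Prod.mk.injEq] at he
      ext i; fin_cases i <;> simp [he.1.1, he.1.2, he.2.1, he.2.2]
  rw [← h] at h2
  simp only [sum_const, smul_eq_mul] at h2
  set N := Fintype.card I
  set b := (balanced I n d).card
  have h3 : N.descFactorial 4 = N * (N - 1) * (N - 2) * (N - 3) := by
    simp [Nat.descFactorial_succ]; ring
  rw [h3] at h2
  obtain ⟨m, hm⟩ : ∃ m, N = m + 3 := ⟨N - 3, by omega⟩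
  set c' := ((balanced I n d).filter fun w => w x = w y ∧ w z = w t).card with hc'
  have h4 : (c' : ℝ) * (N * (N - 1) * (N - 2) * (N - 3)) ≤ b * ((N * d) * (N * d)) := by
    have e1 : m + 3 - 1 = m + 2 := by omega
    have e2 : m + 3 - 2 = m + 1 := by omega
    have : c' * ((m + 3) * (m + 2) * (m + 1) * m) ≤ b * (((m + 3) * d) * ((m + 3) * d)) := by
      rw [hm, e1, e2] at h2
      exact h2
    have h5 := (Nat.cast_le (α := ℝ)).2 this
    rw [hm]
    push_cast at h5 ⊢
    refine le_trans (le_of_eq ?_) h5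
    ring
  have hN : (6 : ℝ) ≤ N := by exact_mod_cast hI
  have hN0 : (0 : ℝ) < N := by linarith
  set c := (c' : ℝ)
  have hc : 0 ≤ c := Nat.cast_nonneg _
  rw [div_mul_eq_mul_div, le_div_iff₀ (by positivity)]
  have h6 : (N : ℝ) ^ 3 / 8 ≤ (N - 1) * (N - 2) * (N - 3) := by
    have a1 : (N : ℝ) / 2 ≤ N - 1 := by linarith
    have a2 : (N : ℝ) / 2 ≤ N - 2 := by linarith
    have a3 : (N : ℝ) / 2 ≤ N - 3 := by linarith
    calc (N : ℝ) ^ 3 / 8 = (N / 2) * (N / 2) * (N / 2) := by ring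
      _ ≤ _ := by gcongr; nlinarith; linarith
  have h7 : c * (N ^ 2 * N ^ 2) ≤ 8 * d ^ 2 * b * N ^ 2 := by
    have := mul_le_mul_of_nonneg_left h6 (mul_nonneg hc hN0.le)
    nlinarith
  have hN2 : (0 : ℝ) < (N : ℝ) ^ 2 := by positivity
  rw [← mul_assoc] at h7
  exact le_of_mul_le_mul_right h7 hN2
end

section
variable {M r n : ℕ}

/-- The expected number of bad slots is bounded independently of `n`. -/
lemma sum_badSlot_le {d : ℕ} (hr : 2 ≤ r) (hd : 0 < d) (hM : 6 ≤ M) :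
    ∑ w ∈ balanced (Fin M × Fin r) n d, ((univ.filter (BadSlot w)).card : ℝ)
      ≤ 10 * r ^ 2 * d ^ 2 * (balanced (Fin M × Fin r) n d).card := by
  set I := Fin M × Fin r
  set Pr : Finset (I × I) := univ.filter fun p => p.2 ≠ p.1 ∧ p.2.1 = p.1.1 with hPr
  set Qu : Finset ((I × I) × (I × I)) := univ.filter fun p => p.1.2 ≠ p.1.1 ∧ p.1.2.1 = p.1.1.1 ∧
    p.2.1.1 ≠ p.1.1.1 ∧ p.2.2 ≠ p.2.1 ∧ p.2.2.1 = p.2.1.1 with hQu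
  have hN : Fintype.card I = M * r := by simp [I]
  have hN6 : 6 ≤ Fintype.card I := by rw [hN]; nlinarith
  have hNpos : (0 : ℝ) < Fintype.card I := by
    have : 0 < Fintype.card I := by omega
    exact_mod_cast this
  have hsame : (univ.filter fun p : I × I => p.2.1 = p.1.1).card ≤ Fintype.card I * r := by
    rw [Finset.card_filter, Fintype.sum_prod_type]
    simp only [← Finset.card_filter]
    rw [← smul_eq_mul, ← Finset.card_univ, ← Finset.sum_const]
    refine Finset.sum_le_sum fun x _ => ?_
    refine (Finset.card_le_card_of_injOn (t := (univ : Finset (Fin r))) Prod.snd (by simp) ?_).trans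
      (by simp)
    rintro ⟨a, b⟩ h1 ⟨a', b'⟩ h2 h
    simp only [coe_filter, mem_univ, true_and, Set.mem_ofPred_eq] at h1 h2 h
    rw [h1, h2, h]
  have hPrc : Pr.card ≤ Fintype.card I * r := by
    refine le_trans (Finset.card_le_card ?_) hsame
    intro p; simp only [hPr, mem_filter, mem_univ, true_and]; exact fun h => h.2
  have hQuc : Qu.card ≤ (Fintype.card I * r) * (Fintype.card I * r) := by
    refine le_trans (Finset.card_le_card (t := (univ.filter fun p : I × I => p.2.1 = p.1.1) ×ˢ
      (univ.filter fun p : I × I => p.2.1 = p.1.1)) ?_) ?_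
    · intro p; simp only [hQu, mem_filter, mem_univ, true_and, mem_product]
      exact fun h => ⟨h.2.1, h.2.2.2.2⟩
    · rw [Finset.card_product]; exact Nat.mul_le_mul hsame hsame
  have h1 : ∀ w : I → Fin n, ((univ.filter (BadSlot w)).card : ℝ) ≤
      (Pr.filter fun p => w p.2 = w p.1).card +
        (Qu.filter fun p => w p.2.1 = w p.1.1 ∧ w p.2.2 = w p.1.2).card := by
    intro w
    have : (univ.filter (BadSlot w)) ⊆ (Pr.filter fun p => w p.2 = w p.1).image Prod.fst ∪
        (Qu.filter fun p => w p.2.1 = w p.1.1 ∧ w p.2.2 = w p.1.2).image (fun p => p.1.1) := by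
      intro x hx
      simp only [mem_filter, mem_univ, true_and] at hx
      rw [mem_union]
      rcases hx with ⟨y, h1, h2, h3⟩ | ⟨z, a, b, h1, h2, h3, h4, h5, h6, h7⟩
      · left
        exact Finset.mem_image.2 ⟨(x, y), by simp [hPr, h1, h2, h3], rfl⟩
      · right
        exact Finset.mem_image.2 ⟨((x, z), (a, b)), by simp [hQu, h1, h2, h3, h4, h5, h6, h7], rfl⟩
    have h := (Finset.card_le_card this).trans ((Finset.card_union_le _ _).trans
      (Nat.add_le_add Finset.card_image_le Finset.card_image_le))
    exact_mod_cast h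
  refine (Finset.sum_le_sum fun w _ => h1 w).trans ?_
  rw [Finset.sum_add_distrib]
  set b : ℝ := ((balanced I n d).card : ℝ)
  have hb : 0 ≤ b := Nat.cast_nonneg _
  have e1 : ∑ w ∈ balanced I n d, ((Pr.filter fun p => w p.2 = w p.1).card : ℝ)
      ≤ 2 * r * d * b := by
    have : ∑ w ∈ balanced I n d, ((Pr.filter fun p => w p.2 = w p.1).card : ℝ)
        = ∑ p ∈ Pr, (((balanced I n d).filter fun w => w p.2 = w p.1).card : ℝ) := by
      simp only [Finset.card_filter, Nat.cast_sum]
      exact Finset.sum_comm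
    rw [this]
    refine (Finset.sum_le_card_nsmul _ _ (2 * d / Fintype.card I * b) fun p hp => ?_).trans ?_
    · exact card_pair_event (by simp only [hPr, mem_filter] at hp; exact hp.2.1) hN6
    · rw [nsmul_eq_mul]
      calc (Pr.card : ℝ) * (2 * d / Fintype.card I * b)
          ≤ ((Fintype.card I * r : ℕ) : ℝ) * (2 * d / Fintype.card I * b) := by
            gcongr
        _ = 2 * r * d * b := by push_cast; field_simp
  have e2 : ∑ w ∈ balanced I n d,
      ((Qu.filter fun p => w p.2.1 = w p.1.1 ∧ w p.2.2 = w p.1.2).card : ℝ)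
      ≤ 8 * r ^ 2 * d ^ 2 * b := by
    have : ∑ w ∈ balanced I n d,
        ((Qu.filter fun p => w p.2.1 = w p.1.1 ∧ w p.2.2 = w p.1.2).card : ℝ)
        = ∑ p ∈ Qu, (((balanced I n d).filter
          fun w => w p.2.1 = w p.1.1 ∧ w p.2.2 = w p.1.2).card : ℝ) := by
      simp only [Finset.card_filter, Nat.cast_sum]
      exact Finset.sum_comm
    rw [this]
    refine (Finset.sum_le_card_nsmul _ _ (8 * d ^ 2 / (Fintype.card I : ℝ) ^ 2 * b)
      fun p hp => ?_).trans ?_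
    · simp only [hQu, mem_filter, mem_univ, true_and] at hp
      obtain ⟨a1, a2, a3, a4, a5⟩ := hp
      refine card_quad_event ?_ ?_ ?_ ?_ ?_ ?_ hN6
      · intro h; exact a3 (by rw [h])
      · exact a4.symm
      · intro h; exact a3 (by rw [h, a2])
      · intro h; exact a3 (by rw [h, a5])
      · exact a1.symm
      · intro h; exact a3 (by rw [← a5, h, a2])
    · rw [nsmul_eq_mul]
      calc (Qu.card : ℝ) * (8 * d ^ 2 / (Fintype.card I : ℝ) ^ 2 * b)
          ≤ (((Fintype.card I * r) * (Fintype.card I * r) : ℕ) : ℝ) *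
            (8 * d ^ 2 / (Fintype.card I : ℝ) ^ 2 * b) := by
            gcongr
        _ = 8 * r ^ 2 * d ^ 2 * b := by push_cast; field_simp
  refine (add_le_add e1 e2).trans ?_
  have : (1 : ℝ) ≤ r * d := by
    have : 1 ≤ r * d := Nat.mul_pos (by omega) hd
    exact_mod_cast this
  have h9 : (r * d : ℝ) ≤ (r * d) ^ 2 := by nlinarith
  nlinarith

/-- A balanced word is simple with at least inverse polynomial probability. -/
lemma card_simple_ge {d : ℕ} (hr : 2 ≤ r) (hd : 0 < d)
    (hM : 20 * r ^ 2 * d ^ 2 + r * d + (r * d) * (r * d) + 6 < M) :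
    1 / (2 * (M * r : ℝ) ^ (40 * r ^ 2 * d ^ 2)) * (balanced (Fin M × Fin r) n d).card
      ≤ ((balanced (Fin M × Fin r) n d).filter SimpleWord).card := by
  have h1 := sum_badSlot_le (M := M) (n := n) hr hd (by omega)
  have h2 := card_few_bad_le (n := n) (d := d) (M := M) hr (20 * r ^ 2 * d ^ 2) (by omega)
  set Bl := balanced (Fin M × Fin r) n d
  set K := 20 * r ^ 2 * d ^ 2 with hK
  have hKpos : (0 : ℝ) < K := by
    have : 0 < K := by positivity
    exact_mod_cast this
  have h3 : (K : ℝ) * (Bl.filter fun w => ¬ (univ.filter (BadSlot w)).card ≤ K).card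
      ≤ K / 2 * Bl.card := by
    calc (K : ℝ) * (Bl.filter fun w => ¬ (univ.filter (BadSlot w)).card ≤ K).card
        = ∑ w ∈ Bl.filter fun w => ¬ (univ.filter (BadSlot w)).card ≤ K, (K : ℝ) := by
          simp [mul_comm]
      _ ≤ ∑ w ∈ Bl.filter fun w => ¬ (univ.filter (BadSlot w)).card ≤ K,
          ((univ.filter (BadSlot w)).card : ℝ) := by
          refine Finset.sum_le_sum fun w hw => ?_
          simp only [mem_filter, not_le] at hw
          exact_mod_cast hw.2.le
      _ ≤ ∑ w ∈ Bl, ((univ.filter (BadSlot w)).card : ℝ) :=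
          Finset.sum_le_sum_of_subset_of_nonneg (Finset.filter_subset _ _)
            fun _ _ _ => Nat.cast_nonneg _
      _ ≤ _ := h1
      _ = K / 2 * Bl.card := by rw [hK]; push_cast; ring
  have h4 : ((Bl.filter fun w => (univ.filter (BadSlot w)).card ≤ K).card : ℝ)
      + (Bl.filter fun w => ¬ (univ.filter (BadSlot w)).card ≤ K).card = Bl.card := by
    exact_mod_cast Finset.card_filter_add_card_filter_not _
  have h5 : ((Bl.filter fun w => ¬ (univ.filter (BadSlot w)).card ≤ K).card : ℝ) ≤ Bl.card / 2 := by
    have : (K : ℝ) * (Bl.filter fun w => ¬ (univ.filter (BadSlot w)).card ≤ K).card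
      ≤ K * (Bl.card / 2) := by linarith
    exact le_of_mul_le_mul_left this hKpos
  have h6 : (Bl.card : ℝ) / 2 ≤ (M * r : ℝ) ^ (40 * r ^ 2 * d ^ 2) * (Bl.filter SimpleWord).card := by
    have h7 := (Nat.cast_le (α := ℝ)).2 h2
    push_cast at h7
    have e : 2 * K = 40 * r ^ 2 * d ^ 2 := by rw [hK]; ring
    rw [e] at h7
    linarith
  have hpos : (0 : ℝ) < (M * r : ℝ) ^ (40 * r ^ 2 * d ^ 2) := by
    have h8 : 0 < M := by omega
    have h9 : 0 < r := by omega
    positivity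
  rw [one_div, ← div_eq_inv_mul, div_le_iff₀ (by positivity)]
  linarith
end

/-! ### Probabilities of row events -/

section
variable {M r n d : ℕ}

/-- Exponential tilting: the number of balanced words whose rows, read through the labelling
`lab`, all lie in `g`, bounded by the `M`-th power of a tilted single-row weight. -/
lemma card_row_event_le (hn : 0 < n) (hM : M * r = d * n) {L : Type*} [Fintype L] [DecidableEq L]
    (lab : Fin n → L) (g : Finset (Fin r → L)) (u : L → ℝ) (hu : ∀ j, 0 ≤ u j) :
    (((balanced (Fin M × Fin r) n d).filter
        fun w => ∀ i, (fun j => lab (w (i, j))) ∈ g).card : ℝ)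
      * ∏ j, u j ^ (d * (univ.filter fun v => lab v = j).card)
    ≤ (Real.exp 1 * (d * n + 1)) ^ (Fintype.card L) * (balanced (Fin M × Fin r) n d).card *
      (∑ c ∈ g, ∏ j, ((univ.filter fun v => lab v = c j).card / n * u (c j))) ^ M := by
  set I := Fin M × Fin r
  set q : L → ℝ := fun j => ((univ.filter fun v => lab v = j).card : ℝ) / n with hq
  set m : L → ℕ := fun j => (univ.filter fun v => lab v = j).card with hm
  have hq0 : ∀ j, 0 ≤ q j := fun j => by positivity
  have hQ : 0 < ∏ j, q j ^ (d * m j) := by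
    refine Finset.prod_pos fun j _ => ?_
    rcases Nat.eq_zero_or_pos (m j) with h | h
    · rw [h]; simp
    · have : 0 < q j := by
        have : (0 : ℝ) < m j := by exact_mod_cast h
        have hn' : (0 : ℝ) < n := by exact_mod_cast hn
        exact div_pos this hn'
      positivity
  have h1 := card_pattern_mem (I := I) (d := d) lab (rowPatterns M r g)
  have h2 := patterns_weight_lower (I := I) (d := d) hn (by simpa [I] using hM) lab
  have h3 := card_inter_patterns_mul_le (I := I) (d := d) lab (rowPatterns M r g)
    (fun j => q j * u j) (fun j => mul_nonneg (hq0 j) (hu j))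
  rw [sum_rowPatterns_weight (M := M) g (fun j => q j * u j)] at h3
  have hev : ((balanced I n d).filter fun w => lab ∘ w ∈ rowPatterns M r g)
      = (balanced I n d).filter fun w => ∀ i, (fun j => lab (w (i, j))) ∈ g := by
    refine Finset.filter_congr fun w _ => ?_
    simp [rowPatterns]
  rw [hev] at h1
  set A := ((balanced I n d).filter fun w => ∀ i, (fun j => lab (w (i, j))) ∈ g).card
  set b := (balanced I n d).card
  set Pc := (patterns I d lab).card
  set Gc := (rowPatterns M r g ∩ patterns I d lab).card
  set U := ∏ j, u j ^ (d * m j)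
  set Q := ∏ j, q j ^ (d * m j)
  set E := (Real.exp 1 * (d * n + 1)) ^ (Fintype.card L)
  set T := (∑ c ∈ g, ∏ j, (q (c j) * u (c j))) ^ M
  have h1R : (A : ℝ) * Pc = Gc * b := by exact_mod_cast h1
  have hU : 0 ≤ U := Finset.prod_nonneg fun j _ => pow_nonneg (hu j) _
  have h3' : (Gc : ℝ) * (Q * U) ≤ T := by
    refine le_trans (le_of_eq ?_) h3
    rw [← Finset.prod_mul_distrib]
    simp only [mul_pow]
    rfl
  have hE : 0 < E := by positivity
  change (A : ℝ) * U ≤ E * b * T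
  calc (A : ℝ) * U ≤ (A * U) * (E * (Pc * Q)) := le_mul_of_one_le_right (by positivity) h2
    _ = E * ((A * Pc) * (Q * U)) := by ring
    _ = E * b * (Gc * (Q * U)) := by rw [h1R]; ring
    _ ≤ E * b * T := by gcongr

/-- The Boolean rows that are not constantly `true`. -/
noncomputable def goodRows (r : ℕ) : Finset (Fin r → Bool) :=
  univ.filter fun c => ¬ ∀ j, c j = true

lemma sum_goodRows (x y : ℝ) :
    ∑ c ∈ goodRows r, ∏ j, (if c j = true then x else y) = (x + y) ^ r - x ^ r := by
  have h1 := sum_prod_filter_forall (r := r) (fun b : Bool => b = true)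
    (fun b => if b = true then x else y)
  have h2 := sum_prod_filter_forall (r := r) (fun _ : Bool => True)
    (fun b => if b = true then x else y)
  have h3 := Finset.sum_filter_add_sum_filter_not (univ : Finset (Fin r → Bool))
    (fun c => ∀ j, c j = true) (fun c => ∏ j, (if c j = true then x else y))
  simp only [implies_true, Finset.filter_true] at h2
  rw [h1, h2] at h3
  have e1 : ∑ l : Bool, (if l = true then x else y) = x + y := by simp
  have e2 : ∑ l ∈ univ.filter (fun b : Bool => b = true), (if l = true then x else y) = x := by
    rw [Finset.sum_filter]; simp
  rw [e1, e2] at h3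
  unfold goodRows
  linarith

lemma avoids_iff_goodRows (w : Fin M × Fin r → Fin n) (S : Finset (Fin n)) :
    Avoids w S ↔ ∀ i, (fun j => decide (w (i, j) ∈ S)) ∈ goodRows r := by
  simp [Avoids, goodRows]

lemma card_avoids_le (hn : 0 < n) (hM : M * r = d * n) (S : Finset (Fin n)) :
    (((balanced (Fin M × Fin r) n d).filter fun w => Avoids w S).card : ℝ)
    ≤ (Real.exp 1 * (d * n + 1)) ^ 2 * (balanced (Fin M × Fin r) n d).card *
      (1 - ((S.card : ℝ) / n) ^ r) ^ M := by
  have h := card_row_event_le hn hM (fun v => decide (v ∈ S)) (goodRows r) (fun _ => 1)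
    (fun _ => zero_le_one)
  simp only [one_pow, Finset.prod_const_one, mul_one, Fintype.card_bool] at h
  have e : ∀ b : Bool, ((univ.filter fun v => decide (v ∈ S) = b).card : ℝ) / n
      = if b = true then (S.card : ℝ) / n else 1 - (S.card : ℝ) / n := by
    have hn' : (n : ℝ) ≠ 0 := by positivity
    intro b
    cases b
    · have : (univ.filter fun v => decide (v ∈ S) = false) = Sᶜ := by ext; simp
      rw [this, Finset.card_compl]
      rw [Nat.cast_sub (Finset.card_le_univ S)]
      simp; field_simp
    · have : (univ.filter fun v => decide (v ∈ S) = true) = S := by ext; simp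
      rw [this]; simp
  simp only [e, sum_goodRows] at h
  rw [add_sub_cancel, one_pow] at h
  convert h using 3
  exact Finset.filter_congr fun w _ => avoids_iff_goodRows w S

/-- Union bound over all `k`-sets. -/
lemma card_wordAlpha_ge_le (hr : 0 < r) (hn : 0 < n) (hM : M * r = d * n) (k : ℕ) :
    (((balanced (Fin M × Fin r) n d).filter fun w => k ≤ wordAlpha w).card : ℝ)
    ≤ n.choose k * ((Real.exp 1 * (d * n + 1)) ^ 2 * (balanced (Fin M × Fin r) n d).card *
      (1 - ((k : ℝ) / n) ^ r) ^ M) := by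
  have hsub : ((balanced (Fin M × Fin r) n d).filter fun w => k ≤ wordAlpha w) ⊆
      (powersetCard k univ).biUnion fun S => (balanced (Fin M × Fin r) n d).filter
        fun w => Avoids w S := by
    intro w hw
    simp only [mem_filter] at hw
    obtain ⟨S, hS, hc⟩ := exists_avoids_card_eq hr w
    obtain ⟨T, hT, hTc⟩ := Finset.exists_subset_card_eq (hc ▸ hw.2)
    simp only [mem_biUnion, mem_powersetCard, subset_univ, true_and, mem_filter]
    exact ⟨T, hTc, hw.1, hS.mono hT⟩
  have h1 := (Finset.card_le_card hsub).trans Finset.card_biUnion_le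
  have h2 := (Nat.cast_le (α := ℝ)).2 h1
  refine h2.trans ?_
  rw [Nat.cast_sum]
  refine (Finset.sum_le_card_nsmul _ _ ((Real.exp 1 * (d * n + 1)) ^ 2 *
    (balanced (Fin M × Fin r) n d).card * (1 - ((k : ℝ) / n) ^ r) ^ M) fun S hS => ?_).trans ?_
  · have := card_avoids_le (r := r) (M := M) (d := d) hn hM S
    rw [(mem_powersetCard.1 hS).2] at this
    exact this
  · rw [nsmul_eq_mul, card_powersetCard]; simp

/-- Upper bound for the probability that two `k`-sets are both independent, tilted by the product
of the single-set tilts `u` (inside the set) and `v` (outside). -/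
lemma card_pair_avoids_le (hn : 0 < n) (hM : M * r = d * n) {S T : Finset (Fin n)}
    {k : ℕ} (hS : S.card = k) (hT : T.card = k) (u v : ℝ) (hu : 0 < u) (hv : 0 < v)
    (huv : (k : ℝ) / n * u + (1 - k / n) * v = 1) :
    (((balanced (Fin M × Fin r) n d).filter fun w => Avoids w S ∧ Avoids w T).card : ℝ)
      * (u ^ (d * k) * v ^ (d * (n - k))) ^ 2
    ≤ (Real.exp 1 * (d * n + 1)) ^ 4 * (balanced (Fin M × Fin r) n d).card *
      ((1 + (((S ∩ T).card : ℝ) / n - (k / n) ^ 2) * (u - v) ^ 2) ^ r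
        - 2 * (k / n * u + u * (((S ∩ T).card : ℝ) / n - (k / n) ^ 2) * (u - v)) ^ r
        + (((S ∩ T).card : ℝ) / n * u ^ 2) ^ r) ^ M := by
  set lab : Fin n → Bool × Bool := fun x => (decide (x ∈ S), decide (x ∈ T)) with hlab
  set g : Finset (Fin r → Bool × Bool) :=
    univ.filter fun c => ¬ (∀ j, (c j).1 = true) ∧ ¬ (∀ j, (c j).2 = true) with hg
  set uu : Bool × Bool → ℝ := fun b => (if b.1 = true then u else v) * (if b.2 = true then u else v)
  have h := card_row_event_le hn hM lab g uu (fun b => by positivity)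
  set l := (S ∩ T).card with hl
  have hkn : k ≤ n := by rw [← hS]; simpa using Finset.card_le_univ S
  have hlk : l ≤ k := by rw [← hS]; exact Finset.card_le_card Finset.inter_subset_left
  have c11 : (univ.filter fun x => lab x = (true, true)).card = l := by
    rw [hl]; congr 1; ext x; simp [hlab]
  have c10 : (univ.filter fun x => lab x = (true, false)).card + l = k := by
    rw [hl, ← hS, ← Finset.card_sdiff_add_card_inter S T]; congr 2; ext x; simp [hlab]
  have c01 : (univ.filter fun x => lab x = (false, true)).card + l = k := by
    rw [hl, ← hT, ← Finset.card_sdiff_add_card_inter T S, Finset.inter_comm]; congr 2; ext x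
    simp [hlab, and_comm]
  have cU : (S ∪ T).card + l = k + k := by
    rw [hl, Finset.card_union_add_card_inter, hS, hT]
  have c00 : (univ.filter fun x => lab x = (false, false)).card + (S ∪ T).card = n := by
    have : (univ.filter fun x => lab x = (false, false)) = (S ∪ T)ᶜ := by ext x; simp [hlab]
    rw [this, Finset.card_compl_add_card]; simp
  have hev : ∀ w : Fin M × Fin r → Fin n, (Avoids w S ∧ Avoids w T) ↔
      ∀ i, (fun j => lab (w (i, j))) ∈ g := by
    intro w
    simp [Avoids, hg, hlab, forall_and]
  have hprod : ∏ j, uu j ^ (d * (univ.filter fun x => lab x = j).card)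
      = (u ^ (d * k) * v ^ (d * (n - k))) ^ 2 := by
    rw [Fintype.prod_prod_type]
    simp only [Fintype.prod_bool, uu, if_true, Bool.false_eq_true, if_false]
    rw [c11]
    set x10 := (univ.filter fun x => lab x = (true, false)).card
    set x01 := (univ.filter fun x => lab x = (false, true)).card
    set x00 := (univ.filter fun x => lab x = (false, false)).card
    have e1 : x10 = k - l := by omega
    have e2 : x01 = k - l := by omega
    obtain ⟨z, hz⟩ : ∃ z, k = l + z := ⟨k - l, by omega⟩
    have e3 : n - k = x00 + z := by omega
    rw [e1, e2, e3, hz, Nat.add_sub_cancel_left]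
    ring
  have hnR : (n : ℝ) ≠ 0 := by positivity
  have hsum : ∑ c ∈ g, ∏ j, ((univ.filter fun x => lab x = c j).card / n * uu (c j))
      = (1 + ((l : ℝ) / n - (k / n) ^ 2) * (u - v) ^ 2) ^ r
        - 2 * (k / n * u + u * ((l : ℝ) / n - (k / n) ^ 2) * (u - v)) ^ r
        + ((l : ℝ) / n * u ^ 2) ^ r := by
    set W : Bool × Bool → ℝ := fun b => ((univ.filter fun x => lab x = b).card / n * uu b) with hW
    have w11 : W (true, true) = (l : ℝ) / n * u ^ 2 := by
      simp only [hW, c11, uu, if_true]; ring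
    have w10 : W (true, false) = ((k : ℝ) / n - l / n) * (u * v) := by
      simp only [hW, uu]
      rw [show ((univ.filter fun x => lab x = (true, false)).card : ℝ) = k - l by
        rw [← c10]; push_cast; ring]
      simp only [if_true, Bool.false_eq_true, if_false]; ring
    have w01 : W (false, true) = ((k : ℝ) / n - l / n) * (u * v) := by
      simp only [hW, uu]
      rw [show ((univ.filter fun x => lab x = (false, true)).card : ℝ) = k - l by
        rw [← c01]; push_cast; ring]
      simp only [if_true, Bool.false_eq_true, if_false]; ring
    have w00 : W (false, false) = (1 - 2 * ((k : ℝ) / n) + l / n) * v ^ 2 := by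
      simp only [hW, uu]
      rw [show ((univ.filter fun x => lab x = (false, false)).card : ℝ) = n - 2 * k + l by
        have := (congrArg (Nat.cast (R := ℝ)) c00)
        have h' := (congrArg (Nat.cast (R := ℝ)) cU)
        push_cast at this h'
        linarith]
      simp only [Bool.false_eq_true, if_false]; field_simp
    have s0 := sum_prod_filter_forall (r := r) (fun _ : Bool × Bool => True) W
    have s1 := sum_prod_filter_forall (r := r) (fun b : Bool × Bool => b.1 = true) W
    have s2 := sum_prod_filter_forall (r := r) (fun b : Bool × Bool => b.2 = true) W
    have s3 := sum_prod_filter_forall (r := r) (fun b : Bool × Bool => b.1 = true ∧ b.2 = true) W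
    simp only [implies_true, Finset.filter_true] at s0
    have t0 : ∑ b, W b = 1 + ((l : ℝ) / n - (k / n) ^ 2) * (u - v) ^ 2 := by
      rw [Fintype.sum_prod_type]
      simp only [Fintype.sum_bool]
      rw [w11, w10, w01, w00]
      have : (1 : ℝ) = ((k : ℝ) / n * u + (1 - k / n) * v) ^ 2 := by rw [huv]; ring
      rw [show (1 + ((l : ℝ) / n - (k / n) ^ 2) * (u - v) ^ 2)
        = ((k : ℝ) / n * u + (1 - k / n) * v) ^ 2 + ((l : ℝ) / n - (k / n) ^ 2) * (u - v) ^ 2 by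
          rw [huv]; ring]
      ring
    have t1 : ∑ b ∈ univ.filter (fun b : Bool × Bool => b.1 = true), W b
        = k / n * u + u * ((l : ℝ) / n - (k / n) ^ 2) * (u - v) := by
      rw [Finset.sum_filter, Fintype.sum_prod_type]
      simp only [Fintype.sum_bool, if_true, Bool.false_eq_true, if_false, add_zero]
      rw [w11, w10]
      linear_combination (k : ℝ) / n * u * huv
    have t2 : ∑ b ∈ univ.filter (fun b : Bool × Bool => b.2 = true), W b
        = k / n * u + u * ((l : ℝ) / n - (k / n) ^ 2) * (u - v) := by
      rw [Finset.sum_filter, Fintype.sum_prod_type]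
      simp only [Fintype.sum_bool, if_true, Bool.false_eq_true, if_false, add_zero]
      rw [w11, w01]
      linear_combination (k : ℝ) / n * u * huv
    have t3 : ∑ b ∈ univ.filter (fun b : Bool × Bool => b.1 = true ∧ b.2 = true), W b
        = (l : ℝ) / n * u ^ 2 := by
      rw [Finset.sum_filter, Fintype.sum_prod_type]
      simp [w11]
    rw [t0] at s0; rw [t1] at s1; rw [t2] at s2; rw [t3] at s3
    rw [← s0, ← s1, ← s3]
    have hie : ∀ c : Fin r → Bool × Bool, ∀ x : ℝ,
        (if (¬ (∀ j, (c j).1 = true) ∧ ¬ (∀ j, (c j).2 = true)) then x else 0)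
        = x - (if ∀ j, (c j).1 = true then x else 0) - (if ∀ j, (c j).2 = true then x else 0)
          + (if ∀ j, ((c j).1 = true ∧ (c j).2 = true) then x else 0) := by
      intro c x
      by_cases a1 : ∀ j, (c j).1 = true <;> by_cases a2 : ∀ j, (c j).2 = true <;>
        simp [forall_and, a1, a2]
    rw [hg, Finset.sum_filter]
    simp only [hie]
    rw [Finset.sum_add_distrib, Finset.sum_sub_distrib, Finset.sum_sub_distrib]
    simp only [← Finset.sum_filter]
    rw [show (2 : ℝ) * (∑ c ∈ univ.filter (fun c : Fin r → Bool × Bool => ∀ j, (c j).1 = true),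
      ∏ j, W (c j)) = (∑ c ∈ univ.filter (fun c : Fin r → Bool × Bool => ∀ j, (c j).1 = true),
      ∏ j, W (c j)) + (∑ c ∈ univ.filter (fun c : Fin r → Bool × Bool => ∀ j, (c j).2 = true),
      ∏ j, W (c j)) by rw [s1, s2]; ring]
    ring
  rw [hprod, hsum] at h
  simp only [Fintype.card_prod, Fintype.card_bool] at h
  convert h using 3
  exact congrArg Finset.card (Finset.filter_congr fun w _ => hev w)
end

/-! ### The size of a typical good pattern -/

section
variable {M r n d : ℕ}

/-- The Boolean patterns with exactly `K` entries `true` and no row constantly `true`. -/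
noncomputable def goodPatterns (M r K : ℕ) : Finset (Fin M × Fin r → Bool) :=
  (rowPatterns M r (goodRows r)).filter fun χ => (univ.filter fun x => χ x = true).card = K

lemma prod_ite_eq_pow (χ : Fin M × Fin r → Bool) (x y : ℝ) :
    ∏ t, (if χ t = true then x else y)
      = x ^ (univ.filter fun t => χ t = true).card
        * y ^ (M * r - (univ.filter fun t => χ t = true).card) := by
  rw [Finset.prod_ite, Finset.prod_const, Finset.prod_const]
  congr 2
  have h := Finset.card_filter_add_card_filter_not (s := (univ : Finset (Fin M × Fin r)))
    (fun t => χ t = true)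
  simp only [card_univ, Fintype.card_prod, Fintype.card_fin] at h
  omega

lemma sum_tilted (p t m : ℝ) :
    ∑ χ ∈ rowPatterns M r (goodRows r), (∏ x, (if χ x = true then p else 1 - p)) *
      Real.exp (t * ((univ.filter fun x => χ x = true).card - m * M))
    = (Real.exp (-(t * m)) * ((p * Real.exp t + (1 - p)) ^ r - (p * Real.exp t) ^ r)) ^ M := by
  have h := sum_rowPatterns_weight (M := M) (goodRows r)
    (fun b => if b = true then p * Real.exp t else 1 - p)
  rw [sum_goodRows] at h
  rw [mul_pow, ← h, Finset.mul_sum]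
  refine Finset.sum_congr rfl fun χ _ => ?_
  rw [prod_ite_eq_pow, prod_ite_eq_pow, mul_pow, ← Real.exp_nat_mul, ← Real.exp_nat_mul]
  rw [show t * (((univ.filter fun x => χ x = true).card : ℝ) - m * M)
    = M * (-(t * m)) + (univ.filter fun x => χ x = true).card * t by ring, Real.exp_add]
  ring

/-- Tail bound for the number of `true` entries: if `t` lowers the tilted single-row weight below
`1 - p ^ r`, then patterns whose count is on the `t`-side of `m * M` carry negligible weight. -/
lemma tail_weight_le (p t m : ℝ) (hp0 : 0 ≤ p) (hp1 : p ≤ 1) :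
    ∑ χ ∈ (rowPatterns M r (goodRows r)).filter
        (fun χ => 0 ≤ t * ((univ.filter fun x => χ x = true).card - m * M)),
      ∏ x, (if χ x = true then p else 1 - p)
    ≤ (Real.exp (-(t * m)) * ((p * Real.exp t + (1 - p)) ^ r - (p * Real.exp t) ^ r)) ^ M := by
  rw [← sum_tilted]
  have hnn : ∀ χ : Fin M × Fin r → Bool, 0 ≤ ∏ x, (if χ x = true then p else 1 - p) := by
    intro χ
    refine Finset.prod_nonneg fun x _ => ?_
    split_ifs <;> linarith
  refine (Finset.sum_le_sum fun χ hχ => ?_).trans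
    (Finset.sum_le_sum_of_subset_of_nonneg (Finset.filter_subset _ _)
      fun χ _ _ => mul_nonneg (hnn χ) (Real.exp_pos _).le)
  exact le_mul_of_one_le_right (hnn χ) (Real.one_le_exp (mem_filter.1 hχ).2)

lemma hasDerivAt_tilt (r : ℕ) (p m : ℝ) :
    HasDerivAt (fun t => Real.exp (-(t * m)) *
      ((p * Real.exp t + (1 - p)) ^ r - (p * Real.exp t) ^ r))
      (-m * (1 - p ^ r) + (r * p - r * p ^ r)) 0 := by
  have h1 : HasDerivAt (fun t : ℝ => Real.exp (-(t * m))) (Real.exp (-(0 * m)) * (-(1 * m))) 0 :=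
    ((hasDerivAt_id (0 : ℝ)).mul_const m).neg.exp
  have h2 : HasDerivAt (fun t : ℝ => p * Real.exp t) (p * Real.exp 0) 0 :=
    (Real.hasDerivAt_exp 0).const_mul p
  have h3 := ((h2.add_const (1 - p)).pow r).sub (h2.pow r)
  have h4 := h1.mul h3
  refine HasDerivAt.congr_deriv (f := fun t => Real.exp (-(t * m)) *
      ((p * Real.exp t + (1 - p)) ^ r - (p * Real.exp t) ^ r)) h4 ?_
  rcases r with _ | r
  · simp
  · simp only [zero_mul, neg_zero, Real.exp_zero, mul_one, one_mul, Nat.add_sub_cancel,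
      add_sub_cancel, one_pow, Pi.sub_apply, Pi.pow_apply]
    push_cast
    ring

lemma exists_pos_lt_of_deriv_neg {F : ℝ → ℝ} {F' : ℝ} (h : HasDerivAt F F' 0) (hF : F' < 0) :
    ∃ t, 0 < t ∧ F t < F 0 := by
  have h1 := (hasDerivAt_iff_tendsto_slope.1 h).eventually_lt_const hF
  have h2 : ∀ᶠ t in nhdsWithin (0 : ℝ) (Set.Ioi 0), slope F 0 t < 0 :=
    h1.filter_mono (nhdsWithin_mono _ (by intro x hx; exact ne_of_gt hx))
  obtain ⟨t, ht, ht0⟩ := (h2.and self_mem_nhdsWithin).exists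
  refine ⟨t, ht0, ?_⟩
  rw [slope_def_field, div_neg_iff] at ht
  have ht0' : (0 : ℝ) < t := ht0
  rcases ht with ht | ht <;> linarith [ht.1, ht.2]

lemma exists_neg_lt_of_deriv_pos {F : ℝ → ℝ} {F' : ℝ} (h : HasDerivAt F F' 0) (hF : 0 < F') :
    ∃ t, t < 0 ∧ F t < F 0 := by
  have h2 : HasDerivAt (fun t => F (-t)) (-F') 0 := by
    have h' : HasDerivAt F F' (-0) := by simpa using h
    simpa [Function.comp_def] using! h'.scomp (0 : ℝ) (hasDerivAt_neg (0 : ℝ))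
  obtain ⟨t, ht, hlt⟩ := exists_pos_lt_of_deriv_neg h2 (by linarith)
  exact ⟨-t, by linarith, by simpa using hlt⟩

/-- Changing a `true` entry to `false` keeps a pattern good. -/
lemma card_goodPatterns_succ_le (M r K : ℕ) :
    (goodPatterns M r (K + 1)).card ≤ M * r * (goodPatterns M r K).card := by
  have hsub : goodPatterns M r (K + 1) ⊆
      ((goodPatterns M r K) ×ˢ (univ : Finset (Fin M × Fin r))).image
        (fun q => Function.update q.1 q.2 true) := by
    intro χ hχ
    simp only [goodPatterns, rowPatterns, goodRows, mem_filter, mem_univ, true_and] at hχ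
    have hpos : 0 < (univ.filter fun x => χ x = true).card := by omega
    obtain ⟨x, hx⟩ := Finset.card_pos.1 hpos
    have hx' : χ x = true := by simpa using hx
    refine Finset.mem_image.2 ⟨(Function.update χ x false, x), ?_, ?_⟩
    · simp only [mem_product, mem_univ, and_true, goodPatterns, rowPatterns, goodRows, mem_filter,
        true_and]
      constructor
      · intro i hall
        refine hχ.1 i fun j => ?_
        have := hall j
        by_cases hij : (i, j) = x
        · rw [hij]; exact hx'
        · simpa [Function.update_of_ne hij] using this
      · have : (univ.filter fun y => Function.update χ x false y = true)
            = (univ.filter fun y => χ y = true).erase x := by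
          ext y
          simp only [mem_filter, mem_univ, true_and, mem_erase]
          by_cases hy : y = x
          · subst hy; simp
          · simp [hy]
        rw [this, Finset.card_erase_of_mem hx, hχ.2]; rfl
    · simp only [Function.update_idem]
      rw [← hx', Function.update_eq_self]
  refine (Finset.card_le_card hsub).trans (Finset.card_image_le.trans ?_)
  rw [Finset.card_product]
  simp [mul_comm]

/-- The weight of the good patterns with `K` entries `true` under the product measure. -/
noncomputable def goodWeight (M r : ℕ) (p : ℝ) (K : ℕ) : ℝ :=
  (goodPatterns M r K).card * (p ^ K * (1 - p) ^ (M * r - K))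

lemma goodWeight_succ_le {p : ℝ} (hp0 : 0 ≤ p) (hp : p ≤ 1 / 2) {K : ℕ} (hK : K + 1 ≤ M * r) :
    goodWeight M r p (K + 1) ≤ M * r * goodWeight M r p K := by
  unfold goodWeight
  have h := (Nat.cast_le (α := ℝ)).2 (card_goodPatterns_succ_le M r K)
  push_cast at h
  obtain ⟨z, hz⟩ := Nat.exists_eq_add_of_le hK
  have e1 : M * r - (K + 1) = z := by rw [hz, Nat.add_sub_cancel_left]
  have e2 : M * r - K = z + 1 := by rw [hz, add_assoc, Nat.add_sub_cancel_left, add_comm]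
  rw [e1, e2]
  have h1 : p ^ (K + 1) * (1 - p) ^ z ≤ p ^ K * (1 - p) ^ (z + 1) := by
    rw [pow_succ, pow_succ]
    have : 0 ≤ p ^ K * (1 - p) ^ z := mul_nonneg (pow_nonneg hp0 _) (pow_nonneg (by linarith) _)
    nlinarith
  calc _ ≤ (M * r * (goodPatterns M r K).card : ℝ) * (p ^ K * (1 - p) ^ (z + 1)) := by
        refine mul_le_mul h h1 ?_
          (mul_nonneg (mul_nonneg (Nat.cast_nonneg _) (Nat.cast_nonneg _)) (Nat.cast_nonneg _))
        exact mul_nonneg (pow_nonneg hp0 _) (pow_nonneg (by linarith) _)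
    _ = _ := by ring

lemma goodWeight_add_le {p : ℝ} (hp0 : 0 ≤ p) (hp : p ≤ 1 / 2) {K : ℕ} (j : ℕ)
    (hK : K + j ≤ M * r) :
    goodWeight M r p (K + j) ≤ (M * r : ℝ) ^ j * goodWeight M r p K := by
  induction j with
  | zero => simp
  | succ j ih =>
    have h1 := goodWeight_succ_le (M := M) (r := r) hp0 hp (K := K + j) (by omega)
    refine h1.trans ?_
    calc (M * r : ℝ) * goodWeight M r p (K + j)
        ≤ M * r * ((M * r : ℝ) ^ j * goodWeight M r p K) := by
          refine mul_le_mul_of_nonneg_left (ih (by omega)) (by positivity)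
      _ = _ := by ring

lemma goodWeight_nonneg {p : ℝ} (hp0 : 0 ≤ p) (hp : p ≤ 1) (K : ℕ) : 0 ≤ goodWeight M r p K := by
  unfold goodWeight
  exact mul_nonneg (by positivity) (mul_nonneg (pow_nonneg hp0 _) (pow_nonneg (by linarith) _))

/-- The number of `true` entries in a good pattern concentrates between `M r (p - p ^ r)` and
`M r p`, so by pigeonhole one count `K` in that window carries a `1 / (2 (M r + 1))` fraction of the
total weight `(1 - p ^ r) ^ M`. -/
lemma exists_goodWeight (hr : 2 ≤ r) {p : ℝ} (hp0 : 0 < p) (hp : p ≤ 1 / 2) :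
    ∃ M₀ : ℕ, ∀ M : ℕ, M₀ ≤ M → ∃ K : ℕ, M * r * (p - p ^ r) ≤ K ∧ (K : ℝ) ≤ M * r * p ∧
      (1 - p ^ r) ^ M ≤ 2 * (M * r + 1) * goodWeight M r p K := by
  have hpr : p ^ r < p := by
    calc p ^ r ≤ p ^ 2 := pow_le_pow_of_le_one hp0.le (by linarith) hr
      _ < p := by nlinarith
  have hprpos : 0 < p ^ r := by positivity
  have hrpos : (0 : ℝ) < r := by positivity
  set F : ℝ → ℝ → ℝ := fun m t => Real.exp (-(t * m)) *
      ((p * Real.exp t + (1 - p)) ^ r - (p * Real.exp t) ^ r) with hF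
  have hF0 : ∀ m, F m 0 = 1 - p ^ r := by intro m; simp [hF]
  have hFnn : ∀ m t, 0 ≤ F m t := by
    intro m t
    simp only [hF]
    refine mul_nonneg (Real.exp_pos _).le (sub_nonneg.2 ?_)
    have := Real.exp_pos t
    exact pow_le_pow_left₀ (by positivity) (by linarith) r
  obtain ⟨t1, ht1, hlt1⟩ := exists_pos_lt_of_deriv_neg (hasDerivAt_tilt r p (r * p)) (by
    have : -(r * p) * (1 - p ^ r) + (r * p - r * p ^ r) = -(r * (p ^ r * (1 - p))) := by ring
    rw [this]
    have : 0 < r * (p ^ r * (1 - p)) := mul_pos hrpos (mul_pos hprpos (by linarith))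
    linarith)
  obtain ⟨t2, ht2, hlt2⟩ := exists_neg_lt_of_deriv_pos (hasDerivAt_tilt r p (r * (p - p ^ r))) (by
    have : -(r * (p - p ^ r)) * (1 - p ^ r) + (r * p - r * p ^ r) = r * (p - p ^ r) * p ^ r := by ring
    rw [this]
    exact mul_pos (mul_pos hrpos (by linarith)) hprpos)
  change F _ t1 < F _ 0 at hlt1
  change F _ t2 < F _ 0 at hlt2
  rw [hF0] at hlt1 hlt2
  have hG : 0 < 1 - p ^ r := by linarith
  have hpow : ∀ x, 0 ≤ x → x < 1 - p ^ r → ∀ᶠ M : ℕ in atTop, x ^ M ≤ (1 - p ^ r) ^ M / 4 := by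
    intro x hx hlt
    have h1 := tendsto_pow_atTop_nhds_zero_of_lt_one (div_nonneg hx hG.le) ((div_lt_one hG).2 hlt)
    filter_upwards [h1.eventually_le_const (show (0 : ℝ) < 1 / 4 by norm_num)] with M hM
    rw [div_pow, div_le_iff₀ (pow_pos hG M)] at hM
    linarith
  obtain ⟨M₀, hM₀⟩ := eventually_atTop.1 ((hpow _ (hFnn _ _) hlt1).and (hpow _ (hFnn _ _) hlt2))
  refine ⟨M₀, fun M hM => ?_⟩
  obtain ⟨b1, b2⟩ := hM₀ M hM
  have T1 := tail_weight_le (M := M) (r := r) p t1 (r * p) hp0.le (by linarith)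
  have T2 := tail_weight_le (M := M) (r := r) p t2 (r * (p - p ^ r)) hp0.le (by linarith)
  have hT := sum_tilted (M := M) (r := r) p 0 0
  simp only [zero_mul, mul_zero, Real.exp_zero, mul_one, neg_zero, add_sub_cancel, one_pow,
    one_mul] at hT
  set RP := rowPatterns M r (goodRows r)
  set Wt : (Fin M × Fin r → Bool) → ℝ := fun χ => ∏ x, (if χ x = true then p else 1 - p) with hWt
  set cnt : (Fin M × Fin r → Bool) → ℕ := fun χ => (univ.filter fun x => χ x = true).card with hcnt
  have hnn : ∀ χ, 0 ≤ Wt χ := by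
    intro χ
    refine Finset.prod_nonneg fun x _ => ?_
    split_ifs <;> linarith
  set Mid := RP.filter fun χ => M * r * (p - p ^ r) ≤ cnt χ ∧ (cnt χ : ℝ) ≤ M * r * p with hMid
  have hsplit : ∑ χ ∈ RP, Wt χ ≤ ∑ χ ∈ RP.filter
        (fun χ => 0 ≤ t1 * (cnt χ - r * p * M)), Wt χ +
      ∑ χ ∈ RP.filter (fun χ => 0 ≤ t2 * (cnt χ - r * (p - p ^ r) * M)), Wt χ +
      ∑ χ ∈ Mid, Wt χ := by
    simp only [hMid, Finset.sum_filter, ← Finset.sum_add_distrib]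
    refine Finset.sum_le_sum fun χ _ => ?_
    have hw := hnn χ
    by_cases c1 : 0 ≤ t1 * (cnt χ - r * p * M)
    · rw [if_pos c1]
      have : 0 ≤ (if 0 ≤ t2 * (cnt χ - r * (p - p ^ r) * M) then Wt χ else 0) := by
        split_ifs <;> simp [hw]
      have : 0 ≤ (if M * r * (p - p ^ r) ≤ cnt χ ∧ (cnt χ : ℝ) ≤ M * r * p then Wt χ else 0) := by
        split_ifs <;> simp [hw]
      linarith
    by_cases c2 : 0 ≤ t2 * (cnt χ - r * (p - p ^ r) * M)
    · rw [if_pos c2]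
      have : 0 ≤ (if 0 ≤ t1 * (cnt χ - r * p * M) then Wt χ else 0) := by
        split_ifs <;> simp [hw]
      have : 0 ≤ (if M * r * (p - p ^ r) ≤ cnt χ ∧ (cnt χ : ℝ) ≤ M * r * p then Wt χ else 0) := by
        split_ifs <;> simp [hw]
      linarith
    rw [if_neg c1, if_neg c2, if_pos]
    · linarith
    · constructor
      · by_contra h
        push Not at h
        exact c2 (mul_nonneg_of_nonpos_of_nonpos ht2.le (by linarith))
      · by_contra h
        push Not at h
        exact c1 (mul_nonneg ht1.le (by linarith))
  have hMidge : (1 - p ^ r) ^ M / 2 ≤ ∑ χ ∈ Mid, Wt χ := by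
    have e1 := T1.trans b1
    have e2 := T2.trans b2
    have e3 := hT
    linarith
  by_contra hcon
  push Not at hcon
  have hcntle : ∀ χ, cnt χ ≤ M * r := by
    intro χ
    have := Finset.card_le_univ (univ.filter fun x => χ x = true)
    simpa [hcnt] using this
  have hfib : ∑ χ ∈ Mid, Wt χ = ∑ K ∈ range (M * r + 1), ∑ χ ∈ Mid.filter (fun χ => cnt χ = K), Wt χ :=
    (Finset.sum_fiberwise_of_maps_to (fun χ _ => mem_range.2 (by have := hcntle χ; omega)) _).symm
  have hlt : ∑ χ ∈ Mid, Wt χ < ∑ K ∈ range (M * r + 1), (1 - p ^ r) ^ M / (2 * (M * r + 1)) := by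
    rw [hfib]
    refine Finset.sum_lt_sum_of_nonempty ⟨0, by simp⟩ fun K _ => ?_
    have hpos : (0 : ℝ) < 2 * (M * r + 1) := by positivity
    by_cases hK : M * r * (p - p ^ r) ≤ (K : ℝ) ∧ (K : ℝ) ≤ M * r * p
    · have h1 := hcon K hK.1 hK.2
      rw [lt_div_iff₀ hpos]
      refine lt_of_le_of_lt ?_ h1
      rw [mul_comm]
      refine mul_le_mul_of_nonneg_left ?_ hpos.le
      unfold goodWeight
      rw [← nsmul_eq_mul, ← Finset.sum_const]
      refine le_trans (le_of_eq ?_) (Finset.sum_le_sum_of_subset_of_nonneg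
        (s := Mid.filter (fun χ => cnt χ = K)) ?_ fun _ _ _ => ?_)
      · refine Finset.sum_congr rfl fun χ hχ => ?_
        rw [mem_filter] at hχ
        simp only [hWt, prod_ite_eq_pow]
        rw [show (univ.filter fun t => χ t = true).card = K from hχ.2]
      · intro χ hχ
        simp only [hMid, mem_filter] at hχ
        simp only [goodPatterns, mem_filter]
        exact ⟨hχ.1.1, hχ.2⟩
      · exact mul_nonneg (pow_nonneg hp0.le _) (pow_nonneg (by linarith) _)
    · have : Mid.filter (fun χ => cnt χ = K) = ∅ := by
        rw [Finset.filter_eq_empty_iff]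
        intro χ hχ he
        simp only [hMid, mem_filter] at hχ
        rw [he] at hχ
        exact hK hχ.2
      rw [this, Finset.sum_empty]
      exact div_pos (pow_pos hG M) hpos
  rw [Finset.sum_const, card_range, nsmul_eq_mul] at hlt
  have : ((M * r + 1 : ℕ) : ℝ) * ((1 - p ^ r) ^ M / (2 * (M * r + 1))) = (1 - p ^ r) ^ M / 2 := by
    push_cast; field_simp
  linarith

/-- A set size `k` for which the patterns with `d * k` entries `true` carry a polynomial
fraction of the total weight of good patterns. -/
lemma exists_size (hr : 2 ≤ r) (hd : 0 < d) {p : ℝ} (hp0 : 0 < p) (hp : p ≤ 1 / 2) :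
    ∃ n₀ : ℕ, ∀ n : ℕ, n₀ ≤ n → ∀ M : ℕ, M * r = d * n → ∃ k : ℕ, p - 2 * p ^ r ≤ (k : ℝ) / n ∧ (k : ℝ) / n ≤ p ∧
      (1 - p ^ r) ^ M ≤ 2 * (d * n + 1) * (d * n + 1 : ℝ) ^ d * goodWeight M r p (d * k) := by
  obtain ⟨M₀, hM₀⟩ := exists_goodWeight hr hp0 hp
  have hprpos : 0 < p ^ r := by positivity
  refine ⟨max (M₀ * r) (max 1 ⌈1 / p ^ r⌉₊), fun n hn M hM => ?_⟩
  have hn1 : 1 ≤ n := le_trans (le_trans (le_max_left _ _) (le_max_right _ _)) hn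
  have hn2 : 1 / p ^ r ≤ n := (Nat.le_ceil _).trans
    (by exact_mod_cast le_trans (le_trans (le_max_right _ _) (le_max_right _ _)) hn)
  have hMM : M₀ ≤ M := by
    have h1 : M₀ * r ≤ n := le_trans (le_max_left _ _) hn
    have h2 : M₀ * r ≤ M * r := by rw [hM]; nlinarith
    exact Nat.le_of_mul_le_mul_right h2 (by omega)
  obtain ⟨K, hK1, hK2, hK3⟩ := hM₀ M hMM
  have hMR : (M : ℝ) * r = d * n := by exact_mod_cast hM
  rw [hMR] at hK1 hK2 hK3
  have hnR : (0 : ℝ) < n := by exact_mod_cast hn1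
  have hdR : (0 : ℝ) < d := by exact_mod_cast hd
  have hdm := Nat.div_add_mod K d
  have hml := Nat.mod_lt K hd
  set k := K / d
  set j := K % d
  have hdmR : (d : ℝ) * k + j = K := by exact_mod_cast hdm
  have hjR : (j : ℝ) < d := by exact_mod_cast hml
  have hj0 : (0 : ℝ) ≤ j := Nat.cast_nonneg _
  refine ⟨k, ?_, ?_, ?_⟩
  · rw [le_div_iff₀ hnR]
    have h1 : 1 ≤ p ^ r * n := by rwa [div_le_iff₀ hprpos, mul_comm] at hn2
    have h2 : d * (n * (p - p ^ r)) < d * (k + 1) := by nlinarith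
    have h3 := lt_of_mul_lt_mul_left h2 hdR.le
    nlinarith
  · rw [div_le_iff₀ hnR]
    have : d * (k : ℝ) ≤ d * (p * n) := by nlinarith
    exact le_of_mul_le_mul_left this hdR
  · have hKN : d * k + j ≤ M * r := by
      have : (K : ℝ) ≤ ((M * r : ℕ) : ℝ) := by
        push_cast; rw [hMR]
        have : (0:ℝ) < d * n := by positivity
        nlinarith
      rw [hdm]; exact_mod_cast this
    have h1 := goodWeight_add_le (M := M) (r := r) hp0.le hp j hKN
    rw [hdm, hMR] at h1
    have h0 := goodWeight_nonneg (M := M) (r := r) hp0.le (by linarith) (d * k)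
    have h2 : (d * n : ℝ) ^ j ≤ (d * n + 1 : ℝ) ^ d := by
      calc (d * n : ℝ) ^ j ≤ (d * n + 1 : ℝ) ^ j := pow_le_pow_left₀ (by positivity) (by linarith) _
        _ ≤ _ := pow_le_pow_right₀ (by linarith [mul_pos hdR hnR]) hml.le
    calc (1 - p ^ r) ^ M ≤ 2 * (d * n + 1) * goodWeight M r p K := hK3
      _ ≤ 2 * (d * n + 1) * ((d * n + 1 : ℝ) ^ d * goodWeight M r p (d * k)) := by
        refine mul_le_mul_of_nonneg_left (h1.trans ?_) (by positivity)
        exact mul_le_mul_of_nonneg_right h2 h0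
      _ = _ := by ring

/-- Lower bound for the probability that a given `k`-set is independent; `u` and `v` tilt its density
`k / n` to `p`. -/
lemma card_avoids_ge (hn : 0 < n) (hM : M * r = d * n) {S : Finset (Fin n)} {k : ℕ}
    (hS : S.card = k) (p u v : ℝ) (hu : 0 < u) (hv : 0 < v)
    (hsu : (k : ℝ) / n * u = p) (hsv : (1 - (k : ℝ) / n) * v = 1 - p) :
    (balanced (Fin M × Fin r) n d).card * goodWeight M r p (d * k) ≤
      (((balanced (Fin M × Fin r) n d).filter fun w => Avoids w S).card : ℝ)
        * (u ^ (d * k) * v ^ (d * (n - k))) := by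
  set I := Fin M × Fin r
  set lab : Fin n → Bool := fun x => decide (x ∈ S) with hlab
  have hkn : k ≤ n := by rw [← hS]; simpa using Finset.card_le_univ S
  have hnR : (0 : ℝ) < n := by exact_mod_cast hn
  have c1 : (univ.filter fun x => lab x = true).card = k := by
    rw [← hS]; congr 1; ext x; simp [hlab]
  have c0 : (univ.filter fun x => lab x = false).card = n - k := by
    have : (univ.filter fun v => lab v = false) = Sᶜ := by ext; simp [hlab]
    rw [this, Finset.card_compl, hS]; simp
  set q : Bool → ℝ := fun b => if b = true then (k : ℝ) / n else 1 - k / n with hq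
  have hs1 : (k : ℝ) / n ≤ 1 := by rw [div_le_one hnR]; exact_mod_cast hkn
  have hq0 : ∀ b, 0 ≤ q b := by
    intro b; simp only [hq]; split_ifs
    · positivity
    · linarith
  have h1 := card_pattern_mem (I := I) (d := d) lab (rowPatterns M r (goodRows r))
  have h3 := card_inter_patterns_mul_le (I := I) (d := d) lab (rowPatterns M r univ) q hq0
  have hun : rowPatterns M r (univ : Finset (Fin r → Bool)) = univ := by
    ext; simp [rowPatterns]
  have hs := sum_prod_filter_forall (r := r) (fun _ : Bool => True) q
  simp only [implies_true, Finset.filter_true] at hs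
  have hq1 : ∑ b, q b = 1 := by simp [hq]
  rw [sum_rowPatterns_weight, hs, hq1, one_pow, one_pow, hun, Finset.univ_inter] at h3
  simp only [Fintype.prod_bool, c1, c0] at h3
  have hev : ((balanced I n d).filter fun w => lab ∘ w ∈ rowPatterns M r (goodRows r))
      = (balanced I n d).filter fun w => Avoids w S := by
    refine Finset.filter_congr fun w _ => ?_
    rw [avoids_iff_goodRows]
    simp [rowPatterns, hlab]
  rw [hev] at h1
  have hgp : rowPatterns M r (goodRows r) ∩ patterns I d lab = goodPatterns M r (d * k) := by
    ext χ
    simp only [goodPatterns, mem_inter, mem_filter, patterns, mem_univ, true_and, Bool.forall_bool,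
      c1, c0, and_congr_right_iff]
    intro _
    constructor
    · exact fun h => h.2
    · intro h
      refine ⟨?_, h⟩
      have h5 : (univ.filter fun t => χ t = true).card + (univ.filter fun t => χ t = false).card
          = M * r := by
        have h6 := Finset.card_filter_add_card_filter_not (s := (univ : Finset I))
          (fun t => χ t = true)
        simpa only [card_univ, I, Fintype.card_prod, Fintype.card_fin, Bool.not_eq_true] using h6
      rw [Nat.mul_sub, ← hM, ← h5, h, Nat.add_sub_cancel_left]
  rw [hgp] at h1
  have h1R : (((balanced I n d).filter fun w => Avoids w S).card : ℝ) * (patterns I d lab).card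
      = (goodPatterns M r (d * k)).card * (balanced I n d).card := by exact_mod_cast h1
  set A := (((balanced I n d).filter fun w => Avoids w S).card : ℝ)
  set b := ((balanced I n d).card : ℝ)
  have hU : 0 ≤ u ^ (d * k) * v ^ (d * (n - k)) := by positivity
  unfold goodWeight
  have e : M * r - d * k = d * (n - k) := by rw [hM, Nat.mul_sub]
  rw [e, ← hsv, ← hsu, mul_pow, mul_pow]
  simp only [hq, if_true, Bool.false_eq_true, if_false] at h3
  set Q := ((k : ℝ) / n) ^ (d * k) * (1 - (k : ℝ) / n) ^ (d * (n - k))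
  calc _ = (((goodPatterns M r (d * k)).card * b) * Q) * (u ^ (d * k) * v ^ (d * (n - k))) := by
        simp only [Q]; ring
    _ = A * ((patterns I d lab).card * Q) * (u ^ (d * k) * v ^ (d * (n - k))) := by
        rw [← h1R]; ring
    _ ≤ A * 1 * (u ^ (d * k) * v ^ (d * (n - k))) := by
        gcongr
    _ = _ := by ring
end

/-! ### The overlap of two random sets -/

section
variable {n : ℕ}

lemma card_powersetCard_superset_le (J : Finset (Fin n)) (k : ℕ) :
    (((univ : Finset (Fin n)).powersetCard k).filter fun T => J ⊆ T).card
      ≤ if J.card ≤ k then (n - J.card).choose (k - J.card) else 0 := by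
  split_ifs with h
  · have hc : (Jᶜ.powersetCard (k - J.card)).card = (n - J.card).choose (k - J.card) := by
      rw [card_powersetCard, card_compl, Fintype.card_fin]
    rw [← hc]
    refine Finset.card_le_card_of_injOn (fun T => T \ J) ?_ ?_
    · intro T hT
      simp only [coe_filter, mem_powersetCard, Set.mem_ofPred_eq] at hT
      simp only [mem_coe, mem_powersetCard]
      refine ⟨?_, ?_⟩
      · intro x hx
        exact Finset.mem_compl.2 (Finset.mem_sdiff.1 hx).2
      · rw [Finset.card_sdiff_of_subset hT.2, hT.1.2]
    · intro T hT T' hT' he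
      simp only [coe_filter, mem_powersetCard, Set.mem_ofPred_eq] at hT hT'
      have he' : T \ J = T' \ J := he
      rw [← Finset.sdiff_union_of_subset hT.2, ← Finset.sdiff_union_of_subset hT'.2, he']
  · rw [Nat.le_zero, Finset.card_eq_zero, Finset.filter_eq_empty_iff]
    intro T hT hJ
    rw [mem_powersetCard] at hT
    exact h (hT.2 ▸ Finset.card_le_card hJ)

lemma descFactorial_mul_pow_le {m n : ℕ} (h : m ≤ n) (j : ℕ) :
    m.descFactorial j * n ^ j ≤ n.descFactorial j * m ^ j := by
  induction j with
  | zero => simp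
  | succ j ih =>
    rw [Nat.descFactorial_succ, Nat.descFactorial_succ, pow_succ, pow_succ]
    have h1 : (m - j) * n ≤ (n - j) * m := by
      rw [Nat.sub_mul, Nat.sub_mul, Nat.mul_comm n m]
      exact Nat.sub_le_sub_left (Nat.mul_le_mul_left j h) _
    calc (m - j) * m.descFactorial j * (n ^ j * n)
        = ((m - j) * n) * (m.descFactorial j * n ^ j) := by ring
      _ ≤ ((n - j) * m) * (n.descFactorial j * m ^ j) := Nat.mul_le_mul h1 ih
      _ = _ := by ring

lemma choose_mul_pow_le {m n : ℕ} (h : m ≤ n) (j : ℕ) :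
    m.choose j * n ^ j ≤ n.choose j * m ^ j := by
  have h1 := descFactorial_mul_pow_le h j
  rw [Nat.descFactorial_eq_factorial_mul_choose, Nat.descFactorial_eq_factorial_mul_choose,
    mul_assoc, mul_assoc] at h1
  exact Nat.le_of_mul_le_mul_left h1 (Nat.factorial_pos j)

/-- The hypergeometric moment generating function is at most the binomial one. -/
lemma sum_pow_inter_le (hn : 0 < n) (A : Finset (Fin n)) (k : ℕ) {y : ℝ} (hy : 1 ≤ y) :
    ∑ T ∈ (univ : Finset (Fin n)).powersetCard k, y ^ (T ∩ A).card
      ≤ n.choose k * (1 + (A.card : ℝ) / n * (y - 1)) ^ k := by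
  set z := y - 1 with hz
  have hz0 : 0 ≤ z := by simp [hz, hy]
  set m := A.card with hm
  have hmn : m ≤ n := by simpa using Finset.card_le_univ A
  have hnR : (0 : ℝ) < n := by exact_mod_cast hn
  set x := (m : ℝ) / n * z with hx
  have hx0 : 0 ≤ x := by positivity
  set f : ℕ → ℝ := fun j => (if j ≤ k then ((n - j).choose (k - j) : ℝ) else 0) * z ^ j with hf
  calc ∑ T ∈ (univ : Finset (Fin n)).powersetCard k, y ^ (T ∩ A).card
      = ∑ T ∈ (univ : Finset (Fin n)).powersetCard k, ∑ J ∈ A.powerset,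
          (if J ⊆ T then z ^ J.card else 0) := by
        refine Finset.sum_congr rfl fun T _ => ?_
        have := Finset.sum_pow_mul_eq_add_pow z 1 (T ∩ A)
        simp only [one_pow, mul_one] at this
        rw [show y = z + 1 by simp [hz], ← this, ← Finset.sum_filter]
        refine Finset.sum_congr ?_ fun _ _ => rfl
        ext J
        simp only [mem_powerset, mem_filter, Finset.subset_inter_iff]
        tauto
    _ = ∑ J ∈ A.powerset, ((((univ : Finset (Fin n)).powersetCard k).filter
          fun T => J ⊆ T).card : ℝ) * z ^ J.card := by
        rw [Finset.sum_comm]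
        refine Finset.sum_congr rfl fun J _ => ?_
        rw [← Finset.sum_filter, Finset.sum_const, nsmul_eq_mul]
    _ ≤ ∑ J ∈ A.powerset, f J.card := by
        refine Finset.sum_le_sum fun J _ => ?_
        refine mul_le_mul_of_nonneg_right ?_ (pow_nonneg hz0 _)
        have := (Nat.cast_le (α := ℝ)).2 (card_powersetCard_superset_le J k)
        refine this.trans (le_of_eq ?_)
        split_ifs <;> simp
    _ = ∑ j ∈ range (m + 1), (m.choose j : ℝ) * f j := by
        rw [Finset.sum_powerset_apply_card]
        simp [nsmul_eq_mul, hm]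
    _ ≤ ∑ j ∈ range (m + 1), (n.choose k : ℝ) * (k.choose j * x ^ j) := by
        refine Finset.sum_le_sum fun j _ => ?_
        simp only [hf]
        split_ifs with hjk
        · have h1 : (m.choose j * n ^ j : ℝ) ≤ n.choose j * m ^ j := by
            exact_mod_cast choose_mul_pow_le hmn j
          have h2 : (n.choose j : ℝ) * (n - j).choose (k - j) = n.choose k * k.choose j := by
            exact_mod_cast (Nat.choose_mul hjk).symm
          have h3 : (m.choose j : ℝ) ≤ n.choose j * ((m : ℝ) / n) ^ j := by
            rw [div_pow, ← mul_div_assoc, le_div_iff₀ (pow_pos hnR j)]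
            exact h1
          calc (m.choose j : ℝ) * ((n - j).choose (k - j) * z ^ j)
              ≤ (n.choose j * ((m : ℝ) / n) ^ j) * ((n - j).choose (k - j) * z ^ j) :=
                mul_le_mul_of_nonneg_right h3 (by positivity)
            _ = (n.choose j * (n - j).choose (k - j)) * x ^ j := by rw [hx, mul_pow]; ring
            _ = _ := by rw [h2]; ring
        · simp only [zero_mul, mul_zero]; positivity
    _ ≤ ∑ j ∈ range (k + 1), (n.choose k : ℝ) * (k.choose j * x ^ j) := by
        have : ∑ j ∈ range (k + 1), (n.choose k : ℝ) * (k.choose j * x ^ j)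
            = ∑ j ∈ range (max (m + 1) (k + 1)), (n.choose k : ℝ) * (k.choose j * x ^ j) := by
          refine Finset.sum_subset (Finset.range_mono (le_max_right _ _)) fun j _ hj => ?_
          rw [mem_range, not_lt] at hj
          rw [Nat.choose_eq_zero_of_lt (show k < j by omega)]
          simp
        rw [this]
        exact Finset.sum_le_sum_of_subset_of_nonneg (Finset.range_mono (le_max_left _ _))
          fun _ _ _ => by positivity
    _ = _ := by
        rw [← Finset.mul_sum]
        congr 1
        rw [add_comm 1 x, add_pow]
        refine Finset.sum_congr rfl fun j _ => ?_
        rw [one_pow, mul_one, mul_comm]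

/-- The number of `k`-sets meeting `S` in exactly `l` points. -/
noncomputable def overlapCount (S : Finset (Fin n)) (k l : ℕ) : ℝ :=
  ((((univ : Finset (Fin n)).powersetCard k).filter fun T => (S ∩ T).card = l).card : ℝ)

lemma overlapCount_mul_pow_le (hn : 0 < n) {S : Finset (Fin n)} {k : ℕ} (hS : S.card = k) (l : ℕ)
    {y : ℝ} (hy : 1 ≤ y) :
    overlapCount S k l * y ^ l ≤ n.choose k * Real.exp (k * ((k : ℝ) / n) * (y - 1)) := by
  have h := sum_pow_inter_le hn S k hy
  have h1 : overlapCount S k l * y ^ l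
      ≤ ∑ T ∈ (univ : Finset (Fin n)).powersetCard k, y ^ (T ∩ S).card := by
    unfold overlapCount
    rw [← nsmul_eq_mul, ← Finset.sum_const]
    refine le_trans (le_of_eq ?_) (Finset.sum_le_sum_of_subset_of_nonneg
      (Finset.filter_subset (fun T => (S ∩ T).card = l) _) fun _ _ _ => by positivity)
    refine Finset.sum_congr rfl fun T hT => ?_
    rw [Finset.inter_comm, (mem_filter.1 hT).2]
  refine h1.trans (h.trans ?_)
  rw [hS, mul_assoc, Real.exp_nat_mul]
  have : 0 ≤ (k : ℝ) / n * (y - 1) := mul_nonneg (by positivity) (by linarith)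
  gcongr
  linarith [Real.add_one_le_exp ((k : ℝ) / n * (y - 1))]

/-- Lower tail of the overlap, from the moment generating function of the overlap with `Sᶜ`. -/
lemma overlapCount_le_pow (hn : 0 < n) {S : Finset (Fin n)} {k : ℕ} (hS : S.card = k) {l : ℕ}
    (hl : l ≤ k) {y : ℝ} (hy : 1 ≤ y) :
    overlapCount S k l ≤ n.choose k * Real.exp (-(k * ((k : ℝ) / n) * (1 - 1 / y))) * y ^ l := by
  have h := sum_pow_inter_le hn Sᶜ k hy
  have hkn : k ≤ n := by rw [← hS]; simpa using Finset.card_le_univ S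
  have hnR : (0 : ℝ) < n := by exact_mod_cast hn
  have hy0 : 0 < y := by linarith
  have h1 : overlapCount S k l * y ^ (k - l)
      ≤ ∑ T ∈ (univ : Finset (Fin n)).powersetCard k, y ^ (T ∩ Sᶜ).card := by
    unfold overlapCount
    rw [← nsmul_eq_mul, ← Finset.sum_const]
    refine le_trans (le_of_eq ?_) (Finset.sum_le_sum_of_subset_of_nonneg
      (Finset.filter_subset (fun T => (S ∩ T).card = l) _) fun _ _ _ => by positivity)
    refine Finset.sum_congr rfl fun T hT => ?_
    rw [mem_filter, mem_powersetCard] at hT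
    have h2 : (T ∩ S).card + (T \ S).card = T.card := Finset.card_inter_add_card_sdiff T S
    rw [Finset.inter_comm T S] at h2
    rw [← Finset.sdiff_eq_inter_compl]
    congr 1
    omega
  have h2 := h1.trans h
  have hc : ((Sᶜ.card : ℕ) : ℝ) / n = 1 - (k : ℝ) / n := by
    rw [Finset.card_compl, Fintype.card_fin, hS, Nat.cast_sub hkn, sub_div, div_self hnR.ne']
  rw [hc] at h2
  have hs1 : (k : ℝ) / n ≤ 1 := by rw [div_le_one hnR]; exact_mod_cast hkn
  have h3 : 1 + (1 - (k : ℝ) / n) * (y - 1) ≤ Real.exp (-((k : ℝ) / n * (1 - 1 / y))) * y := by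
    have := Real.add_one_le_exp (-((k : ℝ) / n * (1 - 1 / y)))
    calc 1 + (1 - (k : ℝ) / n) * (y - 1) = (-((k : ℝ) / n * (1 - 1 / y)) + 1) * y := by
          field_simp; ring
      _ ≤ _ := mul_le_mul_of_nonneg_right this hy0.le
  have h4 : 0 ≤ 1 + (1 - (k : ℝ) / n) * (y - 1) := by
    have := mul_nonneg (sub_nonneg.2 hs1) (sub_nonneg.2 hy)
    linarith
  have h5 : overlapCount S k l * y ^ (k - l)
      ≤ n.choose k * (Real.exp (-((k : ℝ) / n * (1 - 1 / y))) * y) ^ k :=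
    h2.trans (mul_le_mul_of_nonneg_left (pow_le_pow_left₀ h4 h3 k) (by positivity))
  have h6 : y ^ k = y ^ l * y ^ (k - l) := by rw [← pow_add]; congr 1; omega
  rw [mul_pow, h6, ← Real.exp_nat_mul] at h5
  refine le_of_mul_le_mul_right (h5.trans (le_of_eq ?_)) (pow_pos hy0 (k - l))
  rw [show (k : ℝ) * -((k : ℝ) / n * (1 - 1 / y)) = -(k * ((k : ℝ) / n) * (1 - 1 / y)) by ring]
  ring

/-- Overlaps at distance `|l - μ|` from their mean `μ` are exponentially unlikely. -/
lemma overlapCount_near (hn : 0 < n) {S : Finset (Fin n)} {k : ℕ} (hS : S.card = k) {l : ℕ}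
    (hl : l ≤ k) {θ : ℝ} (h0 : 0 ≤ θ) (h1 : θ ≤ 1) :
    overlapCount S k l * Real.exp (θ * |(l : ℝ) - k * ((k : ℝ) / n)|)
      ≤ n.choose k * Real.exp (k * ((k : ℝ) / n) * θ ^ 2) := by
  have hy : 1 ≤ Real.exp θ := Real.one_le_exp h0
  set μ := (k : ℝ) * ((k : ℝ) / n) with hμ
  have hμ0 : 0 ≤ μ := by positivity
  have ha := abs_le.1 (Real.abs_exp_sub_one_sub_id_le (x := θ) (by rwa [abs_of_nonneg h0]))
  have hb := abs_le.1 (Real.abs_exp_sub_one_sub_id_le (x := -θ) (by rwa [abs_neg, abs_of_nonneg h0]))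
  rcases le_total μ l with h | h
  · have h2 := overlapCount_mul_pow_le hn hS l hy
    rw [← hμ, ← Real.exp_nat_mul] at h2
    rw [abs_of_nonneg (by linarith), show θ * ((l : ℝ) - μ) = l * θ + (-(μ * θ)) by ring,
      Real.exp_add, ← mul_assoc]
    refine (mul_le_mul_of_nonneg_right h2 (Real.exp_pos _).le).trans ?_
    rw [mul_assoc, ← Real.exp_add]
    refine mul_le_mul_of_nonneg_left (Real.exp_le_exp.2 ?_) (by positivity)
    nlinarith
  · have h2 := overlapCount_le_pow hn hS hl hy
    rw [← hμ, ← Real.exp_nat_mul, one_div, ← Real.exp_neg] at h2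
    refine (mul_le_mul_of_nonneg_right h2 (Real.exp_pos _).le).trans ?_
    rw [mul_assoc, mul_assoc, ← Real.exp_add, ← Real.exp_add]
    refine mul_le_mul_of_nonneg_left (Real.exp_le_exp.2 ?_) (by positivity)
    rw [abs_of_nonpos (by linarith)]
    nlinarith

/-- Chernoff bound for overlaps above the mean. -/
lemma overlapCount_far (hn : 0 < n) {S : Finset (Fin n)} {k : ℕ} (hS : S.card = k) {l : ℕ}
    (hk : 0 < k) (hl : (k : ℝ) * ((k : ℝ) / n) ≤ l) :
    overlapCount S k l * Real.exp (l * (Real.log (l / (k * ((k : ℝ) / n))) - 1)) ≤ n.choose k := by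
  set μ := (k : ℝ) * ((k : ℝ) / n) with hμ
  have hnR : (0 : ℝ) < n := by exact_mod_cast hn
  have hkR : (0 : ℝ) < k := by exact_mod_cast hk
  have hμ0 : 0 < μ := by positivity
  have hy : 1 ≤ l / μ := by rwa [one_le_div hμ0]
  have h2 := overlapCount_mul_pow_le hn hS l hy
  rw [← hμ] at h2
  have h3 : Real.exp (l * (Real.log (l / μ) - 1)) = (l / μ) ^ l * Real.exp (-l) := by
    rw [mul_sub, sub_eq_add_neg, Real.exp_add, Real.exp_nat_mul, Real.exp_log (by linarith), mul_one]
  rw [h3, ← mul_assoc]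
  refine (mul_le_mul_of_nonneg_right h2 (Real.exp_pos _).le).trans ?_
  rw [mul_assoc, ← Real.exp_add]
  have : μ * (l / μ - 1) + -(l : ℝ) ≤ 0 := by
    have : μ * (l / μ - 1) = l - μ := by field_simp
    linarith
  exact mul_le_of_le_one_right (by positivity) (Real.exp_le_one_iff.2 this)
end

/-! ### Estimates for the pair weight -/

/-- The weight of a single row under the tilted pair distribution, in terms of the deviation `Δ`
of the overlap density from its mean. -/
def pairPoly (r : ℕ) (p u β Δ : ℝ) : ℝ :=
  (1 + Δ * β ^ 2) ^ r - 2 * (p + u * Δ * β) ^ r + (p ^ 2 + Δ * u ^ 2) ^ r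

lemma pairPoly_eq_sum (r : ℕ) (p u β Δ : ℝ) :
    pairPoly r p u β Δ
      = ∑ j ∈ range (r + 1), (r.choose j : ℝ) * Δ ^ j * (β ^ j - p ^ (r - j) * u ^ j) ^ 2 := by
  unfold pairPoly
  rw [add_comm 1, add_pow, add_comm p, add_pow, add_comm (p ^ 2), add_pow, Finset.mul_sum,
    ← Finset.sum_sub_distrib, ← Finset.sum_add_distrib]
  refine Finset.sum_congr rfl fun j _ => ?_
  rw [one_pow, mul_pow, mul_pow, mul_pow, mul_pow, ← pow_mul, ← pow_mul, ← pow_mul]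
  ring

/-- The expansion in powers of `Δ` starts with `(1 - p ^ r) ^ 2`; the smallness of `β` makes the
coefficient of `Δ` of order `p ^ (2 q)`. -/
lemma pairPoly_le_near {q : ℕ} {p u β : ℝ} (Δ : ℝ) (hp0 : 0 ≤ p) (hp1 : p ≤ 1) (hu0 : 0 ≤ u)
    (hu : u ≤ 8) (hβ0 : 0 ≤ β) (hβ : β ≤ 8 * p ^ q) :
    pairPoly (q + 1) p u β Δ
      ≤ (1 - p ^ (q + 1)) ^ 2 + ((p ^ 2 + 64 * |Δ|) ^ (q + 1) - (p ^ 2) ^ (q + 1)) := by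
  rw [pairPoly_eq_sum, add_comm (p ^ 2), add_pow, Finset.sum_range_succ' _ (q + 1),
    Finset.sum_range_succ' (fun m => (64 * |Δ|) ^ m * _ * _) (q + 1)]
  simp only [pow_zero, Nat.choose_zero_right, Nat.cast_one, one_mul, mul_one, Nat.sub_zero]
  have key : ∀ j ∈ range (q + 1), ((q + 1).choose (j + 1) : ℝ) * Δ ^ (j + 1) *
        (β ^ (j + 1) - p ^ (q + 1 - (j + 1)) * u ^ (j + 1)) ^ 2
      ≤ (64 * |Δ|) ^ (j + 1) * (p ^ 2) ^ (q + 1 - (j + 1)) * ((q + 1).choose (j + 1) : ℝ) := by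
    intro j hj
    have hj' : j ≤ q := by rw [mem_range] at hj; omega
    have e : q + 1 - (j + 1) = q - j := by omega
    rw [e]
    have b1 : β ^ (j + 1) ≤ 8 ^ (j + 1) * p ^ (q - j) := by
      calc β ^ (j + 1) ≤ (8 * p ^ q) ^ (j + 1) := pow_le_pow_left₀ hβ0 hβ _
        _ = 8 ^ (j + 1) * p ^ (q * (j + 1)) := by rw [mul_pow, ← pow_mul]
        _ ≤ _ := by
          refine mul_le_mul_of_nonneg_left (pow_le_pow_of_le_one hp0 hp1 ?_) (by positivity)
          calc q - j ≤ q := Nat.sub_le _ _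
            _ ≤ q * (j + 1) := Nat.le_mul_of_pos_right _ (Nat.succ_pos j)
    have b2 : p ^ (q - j) * u ^ (j + 1) ≤ 8 ^ (j + 1) * p ^ (q - j) := by
      rw [mul_comm]
      exact mul_le_mul_of_nonneg_right (pow_le_pow_left₀ hu0 hu _) (by positivity)
    have b3 : (β ^ (j + 1) - p ^ (q - j) * u ^ (j + 1)) ^ 2 ≤ (8 ^ (j + 1) * p ^ (q - j)) ^ 2 := by
      refine sq_le_sq' ?_ ?_
      · have : 0 ≤ β ^ (j + 1) := by positivity
        linarith
      · have : 0 ≤ p ^ (q - j) * u ^ (j + 1) := by positivity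
        linarith
    calc _ ≤ ((q + 1).choose (j + 1) : ℝ) * |Δ| ^ (j + 1) * (8 ^ (j + 1) * p ^ (q - j)) ^ 2 := by
          refine mul_le_mul (mul_le_mul_of_nonneg_left ?_ (by positivity)) b3 (by positivity)
            (by positivity)
          rw [← abs_pow]; exact le_abs_self _
      _ = _ := by
          have : (64 : ℝ) ^ (j + 1) = (8 ^ (j + 1)) ^ 2 := by
            rw [← pow_mul, mul_comm, pow_mul]; norm_num
          rw [mul_pow 64, this]
          ring
  have := Finset.sum_le_sum key
  linarith

/-- The bound used for large overlaps, where `a = Δ + p ^ 2 / u ^ 2` is the overlap density. -/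
lemma pairPoly_le_far {r : ℕ} {p u β Δ a : ℝ} (hp0 : 0 ≤ p) (hu0 : 0 ≤ u) (hβ0 : 0 ≤ β)
    (hΔ : 0 ≤ Δ) (ha : Δ ≤ a) (hpa : p ^ 2 + Δ * u ^ 2 = a * u ^ 2) :
    pairPoly r p u β Δ
      ≤ (1 - p ^ r) ^ 2 + ((1 + a * β ^ 2) ^ r - 1 + (a * u ^ 2) ^ r) := by
  unfold pairPoly
  rw [hpa]
  have h1 : (1 + Δ * β ^ 2) ^ r ≤ (1 + a * β ^ 2) ^ r := by gcongr
  have h2 : p ^ r ≤ (p + u * Δ * β) ^ r :=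
    pow_le_pow_left₀ hp0 (le_add_of_nonneg_right (by positivity)) r
  have h3 : (0 : ℝ) ≤ p ^ r * p ^ r := by positivity
  nlinarith

lemma pairPoly_nonneg {r : ℕ} (hr : 0 < r) {p u β Δ a : ℝ} (hp0 : 0 ≤ p) (hu0 : 0 ≤ u)
    (hβ0 : 0 ≤ β) (ha : 0 ≤ a) (hpa : p ^ 2 + Δ * u ^ 2 = a * u ^ 2)
    (hΔ : -(p ^ 2) ≤ Δ) (hp1 : u * p * β ≤ 1) (hrp : r * (p ^ 2 * β ^ 2) ≤ 1 / 2)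
    (hβ1 : p ^ 2 * β ^ 2 ≤ 1) (hp4 : p ≤ 1 / 4) : 0 ≤ pairPoly r p u β Δ := by
  rcases le_total 0 Δ with h | h
  · rw [pairPoly_eq_sum]
    exact Finset.sum_nonneg fun j _ => by positivity
  · unfold pairPoly
    rw [hpa]
    have hβ2 : 0 ≤ β ^ 2 := by positivity
    have h0 : -(p ^ 2 * β ^ 2) ≤ Δ * β ^ 2 := by nlinarith
    have h1 : 1 + (r : ℝ) * (Δ * β ^ 2) ≤ (1 + Δ * β ^ 2) ^ r :=
      one_add_mul_le_pow (by linarith) r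
    have h2 : (p + u * Δ * β) ^ r ≤ p ^ r := by
      refine pow_le_pow_left₀ ?_ ?_ r
      · have : 0 ≤ u * β := by positivity
        nlinarith
      · have : u * Δ * β ≤ 0 := by
          have : 0 ≤ u * β := by positivity
          nlinarith
        linarith
    have h3 : p ^ r ≤ p := pow_le_of_le_one hp0 (by linarith) hr.ne'
    have h4 : 0 ≤ (a * u ^ 2) ^ r := by positivity
    have h5 : -(r * (p ^ 2 * β ^ 2)) ≤ r * (Δ * β ^ 2) := by
      have : (0 : ℝ) ≤ r := by positivity
      nlinarith
    linarith

lemma pow_sub_pow_le {x y : ℝ} (hy : 0 ≤ y) (hyx : y ≤ x) (q : ℕ) :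
    x ^ (q + 1) - y ^ (q + 1) ≤ (q + 1) * (x - y) * x ^ q := by
  induction q with
  | zero => simp
  | succ q ih =>
    have h1 : y ^ (q + 1) ≤ x ^ (q + 1) := pow_le_pow_left₀ hy hyx _
    have h2 := mul_le_mul_of_nonneg_left ih (hy.trans hyx)
    have h3 := mul_le_mul_of_nonneg_left h1 (sub_nonneg.2 hyx)
    calc x ^ (q + 1 + 1) - y ^ (q + 1 + 1)
        = x * (x ^ (q + 1) - y ^ (q + 1)) + (x - y) * y ^ (q + 1) := by ring
      _ ≤ x * ((q + 1) * (x - y) * x ^ q) + (x - y) * x ^ (q + 1) := by linarith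
      _ = _ := by push_cast; ring

/-- Elementary bounds for the tilting parameters `u = p / s` and `v = (1 - p) / (1 - s)`. -/
lemma tilt_bounds {q : ℕ} (hq : 1 ≤ q) {p s : ℝ} (hp0 : 0 < p) (hp : 1000 * (q + 1) * p ≤ 1)
    (hs1 : p - 2 * p ^ (q + 1) ≤ s) (hs2 : s ≤ p) :
    p / 2 ≤ s ∧ 1 ≤ p / s ∧ p / s ≤ Real.exp (4 * p) ∧ p / s ≤ 2 ∧
      0 ≤ p / s - (1 - p) / (1 - s) ∧ p / s - (1 - p) / (1 - s) ≤ 8 * p ^ q := by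
  have hqR : (1 : ℝ) ≤ q := by exact_mod_cast hq
  have hp1 : p ≤ 1 / 2000 := by nlinarith
  have hpq : p ^ q ≤ p := pow_le_of_le_one hp0.le (by linarith) (by omega)
  have hpq0 : 0 < p ^ q := by positivity
  have hs3 : p * (1 - 2 * p ^ q) ≤ s := by rw [pow_succ] at hs1; linarith
  have hs4 : p * (1 - 2 * p) ≤ s := by nlinarith
  have hsh : p / 2 ≤ s := by nlinarith
  have hs0 : 0 < s := by linarith
  have hs5 : 0 < 1 - s := by linarith
  have hβ : p / s - (1 - p) / (1 - s) = (p - s) / (s * (1 - s)) := by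
    field_simp; ring
  have hss : p / 4 ≤ s * (1 - s) := by nlinarith
  refine ⟨hsh, (one_le_div hs0).2 hs2, ?_, ?_, ?_, ?_⟩
  · rw [div_le_iff₀ hs0]
    have h1 := Real.add_one_le_exp (4 * p)
    calc p ≤ (4 * p + 1) * (p * (1 - 2 * p)) := by nlinarith
      _ ≤ (4 * p + 1) * s := by nlinarith
      _ ≤ _ := by nlinarith
  · rw [div_le_iff₀ hs0]; linarith
  · rw [hβ]; exact div_nonneg (by linarith) (by positivity)
  · rw [hβ, div_le_iff₀ (by positivity)]
    have h1 : p - s ≤ 2 * (p ^ q * p) := by rw [pow_succ] at hs1; linarith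
    nlinarith

/-- A tangent-free form of concavity of the logarithm: an affine function lying below `log` at
the end points of an interval lies below it throughout. -/
lemma log_ge_of_endpoints {x₀ x A c : ℝ} (h0 : 0 < x₀) (hx : x₀ ≤ x) (hx1 : x ≤ 1)
    (e0 : A + c * x₀ ≤ Real.log x₀) (e1 : A + c ≤ 0) : A + c * x ≤ Real.log x := by
  rcases eq_or_lt_of_le (hx.trans hx1) with h | h
  · have : x = 1 := by linarith
    rw [this]; simpa using e1
  set t := (x - x₀) / (1 - x₀) with ht
  have h1 : 0 < 1 - x₀ := by linarith
  have ht0 : 0 ≤ t := div_nonneg (by linarith) h1.le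
  have ht1 : t ≤ 1 := by rw [ht, div_le_one h1]; linarith
  have hxe : (1 - t) * x₀ + t * 1 = x := by rw [ht]; field_simp; ring
  have hc := strictConcaveOn_log_Ioi.concaveOn.2 (show x₀ ∈ Set.Ioi (0 : ℝ) from h0)
    (show (1 : ℝ) ∈ Set.Ioi (0 : ℝ) from Set.mem_Ioi.2 one_pos) (sub_nonneg.2 ht1) ht0 (by ring)
  simp only [smul_eq_mul, hxe, Real.log_one, mul_zero, add_zero] at hc
  have := mul_le_mul_of_nonneg_left e0 (sub_nonneg.2 ht1)
  have := mul_nonpos_of_nonneg_of_nonpos ht0 e1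
  rw [← hxe] at hc ⊢
  nlinarith

lemma pow_le_mul_exp {P G X : ℝ} (hP : 0 ≤ P) (hG : 0 < G) (h : P ≤ G + X) (M : ℕ) :
    P ^ M ≤ G ^ M * Real.exp (M * (X / G)) := by
  rw [Real.exp_nat_mul, ← mul_pow]
  refine pow_le_pow_left₀ hP (h.trans ?_) M
  have := mul_le_mul_of_nonneg_left (Real.add_one_le_exp (X / G)) hG.le
  calc G + X = G * (X / G + 1) := by field_simp; ring
    _ ≤ _ := this

lemma div_le_two_mul {X Z G : ℝ} (h : X ≤ Z) (hZ : 0 ≤ Z) (hG : 1 / 2 ≤ G) : X / G ≤ 2 * Z := by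
  rw [div_le_iff₀ (by linarith)]
  linarith [mul_nonneg hZ (sub_nonneg.2 hG)]

set_option maxHeartbeats 1600000 in
/-- For every overlap `l` the number of `k`-sets with that overlap compensates the growth of the
pair weight, up to a factor `exp (μ θ ^ 2)` where `μ` is the mean overlap. Overlaps up to `10 μ`
are controlled by the quadratic expansion of the pair weight around the mean, and larger ones by
concavity of the logarithm on `[10 s, 1]` as a function of `l / k`. -/
lemma overlap_pointwise {n d M q k l : ℕ} (hq : 1 ≤ q) (hn : 0 < n) (hM : M * (q + 1) = d * n)
    {S : Finset (Fin n)} (hS : S.card = k) (hl : l ≤ k) {p θ c : ℝ} (hp0 : 0 < p)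
    (hp : 1000 * (q + 1) * p ≤ 1) (hs1 : p - 2 * p ^ (q + 1) ≤ (k : ℝ) / n)
    (hs2 : (k : ℝ) / n ≤ p) (hθ : 128 * 577 ^ q * d * p ^ (2 * q) ≤ θ) (hθ1 : θ ≤ 1 / 10)
    (hc : (d : ℝ) / (q + 1) * p ^ q * Real.exp (16 * (q + 1) * p) ≤ c)
    (hc1 : 10 * c * p ≤ 1 / 2) (hc2 : c + 11 / 10 + Real.log p ≤ 0) :
    overlapCount S k l *
      pairPoly (q + 1) p (p / (k / n)) (p / (k / n) - (1 - p) / (1 - k / n)) (l / n - (k / n) ^ 2) ^ M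
      ≤ n.choose k * ((1 - p ^ (q + 1)) ^ 2) ^ M * Real.exp (k * ((k : ℝ) / n) * θ ^ 2) := by
  obtain ⟨hsh, hu1, hue, hu2, hβ0, hβ⟩ := tilt_bounds hq hp0 hp hs1 hs2
  have hnR : (0 : ℝ) < n := by exact_mod_cast hn
  have hqR : (1 : ℝ) ≤ q := by exact_mod_cast hq
  have hMR : (M : ℝ) * (q + 1) = d * n := by exact_mod_cast hM
  have hlR : (l : ℝ) ≤ k := by exact_mod_cast hl
  have hp1 : p ≤ 1 / 2000 := by nlinarith
  set s := (k : ℝ) / n with hs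
  have hs0 : 0 < s := by linarith
  have hkR : (k : ℝ) = s * n := by rw [hs]; field_simp
  have hk0 : (0 : ℝ) < k := by rw [hkR]; positivity
  have hk : 0 < k := by exact_mod_cast hk0
  set u := p / s with hu
  set β := u - (1 - p) / (1 - s) with hβd
  set a := (l : ℝ) / n with ha
  have hla : (l : ℝ) = a * n := by rw [ha]; field_simp
  have ha0 : 0 ≤ a := by positivity
  have has : a ≤ s := by rw [ha, hs]; gcongr
  have hsu : s * u = p := by rw [hu]; field_simp
  set Δ := a - s ^ 2 with hΔ
  have hpa : p ^ 2 + Δ * u ^ 2 = a * u ^ 2 := by rw [hΔ, ← hsu]; ring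
  have hpq : p ^ q ≤ p := pow_le_of_le_one hp0.le (by linarith) (by omega)
  have hpq0 : 0 < p ^ q := by positivity
  have hpr : p ^ (q + 1) ≤ p := pow_le_of_le_one hp0.le (by linarith) (by omega)
  have hβp : β ≤ 8 * p := by linarith
  have hu0 : 0 ≤ u := by linarith
  have hpβ : p * β ≤ p / 100 := by
    have := mul_le_mul_of_nonneg_left (show β ≤ 1 / 100 by linarith) hp0.le
    linarith
  have hpβ0 : 0 ≤ p * β := by positivity
  have hpβ2 : p ^ 2 * β ^ 2 ≤ p := by
    calc p ^ 2 * β ^ 2 = (p * β) * (p * β) := by ring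
      _ ≤ p * 1 := by
        refine mul_le_mul ?_ ?_ hpβ0 hp0.le <;> linarith
      _ = p := mul_one p
  have hP0 : 0 ≤ pairPoly (q + 1) p u β Δ := by
    refine pairPoly_nonneg (by omega) hp0.le hu0 hβ0 ha0 hpa ?_ ?_ ?_ ?_ (by linarith)
    · have : s ^ 2 ≤ p ^ 2 := pow_le_pow_left₀ hs0.le hs2 2
      linarith
    · rw [mul_assoc]
      calc u * (p * β) ≤ 2 * (p / 100) := mul_le_mul hu2 hpβ hpβ0 (by norm_num)
        _ ≤ 1 := by linarith
    · push_cast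
      have h2 : ((q : ℝ) + 1) * (p ^ 2 * β ^ 2) ≤ (q + 1) * p :=
        mul_le_mul_of_nonneg_left hpβ2 (by linarith)
      linarith
    · linarith
  set G := (1 - p ^ (q + 1)) ^ 2 with hG
  have hG2 : 1 / 2 ≤ G := by rw [hG, sub_sq]; linarith [sq_nonneg (p ^ (q + 1))]
  have hG0 : 0 < G := by linarith
  set μ := (k : ℝ) * s with hμ
  have hμn : μ = s ^ 2 * n := by rw [hμ, hkR]; ring
  have hh0 : 0 ≤ overlapCount S k l := Nat.cast_nonneg _
  have hlμ : (l : ℝ) - μ = n * Δ := by rw [hla, hμn, hΔ]; ring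
  have hp2q : p ^ (2 * q) = (p ^ q) ^ 2 := by rw [← pow_mul, mul_comm]
  have hθ0 : 0 ≤ θ := le_trans (by positivity) hθ
  rcases le_or_gt (l : ℝ) (10 * μ) with hnear | hfar
  -- `577 = 1 + 64 * 9`: here `|Δ| ≤ 9 p ^ 2`, so that `p ^ 2 + 64 |Δ| ≤ 577 p ^ 2`.
  · have hΔ9 : |Δ| ≤ 9 * p ^ 2 := by
      have h1 : s ^ 2 ≤ p ^ 2 := pow_le_pow_left₀ hs0.le hs2 2
      have h2 : a ≤ 10 * s ^ 2 := by
        rw [hla, hμn, ← mul_assoc] at hnear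
        exact le_of_mul_le_mul_right hnear hnR
      rw [abs_le]; constructor <;> linarith [sq_nonneg s]
    have hX := pairPoly_le_near Δ hp0.le (by linarith) hu0 (by linarith) hβ0 hβ
    set X := (p ^ 2 + 64 * |Δ|) ^ (q + 1) - (p ^ 2) ^ (q + 1) with hXd
    have hXle : X ≤ (q + 1) * (64 * |Δ|) * (577 ^ q * p ^ (2 * q)) := by
      have h1 := pow_sub_pow_le (x := p ^ 2 + 64 * |Δ|) (y := p ^ 2) (by positivity)
        (by linarith [abs_nonneg Δ]) q
      refine h1.trans ?_
      rw [add_sub_cancel_left]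
      refine mul_le_mul_of_nonneg_left ?_ (by positivity)
      rw [pow_mul, ← mul_pow]
      exact pow_le_pow_left₀ (by positivity) (by linarith) q
    have h2 := pow_le_mul_exp hP0 hG0 hX M
    have h3 : M * (X / G) ≤ θ * |(l : ℝ) - μ| := by
      rw [hlμ, abs_mul, abs_of_pos hnR]
      have hZ : 0 ≤ (q + 1) * (64 * |Δ|) * (577 ^ q * p ^ (2 * q)) := by positivity
      have h4 : X / G ≤ 2 * ((q + 1) * (64 * |Δ|) * (577 ^ q * p ^ (2 * q))) := by
        exact div_le_two_mul hXle hZ hG2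
      calc M * (X / G) ≤ M * (2 * ((q + 1) * (64 * |Δ|) * (577 ^ q * p ^ (2 * q)))) :=
            mul_le_mul_of_nonneg_left h4 (by positivity)
        _ = (M * (q + 1)) * (128 * 577 ^ q * p ^ (2 * q) * |Δ|) := by ring
        _ = (128 * 577 ^ q * d * p ^ (2 * q)) * (n * |Δ|) := by rw [hMR]; ring
        _ ≤ _ := mul_le_mul_of_nonneg_right hθ (by positivity)
    have h5 := overlapCount_near hn hS hl hθ0 (by linarith)
    calc overlapCount S k l * pairPoly (q + 1) p u β Δ ^ M
        ≤ overlapCount S k l * (G ^ M * Real.exp (θ * |(l : ℝ) - μ|)) := by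
          refine mul_le_mul_of_nonneg_left (h2.trans ?_) hh0
          exact mul_le_mul_of_nonneg_left (Real.exp_le_exp.2 h3) (by positivity)
      _ = G ^ M * (overlapCount S k l * Real.exp (θ * |(l : ℝ) - μ|)) := by ring
      _ ≤ G ^ M * (n.choose k * Real.exp (μ * θ ^ 2)) :=
          mul_le_mul_of_nonneg_left h5 (by positivity)
      _ = _ := by ring
  -- Large overlaps: the Chernoff bound has to beat the growth of the pair weight.
  · have hμ0 : 0 < μ := by positivity
    have hl0 : (0 : ℝ) < l := by linarith
    have hΔ0 : 0 ≤ Δ := by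
      have : 0 ≤ n * Δ := by linarith
      exact nonneg_of_mul_nonneg_right this hnR
    have hX := pairPoly_le_far (r := q + 1) (a := a) hp0.le hu0 hβ0 hΔ0
      (by rw [hΔ]; linarith [sq_nonneg s]) hpa
    set X := (1 + a * β ^ 2) ^ (q + 1) - 1 + (a * u ^ 2) ^ (q + 1) with hXd
    have h2 := pow_le_mul_exp hP0 hG0 hX M
    set lam := (l : ℝ) / k with hlam
    have hlam0 : 0 < lam := by positivity
    have hlam1 : lam ≤ 1 := by rw [hlam, div_le_one hk0]; exact hlR
    have halam : a = lam * s := by rw [ha, hlam, hkR]; field_simp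
    have hX1 : (1 + a * β ^ 2) ^ (q + 1) - 1 ≤ (q + 1) * (a * (64 * p ^ (2 * q))) * 2 ^ q := by
      have hβ2 : β ^ 2 ≤ 64 * p ^ (2 * q) := by
        rw [hp2q]
        calc β ^ 2 ≤ (8 * p ^ q) ^ 2 := pow_le_pow_left₀ hβ0 hβ 2
          _ = _ := by ring
      have haβ : a * β ^ 2 ≤ 1 := by
        have : β ^ 2 ≤ 1 := pow_le_one₀ hβ0 (by linarith)
        exact mul_le_one₀ (by linarith) (by positivity) this
      have haβ0 : 0 ≤ a * β ^ 2 := by positivity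
      have h1 := pow_sub_pow_le (x := 1 + a * β ^ 2) (y := 1) (by norm_num)
        (by linarith) q
      rw [one_pow, add_sub_cancel_left] at h1
      refine h1.trans ?_
      gcongr
      linarith
    have hX2 : (a * u ^ 2) ^ (q + 1) ≤ a * lam * p ^ q * u ^ (q + 2) := by
      have e : a * u ^ 2 = lam * (p * u) := by rw [halam, ← hsu]; ring
      calc (a * u ^ 2) ^ (q + 1) = (lam * (p * u)) ^ q * (a * u ^ 2) := by rw [pow_succ, e]
        _ = lam ^ q * (p ^ q * u ^ q) * (a * u ^ 2) := by rw [mul_pow, mul_pow]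
        _ ≤ lam * (p ^ q * u ^ q) * (a * u ^ 2) := by
          have : lam ^ q ≤ lam := pow_le_of_le_one hlam0.le hlam1 (by omega)
          gcongr
        _ = _ := by ring
    have hGe : 1 ≤ G * Real.exp (4 * p) := by
      have h1 := Real.add_one_le_exp (2 * p)
      have h3 : 1 ≤ (1 - p ^ (q + 1)) * Real.exp (2 * p) := by
        have : 1 ≤ (1 - p) * (2 * p + 1) := by
          linarith [mul_nonneg hp0.le (show 0 ≤ 1 - 2 * p by linarith)]
        refine this.trans (mul_le_mul (by linarith) h1 (by linarith) (by linarith))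
      have h4 : Real.exp (4 * p) = Real.exp (2 * p) ^ 2 := by
        rw [← Real.exp_nat_mul]; congr 1; push_cast; ring
      rw [hG, h4, ← mul_pow]
      exact one_le_pow₀ h3
    have h3 : M * (X / G) ≤ l * (1 / 10 + c * lam) := by
      have t1 : M * (((1 + a * β ^ 2) ^ (q + 1) - 1) / G) ≤ l * (1 / 10) := by
        have hZ : 0 ≤ (q + 1) * (a * (64 * p ^ (2 * q))) * 2 ^ q := by positivity
        have h4 : ((1 + a * β ^ 2) ^ (q + 1) - 1) / G
            ≤ 2 * ((q + 1) * (a * (64 * p ^ (2 * q))) * 2 ^ q) := by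
          exact div_le_two_mul hX1 hZ hG2
        calc _ ≤ M * (2 * ((q + 1) * (a * (64 * p ^ (2 * q))) * 2 ^ q)) :=
              mul_le_mul_of_nonneg_left h4 (by positivity)
          _ = (M * (q + 1)) * (128 * 2 ^ q * p ^ (2 * q) * a) := by ring
          _ = (128 * 2 ^ q * d * p ^ (2 * q)) * l := by rw [hMR, hla]; ring
          _ ≤ (128 * 577 ^ q * d * p ^ (2 * q)) * l := by gcongr; norm_num
          _ ≤ (1 / 10) * l := by gcongr; linarith
          _ = _ := mul_comm _ _
      have t2 : M * ((a * u ^ 2) ^ (q + 1) / G) ≤ l * (c * lam) := by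
        have h4 : (a * u ^ 2) ^ (q + 1) / G
            ≤ a * lam * p ^ q * Real.exp (16 * (q + 1) * p) := by
          rw [div_le_iff₀ hG0]
          refine hX2.trans ?_
          have h5 : u ^ (q + 2) ≤ Real.exp (16 * (q + 1) * p) * G := by
            calc u ^ (q + 2) ≤ Real.exp (4 * p) ^ (q + 2) := pow_le_pow_left₀ hu0 hue _
              _ = Real.exp ((q + 2) * (4 * p)) := by
                rw [← Real.exp_nat_mul]; push_cast; rfl
              _ ≤ Real.exp ((q + 2) * (4 * p)) * (G * Real.exp (4 * p)) :=
                le_mul_of_one_le_right (Real.exp_pos _).le hGe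
              _ = Real.exp ((q + 2) * (4 * p) + 4 * p) * G := by rw [Real.exp_add]; ring
              _ ≤ _ := by
                refine mul_le_mul_of_nonneg_right (Real.exp_le_exp.2 ?_) hG0.le
                linarith [mul_nonneg (show (0 : ℝ) ≤ q by linarith) hp0.le]
          calc a * lam * p ^ q * u ^ (q + 2)
              ≤ a * lam * p ^ q * (Real.exp (16 * (q + 1) * p) * G) :=
                mul_le_mul_of_nonneg_left h5 (by positivity)
            _ = _ := by ring
        have hMa : M * a = d / (q + 1) * l := by
          have : (M : ℝ) = d * n / (q + 1) := by
            rw [eq_div_iff (by linarith)]; exact hMR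
          rw [this, ha]; field_simp
        calc _ ≤ M * (a * lam * p ^ q * Real.exp (16 * (q + 1) * p)) :=
              mul_le_mul_of_nonneg_left h4 (by positivity)
          _ = (M * a) * (lam * (p ^ q * Real.exp (16 * (q + 1) * p))) := by ring
          _ = (d / (q + 1) * p ^ q * Real.exp (16 * (q + 1) * p)) * (l * lam) := by
              rw [hMa]; ring
          _ ≤ c * (l * lam) := mul_le_mul_of_nonneg_right hc (by positivity)
          _ = _ := by ring
      calc M * (X / G) = M * (((1 + a * β ^ 2) ^ (q + 1) - 1) / G)
            + M * ((a * u ^ 2) ^ (q + 1) / G) := by rw [hXd]; ring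
        _ ≤ _ := by linarith
    have hc0 : 0 ≤ c := le_trans (by positivity) hc
    have hlog : 1 / 10 + c * lam ≤ Real.log (l / μ) - 1 := by
      have h10 : 8 / 5 ≤ Real.log 10 := by
        have h8 : Real.log 8 = 3 * Real.log 2 := by
          rw [show (8 : ℝ) = 2 ^ 3 by norm_num, Real.log_pow]; norm_num
        have := Real.log_le_log (by norm_num) (show (8 : ℝ) ≤ 10 by norm_num)
        linarith [Real.log_two_gt_d9]
      have hx0 : 10 * s ≤ lam := by
        rw [hlam, le_div_iff₀ hk0]
        rw [hμ] at hfar; linarith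
      have hls : Real.log s ≤ Real.log p := Real.log_le_log hs0 hs2
      have := log_ge_of_endpoints (A := 11 / 10 + Real.log s) (c := c) (x₀ := 10 * s) (x := lam)
        (by positivity) hx0 hlam1 (by
          rw [Real.log_mul (by norm_num) hs0.ne']
          have : c * s ≤ c * p := mul_le_mul_of_nonneg_left hs2 hc0
          linarith) (by linarith)
      have e : (l : ℝ) / μ = lam / s := by rw [hμ, hlam]; field_simp
      rw [e, Real.log_div hlam0.ne' hs0.ne']
      linarith
    have h5 := overlapCount_far hn hS hk (l := l) (by rw [← hs, ← hμ]; linarith)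
    have h6 : Real.exp (M * (X / G)) ≤ Real.exp (l * (Real.log (l / μ) - 1)) :=
      Real.exp_le_exp.2 (h3.trans (mul_le_mul_of_nonneg_left hlog hl0.le))
    calc overlapCount S k l * pairPoly (q + 1) p u β Δ ^ M
        ≤ overlapCount S k l * (G ^ M * Real.exp (l * (Real.log (l / μ) - 1))) := by
          refine mul_le_mul_of_nonneg_left (h2.trans ?_) hh0
          exact mul_le_mul_of_nonneg_left h6 (by positivity)
      _ = G ^ M * (overlapCount S k l * Real.exp (l * (Real.log (l / μ) - 1))) := by ring
      _ ≤ G ^ M * n.choose k := mul_le_mul_of_nonneg_left h5 (by positivity)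
      _ = n.choose k * G ^ M := mul_comm _ _
      _ ≤ _ := le_mul_of_one_le_right (by positivity) (Real.one_le_exp (by positivity))

/-! ### The second moment method -/

set_option maxHeartbeats 1000000 in
/-- The Paley–Zygmund (Cauchy–Schwarz) lower bound on the number of words having an independent
set of size `k`. -/
lemma card_wordAlpha_ge_lower {n d M q k : ℕ} (hq : 1 ≤ q) (hn : 0 < n) (hM : M * (q + 1) = d * n)
    {p θ c W : ℝ} (hp0 : 0 < p)
    (hp : 1000 * (q + 1) * p ≤ 1) (hs1 : p - 2 * p ^ (q + 1) ≤ (k : ℝ) / n)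
    (hs2 : (k : ℝ) / n ≤ p) (hθ : 128 * 577 ^ q * d * p ^ (2 * q) ≤ θ) (hθ1 : θ ≤ 1 / 10)
    (hc : (d : ℝ) / (q + 1) * p ^ q * Real.exp (16 * (q + 1) * p) ≤ c)
    (hc1 : 10 * c * p ≤ 1 / 2) (hc2 : c + 11 / 10 + Real.log p ≤ 0)
    (hW : 0 < W) (hgw : (1 - p ^ (q + 1)) ^ M ≤ W * goodWeight M (q + 1) p (d * k)) :
    ((balanced (Fin M × Fin (q + 1)) n d).card : ℝ) ≤
      (((balanced (Fin M × Fin (q + 1)) n d).filter fun w => k ≤ wordAlpha w).card : ℝ) *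
        ((n + 1) * (Real.exp 1 * (d * n + 1)) ^ 4 * W ^ 2 *
          Real.exp (k * ((k : ℝ) / n) * θ ^ 2)) := by
  obtain ⟨hsh, hu1, hue, hu2, hβ0, hβ⟩ := tilt_bounds hq hp0 hp hs1 hs2
  have hnR : (0 : ℝ) < n := by exact_mod_cast hn
  have hqR : (1 : ℝ) ≤ q := by exact_mod_cast hq
  have hp1 : p ≤ 1 / 2000 := by nlinarith
  have hs0 : 0 < (k : ℝ) / n := by linarith
  have hkn : k ≤ n := by
    have : (k : ℝ) / n ≤ 1 := by linarith
    rw [div_le_one hnR] at this; exact_mod_cast this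
  set u := p / ((k : ℝ) / n) with hu
  set v := (1 - p) / (1 - (k : ℝ) / n) with hv
  have hu0 : 0 < u := by linarith
  have hv0 : 0 < v := div_pos (by linarith) (by linarith)
  have hsu : (k : ℝ) / n * u = p := by
    rw [hu]; exact mul_div_cancel₀ _ hs0.ne'
  have hsv : (1 - (k : ℝ) / n) * v = 1 - p := by
    rw [hv]; exact mul_div_cancel₀ _ (by linarith)
  set B := balanced (Fin M × Fin (q + 1)) n d with hB
  set b : ℝ := (B.card : ℝ) with hb
  set gw := goodWeight M (q + 1) p (d * k) with hgwd
  set U := u ^ (d * k) * v ^ (d * (n - k)) with hU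
  have hU0 : 0 < U := by positivity
  set PP : ℕ → ℝ := fun l => pairPoly (q + 1) p u (u - v) ((l : ℝ) / n - ((k : ℝ) / n) ^ 2) with hPP
  set Ex := Real.exp (k * ((k : ℝ) / n) * θ ^ 2) with hEx
  set poly := (Real.exp 1 * ((d : ℝ) * n + 1)) ^ 4 with hpoly
  set 𝒯 := (univ : Finset (Fin n)).powersetCard k with h𝒯
  have hC : (𝒯.card : ℝ) = n.choose k := by rw [h𝒯, card_powersetCard]; simp
  set C : ℝ := (n.choose k : ℝ) with hCd
  have hC0 : 0 < C := by rw [hCd]; exact_mod_cast Nat.choose_pos hkn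
  set Z := B.filter fun w => k ≤ wordAlpha w with hZ
  set X : (Fin M × Fin (q + 1) → Fin n) → ℝ := fun w => ((𝒯.filter fun T => Avoids w T).card : ℝ)
    with hX
  have hG0 : 0 < 1 - p ^ (q + 1) := by
    have : p ^ (q + 1) ≤ p := pow_le_of_le_one hp0.le (by linarith) (by omega)
    linarith
  have hgw0 : 0 < gw := pos_of_mul_pos_right (lt_of_lt_of_le (pow_pos hG0 M) hgw) hW.le
  have hT : ∀ T ∈ 𝒯, T.card = k := fun T h => (mem_powersetCard.1 h).2
  have m1 : C * (b * gw) ≤ (∑ w ∈ B, X w) * U := by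
    have e : ∑ w ∈ B, X w = ∑ T ∈ 𝒯, ((B.filter fun w => Avoids w T).card : ℝ) := by
      simp only [hX, Finset.card_filter, Nat.cast_sum]
      rw [Finset.sum_comm]
    rw [e, Finset.sum_mul, ← hC, ← nsmul_eq_mul, ← Finset.sum_const]
    exact Finset.sum_le_sum fun T h => card_avoids_ge hn hM (hT T h) p u v hu0 hv0 hsu hsv
  have m2 : (∑ w ∈ B, X w ^ 2) * U ^ 2
      ≤ C * ((n + 1) * (poly * b * (C * ((1 - p ^ (q + 1)) ^ 2) ^ M * Ex))) := by
    have e : ∑ w ∈ B, X w ^ 2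
        = ∑ S ∈ 𝒯, ∑ T ∈ 𝒯, ((B.filter fun w => Avoids w S ∧ Avoids w T).card : ℝ) := by
      have : ∀ w, X w ^ 2 = ∑ S ∈ 𝒯, ∑ T ∈ 𝒯, (if Avoids w S ∧ Avoids w T then (1 : ℝ) else 0) := by
        intro w
        simp only [hX, Finset.card_filter, Nat.cast_sum, sq, Finset.sum_mul_sum]
        refine Finset.sum_congr rfl fun S _ => Finset.sum_congr rfl fun T _ => ?_
        by_cases h1 : Avoids w S <;> by_cases h2 : Avoids w T <;> simp [h1, h2]
      simp only [this]
      rw [Finset.sum_comm]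
      refine Finset.sum_congr rfl fun S _ => ?_
      rw [Finset.sum_comm]
      refine Finset.sum_congr rfl fun T _ => ?_
      rw [Finset.card_filter]; push_cast; rfl
    rw [e, Finset.sum_mul, ← hC, ← nsmul_eq_mul, ← Finset.sum_const, hC]
    refine Finset.sum_le_sum fun S hS => ?_
    rw [Finset.sum_mul]
    have hpair : ∀ T ∈ 𝒯, ((B.filter fun w => Avoids w S ∧ Avoids w T).card : ℝ) * U ^ 2
        ≤ poly * b * PP (S ∩ T).card ^ M := by
      intro T hTm
      have h := card_pair_avoids_le hn hM (hT S hS) (hT T hTm) u v hu0 hv0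
        (by rw [hsu, hsv]; ring)
      refine h.trans (le_of_eq ?_)
      rw [hsu]
      simp only [hPP, pairPoly]
      congr 4
      rw [← hsu]; ring
    refine (Finset.sum_le_sum hpair).trans ?_
    have hfib : ∑ T ∈ 𝒯, poly * b * PP (S ∩ T).card ^ M
        = ∑ l ∈ range (k + 1), poly * b * (overlapCount S k l * PP l ^ M) := by
      rw [← Finset.sum_fiberwise_of_maps_to (s := 𝒯) (t := range (k + 1))
        (g := fun T => (S ∩ T).card)]
      · refine Finset.sum_congr rfl fun l _ => ?_
        rw [Finset.sum_congr rfl (g := fun _ => poly * b * PP l ^ M)]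
        · rw [Finset.sum_const, nsmul_eq_mul]
          simp only [overlapCount, h𝒯]
          ring
        · intro T hTl
          rw [(mem_filter.1 hTl).2]
      · intro T _
        rw [mem_range]
        have := Finset.card_le_card (Finset.inter_subset_left (s₁ := S) (s₂ := T))
        rw [hT S hS] at this
        omega
    rw [hfib]
    calc ∑ l ∈ range (k + 1), poly * b * (overlapCount S k l * PP l ^ M)
        ≤ ∑ l ∈ range (k + 1), poly * b * (C * ((1 - p ^ (q + 1)) ^ 2) ^ M * Ex) := by
          refine Finset.sum_le_sum fun l hl => mul_le_mul_of_nonneg_left ?_ (by positivity)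
          exact overlap_pointwise hq hn hM (hT S hS) (by rw [mem_range] at hl; omega) hp0 hp hs1 hs2
            hθ hθ1 hc hc1 hc2
      _ = (k + 1) * (poly * b * (C * ((1 - p ^ (q + 1)) ^ 2) ^ M * Ex)) := by
          rw [Finset.sum_const, card_range, nsmul_eq_mul]; push_cast; ring
      _ ≤ _ := by
          have : (k : ℝ) ≤ n := by exact_mod_cast hkn
          refine mul_le_mul_of_nonneg_right (by linarith) (by positivity)
  have cs : (∑ w ∈ B, X w) ^ 2 ≤ Z.card * ∑ w ∈ B, X w ^ 2 := by
    have hsum : ∑ w ∈ B, X w = ∑ w ∈ Z, X w := by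
      refine (Finset.sum_subset (Finset.filter_subset _ _) fun w hw hw' => ?_).symm
      simp only [hX, Nat.cast_eq_zero, Finset.card_eq_zero, Finset.filter_eq_empty_iff]
      intro T hTm hav
      refine hw' (mem_filter.2 ⟨hw, ?_⟩)
      rw [← hT T hTm]
      exact hav.card_le
    rw [hsum]
    refine sq_sum_le_card_mul_sum_sq.trans ?_
    exact mul_le_mul_of_nonneg_left (Finset.sum_le_sum_of_subset_of_nonneg
      (Finset.filter_subset _ _) fun _ _ _ => sq_nonneg _) (by positivity)
  have hGle : ((1 - p ^ (q + 1)) ^ 2) ^ M ≤ (W * gw) ^ 2 := by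
    rw [← pow_mul, mul_comm 2 M, pow_mul]
    exact pow_le_pow_left₀ (by positivity) hgw 2
  rcases eq_or_lt_of_le (show 0 ≤ b by positivity) with hb0 | hb0
  · rw [← hb0]; positivity
  have fin : (C ^ 2 * gw ^ 2 * b) * b
      ≤ (C ^ 2 * gw ^ 2 * b) * (Z.card * ((n + 1) * poly * W ^ 2 * Ex)) := by
    calc (C ^ 2 * gw ^ 2 * b) * b = (C * (b * gw)) ^ 2 := by ring
      _ ≤ ((∑ w ∈ B, X w) * U) ^ 2 := pow_le_pow_left₀ (by positivity) m1 2
      _ = (∑ w ∈ B, X w) ^ 2 * U ^ 2 := by ring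
      _ ≤ (Z.card * ∑ w ∈ B, X w ^ 2) * U ^ 2 := mul_le_mul_of_nonneg_right cs (by positivity)
      _ = Z.card * ((∑ w ∈ B, X w ^ 2) * U ^ 2) := by ring
      _ ≤ Z.card * (C * ((n + 1) * (poly * b * (C * ((1 - p ^ (q + 1)) ^ 2) ^ M * Ex)))) :=
          mul_le_mul_of_nonneg_left m2 (by positivity)
      _ ≤ Z.card * (C * ((n + 1) * (poly * b * (C * (W * gw) ^ 2 * Ex)))) := by gcongr
      _ = _ := by ring
  exact le_of_mul_le_mul_left fin (by positivity)

/-! ### The asymptotic regime of large degree -/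

/-- The threshold density for uniformity `q + 1`. -/
noncomputable def threshold (q d : ℕ) : ℝ :=
  (((q : ℝ) + 1) * Real.log d / ((q : ℝ) * d)) ^ ((1 : ℝ) / (q : ℝ))

/-- The conditions expressing that the degree `d` is large in terms of `q = r - 1` and `ε₁`. Here `Y`
is the threshold density, `L = log d / q`, and `θ` is the exponential rate governing the pair weight
near the mean overlap. -/
structure LargeDegree (q : ℕ) (ε₁ : ℝ) (d : ℕ) (Y L θ : ℝ) : Prop where
  d_pos : 0 < d
  Y_pos : 0 < Y
  L_eq : (d : ℝ) / (q + 1) * Y ^ q = L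
  Y_small : 1000 * (q + 1) * Y ≤ 1
  exp_small : (1 - ε₁) * Real.exp (16 * (q + 1) * Y) ≤ 1 - ε₁ / 2
  θ_eq : θ = 128 * 577 ^ q * d * Y ^ (2 * q)
  θ_small : θ ≤ 1 / 10
  θ_sq : 128 * d * θ ^ 2 ≤ ε₁ ^ 2
  LY_small : 20 * L * Y ≤ 1
  log_upper : Real.log Y + L + 2 ≤ ε₁ / 2 * L
  log_lower : -L ≤ Real.log Y
  L_large : 2 ≤ ε₁ * L

/-- All conditions follow from `log d → ∞`, since `Y ≤ d ^ (-1 / (2 q))` eventually. -/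
lemma eventually_largeDegree {q : ℕ} (hq : 1 ≤ q) {ε₁ : ℝ} (h0 : 0 < ε₁) (h1 : ε₁ ≤ 1) :
    ∀ᶠ d : ℕ in atTop, ∃ L θ : ℝ, LargeDegree q ε₁ d (threshold q d) L θ := by
  have hqR : (1 : ℝ) ≤ q := by exact_mod_cast hq
  have hq0 : (0 : ℝ) < q := by linarith
  have hlogd : Tendsto (fun d : ℕ => Real.log (d : ℝ)) atTop atTop :=
    Real.tendsto_log_atTop.comp tendsto_natCast_atTop_atTop
  set κ := Real.log (((q : ℝ) + 1) / q) with hκ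
  have hκ0 : 0 ≤ κ := Real.log_nonneg (by rw [one_le_div hq0]; linarith)
  set η := min (ε₁ / 4) (1 / 2) with hη
  have hη0 : 0 < η := by rw [hη]; positivity
  have c1 : ∀ᶠ x : ℝ in atTop, Real.log x ≤ (η / 2) * x := by
    have := Real.isLittleO_log_id_atTop.bound (half_pos hη0)
    filter_upwards [this, eventually_ge_atTop 0] with x hx hx0
    simp only [id_eq, Real.norm_eq_abs, abs_of_nonneg hx0] at hx
    exact (le_abs_self _).trans hx
  have c2 : ∀ᶠ x : ℝ in atTop, κ ≤ (η / 2) * x :=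
    (tendsto_id.const_mul_atTop (half_pos hη0)).eventually_ge_atTop κ
  have c3 : ∀ᶠ x : ℝ in atTop, 8 * q ≤ ε₁ * x :=
    (tendsto_id.const_mul_atTop h0).eventually_ge_atTop _
  have hLt : Tendsto (fun x : ℝ => x / (2 * q)) atTop atTop :=
    tendsto_id.atTop_div_const (by positivity)
  have hexp0 : Tendsto (fun x : ℝ => Real.exp (-(x / (2 * q)))) atTop (nhds 0) :=
    Real.tendsto_exp_neg_atTop_nhds_zero.comp hLt
  have c4 : ∀ᶠ x : ℝ in atTop, 1000 * (q + 1) * Real.exp (-(x / (2 * q))) ≤ 1 := by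
    have := hexp0.const_mul (1000 * ((q : ℝ) + 1))
    rw [mul_zero] at this
    exact this.eventually_le_const one_pos
  have c5 : ∀ᶠ x : ℝ in atTop,
      (1 - ε₁) * Real.exp (16 * (q + 1) * Real.exp (-(x / (2 * q)))) ≤ 1 - ε₁ / 2 := by
    have h2 := (((hexp0.const_mul (16 * ((q : ℝ) + 1))).rexp)).const_mul (1 - ε₁)
    rw [mul_zero, Real.exp_zero, mul_one] at h2
    exact h2.eventually_le_const (by linarith)
  have c6 : ∀ᶠ x : ℝ in atTop, 40 * ((x / (2 * q)) * Real.exp (-(x / (2 * q)))) ≤ 1 := by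
    have h2 := (((Real.tendsto_pow_mul_exp_neg_atTop_nhds_zero 1).comp hLt)).const_mul 40
    simp only [Function.comp_def, pow_one, mul_zero] at h2
    exact h2.eventually_le_const one_pos
  set A := 128 * 577 ^ q * (((q : ℝ) + 1) / q) ^ 2 with hA
  have c7 : ∀ᶠ x : ℝ in atTop, A * (x ^ 2 * Real.exp (-x)) ≤ 1 / 10 := by
    have h2 := (Real.tendsto_pow_mul_exp_neg_atTop_nhds_zero 2).const_mul A
    rw [mul_zero] at h2
    exact h2.eventually_le_const (by norm_num)
  have c8 : ∀ᶠ x : ℝ in atTop, 128 * A ^ 2 * (x ^ 4 * Real.exp (-x)) ≤ ε₁ ^ 2 := by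
    have h2 := (Real.tendsto_pow_mul_exp_neg_atTop_nhds_zero 4).const_mul (128 * A ^ 2)
    rw [mul_zero] at h2
    exact h2.eventually_le_const (by positivity)
  have call := (c1.and (c2.and (c3.and (c4.and (c5.and (c6.and (c7.and c8))))))).and
    (eventually_ge_atTop (1 : ℝ))
  filter_upwards [hlogd.eventually call, eventually_gt_atTop 0] with d hd hd0
  obtain ⟨⟨e1, e2, e3, e4, e5, e6, e7, e8⟩, hx1⟩ := hd
  set x := Real.log (d : ℝ) with hx
  have hdR : (0 : ℝ) < d := by exact_mod_cast hd0
  have hde : (d : ℝ) = Real.exp x := (Real.exp_log hdR).symm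
  have hx0 : 0 < x := by linarith
  have hpos : 0 < ((q : ℝ) + 1) * x / ((q : ℝ) * d) := by positivity
  set Y := threshold q d with hY
  have hY0 : 0 < Y := Real.rpow_pos_of_pos hpos _
  have hYq : Y ^ q = ((q : ℝ) + 1) * x / ((q : ℝ) * d) := by
    rw [hY, threshold, ← Real.rpow_natCast, ← Real.rpow_mul hpos.le, one_div,
      inv_mul_cancel₀ hq0.ne', Real.rpow_one]
  have hlogY : Real.log Y = (κ + Real.log x - x) / q := by
    have h2 : q * Real.log Y = κ + Real.log x - x := by
      rw [← Real.log_pow, hYq, show ((q : ℝ) + 1) * x / ((q : ℝ) * d)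
        = (((q : ℝ) + 1) / q * x) / d by field_simp, Real.log_div (by positivity) hdR.ne',
        Real.log_mul (by positivity) hx0.ne']
    rw [← h2]; field_simp
  set L := x / q with hL
  have hLq : x = L * q := by rw [hL]; field_simp
  have hL0 : 0 < L := by positivity
  have hlogx : 0 ≤ Real.log x := Real.log_nonneg hx1
  have hup : Real.log Y ≤ (η - 1) * L := by
    rw [hlogY, div_le_iff₀ hq0]
    have : (η - 1) * L * q = (η - 1) * x := by rw [hLq]; ring
    rw [this]; linarith
  have hη2 : η ≤ 1 / 2 := min_le_right _ _
  have hη4 : η ≤ ε₁ / 4 := min_le_left _ _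
  have hYle : Y ≤ Real.exp (-(x / (2 * q))) := by
    rw [← Real.log_le_iff_le_exp hY0]
    refine hup.trans ?_
    have : x / (2 * q) = L / 2 := by rw [hL]; field_simp
    rw [this]; nlinarith
  have hθ : 128 * 577 ^ q * d * Y ^ (2 * q) = A * (x ^ 2 * Real.exp (-x)) := by
    rw [mul_comm 2 q, pow_mul, hYq, hA, Real.exp_neg, ← hde]
    field_simp
  have hεL : 8 ≤ ε₁ * L := by
    rw [hLq, ← mul_assoc] at e3
    exact le_of_mul_le_mul_right e3 hq0
  refine ⟨L, 128 * 577 ^ q * d * Y ^ (2 * q), hd0, hY0, ?_, ?_, ?_, rfl, ?_, ?_, ?_, ?_, ?_, ?_⟩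
  · rw [hYq, hL]; field_simp
  · exact le_trans (mul_le_mul_of_nonneg_left hYle (by positivity)) e4
  · refine le_trans (mul_le_mul_of_nonneg_left (Real.exp_le_exp.2 ?_) (by linarith)) e5
    exact mul_le_mul_of_nonneg_left hYle (by positivity)
  · rw [hθ]; exact e7
  · rw [hθ]
    have : 128 * (d : ℝ) * (A * (x ^ 2 * Real.exp (-x))) ^ 2
        = 128 * A ^ 2 * (x ^ 4 * Real.exp (-x)) := by
      rw [Real.exp_neg, ← hde]; field_simp
    rw [this]; exact e8
  · have h2 : 20 * L * Y ≤ 20 * L * Real.exp (-(x / (2 * q))) :=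
      mul_le_mul_of_nonneg_left hYle (by positivity)
    have h3 : 20 * L = 40 * (x / (2 * q)) := by rw [hL]; field_simp; norm_num
    rw [h3] at h2 ⊢
    linarith
  · nlinarith
  · rw [hlogY, le_div_iff₀ hq0]
    have : -L * q = -x := by rw [hLq]; ring
    rw [this]; linarith
  · linarith

/-! ### The two tails of the independence number -/

lemma tendsto_poly_mul_exp_neg {d : ℕ} (hd : 0 < d) {a : ℝ} (ha : 0 < a) (K : ℕ) :
    Tendsto (fun n : ℕ => ((d : ℝ) * n + 1) ^ K * Real.exp (-(a * n))) atTop (nhds 0) := by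
  have hdR : (0 : ℝ) < d := by exact_mod_cast hd
  have hlin : Tendsto (fun n : ℕ => (a / d) * ((d : ℝ) * n + 1)) atTop atTop :=
    ((tendsto_atTop_add_const_right _ 1
      (tendsto_natCast_atTop_atTop.const_mul_atTop hdR))).const_mul_atTop (by positivity)
  have h := ((Real.tendsto_pow_mul_exp_neg_atTop_nhds_zero K).comp hlin).const_mul
    ((d / a) ^ K * Real.exp (a / d))
  rw [mul_zero] at h
  refine h.congr fun n => ?_
  simp only [Function.comp_def]
  have h1 : Real.exp (-(a * n)) = Real.exp (a / d) * Real.exp (-(a / d * ((d : ℝ) * n + 1))) := by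
    rw [← Real.exp_add]; congr 1; field_simp; ring
  have h2 : ((d : ℝ) * n + 1) ^ K = (d / a) ^ K * (a / d * ((d : ℝ) * n + 1)) ^ K := by
    rw [← mul_pow]; congr 1; field_simp
  rw [h1, h2]; ring

lemma choose_mul_div_pow_le {n : ℕ} (hn : 0 < n) (k : ℕ) :
    (n.choose k : ℝ) * ((k : ℝ) / n) ^ k ≤ Real.exp k := by
  have hnR : (0 : ℝ) < n := by exact_mod_cast hn
  have h1 : (n.choose k : ℝ) ≤ (n : ℝ) ^ k / (k.factorial : ℝ) := Nat.choose_le_pow_div k n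
  have h2 := Real.pow_div_factorial_le_exp (x := (k : ℝ)) (Nat.cast_nonneg k) k
  refine le_trans (mul_le_mul_of_nonneg_right h1 (by positivity)) (le_trans (le_of_eq ?_) h2)
  rw [div_pow]; field_simp

/-- First moment: the expected number of independent sets of density above `(1 + ε') Y` is
exponentially small. -/
lemma card_upper_tail {q d n M : ℕ} {ε₁ ε' Y L θ : ℝ} (hLD : LargeDegree q ε₁ d Y L θ)
    (hq : 1 ≤ q) (hn : 0 < n) (hM : M * (q + 1) = d * n) (hε' : 0 < ε') (hεL : 2 ≤ ε' * L) :
    (((balanced (Fin M × Fin (q + 1)) n d).filter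
        fun w => (1 + ε') * Y * n < (wordAlpha w : ℝ)).card : ℝ) ≤
      (Real.exp 1 * (d * n + 1)) ^ 2 * Real.exp (-(Y * n)) *
        (balanced (Fin M × Fin (q + 1)) n d).card := by
  have hnR : (0 : ℝ) < n := by exact_mod_cast hn
  have hY := hLD.Y_pos
  set k := ⌊(1 + ε') * Y * n⌋₊ + 1 with hk
  have hkR : (1 + ε') * Y * n ≤ k := by
    rw [hk]; push_cast; exact (Nat.lt_floor_add_one _).le
  have hmono : (((balanced (Fin M × Fin (q + 1)) n d).filter
        fun w => (1 + ε') * Y * n < (wordAlpha w : ℝ)).card : ℝ) ≤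
      ((balanced (Fin M × Fin (q + 1)) n d).filter fun w => k ≤ wordAlpha w).card := by
    norm_cast
    refine card_le_card fun w hw => ?_
    simp only [mem_filter] at hw ⊢
    exact ⟨hw.1, (Nat.floor_lt (by positivity)).2 hw.2⟩
  refine hmono.trans ((card_wordAlpha_ge_le (Nat.succ_pos q) hn hM k).trans ?_)
  rcases lt_or_ge n k with hkn | hkn
  · rw [Nat.choose_eq_zero_of_lt hkn]; simp only [Nat.cast_zero, zero_mul]; positivity
  have hknR : (k : ℝ) ≤ n := by exact_mod_cast hkn
  set s := (k : ℝ) / n with hs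
  have hsY : (1 + ε') * Y ≤ s := by rw [hs, le_div_iff₀ hnR]; exact hkR
  have hYs : Y ≤ s := by nlinarith
  have hs0 : 0 < s := hY.trans_le hYs
  have hs1 : s ≤ 1 := by rw [hs, div_le_one hnR]; exact hknR
  have hkpos : (0 : ℝ) ≤ k := Nat.cast_nonneg _
  have hlogs : -L ≤ Real.log s := hLD.log_lower.trans (Real.log_le_log hY hYs)
  have hpowk : Real.exp (-(k * L)) ≤ s ^ k := by
    rw [← Real.exp_log (pow_pos hs0 k), Real.log_pow]
    apply Real.exp_le_exp.2
    nlinarith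
  have hchoose : (n.choose k : ℝ) ≤ Real.exp (k + k * L) := by
    have h1 := choose_mul_div_pow_le hn k
    have h2 : (n.choose k : ℝ) * Real.exp (-(k * L)) ≤ Real.exp k :=
      (mul_le_mul_of_nonneg_left hpowk (Nat.cast_nonneg _)).trans h1
    rw [Real.exp_neg, ← div_eq_mul_inv, div_le_iff₀ (Real.exp_pos _)] at h2
    rwa [Real.exp_add]
  have hMs : (k : ℝ) * ((1 + ε') * L) ≤ M * s ^ (q + 1) := by
    have hMR : (M : ℝ) * (q + 1) = d * n := by exact_mod_cast hM
    have hq1 : (0 : ℝ) < (q : ℝ) + 1 := by positivity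
    have hMe : (M : ℝ) = d * n / (q + 1) := by rw [eq_div_iff hq1.ne']; exact hMR
    have h1 : (M : ℝ) * s ^ (q + 1) = k * (d / (q + 1) * s ^ q) := by
      rw [pow_succ, hMe]
      have : s * n = k := by rw [hs]; field_simp
      rw [← this]; field_simp
    rw [h1, ← hLD.L_eq]
    refine mul_le_mul_of_nonneg_left ?_ hkpos
    have h2 : (1 + ε') * Y ^ q ≤ s ^ q := by
      refine le_trans ?_ (pow_le_pow_left₀ (by positivity) hsY q)
      rw [mul_pow]
      refine mul_le_mul_of_nonneg_right ?_ (by positivity)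
      exact le_self_pow₀ (by linarith) (by omega)
    calc (1 + ε') * ((d : ℝ) / (q + 1) * Y ^ q) = d / (q + 1) * ((1 + ε') * Y ^ q) := by ring
      _ ≤ _ := mul_le_mul_of_nonneg_left h2 (by positivity)
  have hpowM : (1 - s ^ (q + 1)) ^ M ≤ Real.exp (-(k * ((1 + ε') * L))) := by
    have h0 : s ^ (q + 1) ≤ 1 := pow_le_one₀ hs0.le hs1
    have h1 : 1 - s ^ (q + 1) ≤ Real.exp (-(s ^ (q + 1))) := by
      have := Real.add_one_le_exp (-(s ^ (q + 1))); linarith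
    refine (pow_le_pow_left₀ (by linarith) h1 M).trans ?_
    rw [← Real.exp_nat_mul]
    apply Real.exp_le_exp.2
    linarith
  have hprod : (n.choose k : ℝ) * (1 - s ^ (q + 1)) ^ M ≤ Real.exp (-(Y * n)) := by
    have h0 : s ^ (q + 1) ≤ 1 := pow_le_one₀ hs0.le hs1
    refine (mul_le_mul hchoose hpowM (pow_nonneg (by linarith) _) (Real.exp_pos _).le).trans ?_
    rw [← Real.exp_add]
    apply Real.exp_le_exp.2
    have h1 : (k : ℝ) * 2 ≤ k * (ε' * L) := mul_le_mul_of_nonneg_left hεL hkpos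
    have h2 : Y * n ≤ k := by
      refine le_trans ?_ hkR
      have : 0 ≤ ε' * (Y * n) := by positivity
      linarith
    linarith
  have hB : (0 : ℝ) ≤ (balanced (Fin M × Fin (q + 1)) n d).card := Nat.cast_nonneg _
  calc (n.choose k : ℝ) * ((Real.exp 1 * (d * n + 1)) ^ 2 *
        (balanced (Fin M × Fin (q + 1)) n d).card * (1 - s ^ (q + 1)) ^ M)
      = ((Real.exp 1 * (d * n + 1)) ^ 2 * (balanced (Fin M × Fin (q + 1)) n d).card) *
        ((n.choose k : ℝ) * (1 - s ^ (q + 1)) ^ M) := by ring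
    _ ≤ ((Real.exp 1 * (d * n + 1)) ^ 2 * (balanced (Fin M × Fin (q + 1)) n d).card) *
        Real.exp (-(Y * n)) := mul_le_mul_of_nonneg_left hprod (by positivity)
    _ = _ := by ring

/-- The second moment bound, specialised to the density `p = (1 - ε₁) Y`: balanced words with
`k ≤ wordAlpha` have probability at least `exp (-ε₁² Y² n / (128 d))` up to polynomial factors. -/
lemma card_second_moment {q d : ℕ} {ε₁ Y L θ : ℝ} (hLD : LargeDegree q ε₁ d Y L θ)
    (hq : 1 ≤ q) (hε₁ : 0 < ε₁) (hε₂ : ε₁ ≤ 1 / 16) :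
    ∃ n₀ : ℕ, ∀ n : ℕ, n₀ ≤ n → 0 < n → ∀ M : ℕ, M * (q + 1) = d * n →
      ∃ k : ℕ, (1 - 2 * ε₁) * Y * n ≤ k ∧
        ((balanced (Fin M × Fin (q + 1)) n d).card : ℝ) ≤
          (((balanced (Fin M × Fin (q + 1)) n d).filter fun w => k ≤ wordAlpha w).card : ℝ) *
            (4 * Real.exp 1 ^ 4 * (d * n + 1) ^ (7 + 2 * d) *
              Real.exp (ε₁ ^ 2 * Y ^ 2 / (128 * d) * n)) := by
  have hY := hLD.Y_pos
  have hd := hLD.d_pos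
  have hdR : (1 : ℝ) ≤ d := by exact_mod_cast hd
  have hqR : (1 : ℝ) ≤ q := by exact_mod_cast hq
  have hYs := hLD.Y_small
  have hY1 : Y ≤ 1 / 2000 := by nlinarith
  set p := (1 - ε₁) * Y with hp
  have hp0 : 0 < p := by rw [hp]; exact mul_pos (by linarith) hY
  have hpY : p ≤ Y := by rw [hp]; nlinarith
  have hL0 : 0 < L := by rw [← hLD.L_eq]; positivity
  obtain ⟨n₀, hn₀⟩ := exists_size (r := q + 1) (d := d) (by omega) hd hp0 (by linarith)
  refine ⟨n₀, fun n hn hnpos M hM => ?_⟩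
  have hnR : (0 : ℝ) < n := by exact_mod_cast hnpos
  have hn1 : (1 : ℝ) ≤ n := by exact_mod_cast hnpos
  obtain ⟨k, hk1, hk2, hk3⟩ := hn₀ n hn M hM
  refine ⟨k, ?_, ?_⟩
  · rw [le_div_iff₀ hnR] at hk1
    refine le_trans (mul_le_mul_of_nonneg_right ?_ hnR.le) hk1
    have h2 : 2 * Y ≤ ε₁ := by
      have h := hLD.exp_small
      have h3 := Real.add_one_le_exp (16 * ((q : ℝ) + 1) * Y)
      have h4 := mul_le_mul_of_nonneg_left h3 (show 0 ≤ 1 - ε₁ by linarith)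
      have h5 : 16 * ((q : ℝ) + 1) * Y ≥ 32 * Y := by nlinarith
      have h6 := mul_le_mul_of_nonneg_left h5 (show 0 ≤ 1 - ε₁ by linarith)
      nlinarith
    have h3 : p ^ (q + 1) ≤ Y * Y := by
      calc p ^ (q + 1) ≤ Y ^ (q + 1) := pow_le_pow_left₀ hp0.le hpY _
        _ = Y ^ q * Y := pow_succ _ _
        _ ≤ Y * Y := mul_le_mul_of_nonneg_right
            (pow_le_of_le_one hY.le (by linarith) (by omega)) hY.le
    have h4 : 2 * Y * Y ≤ ε₁ * Y := mul_le_mul_of_nonneg_right h2 hY.le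
    rw [hp] at h3 ⊢
    linarith
  · set W : ℝ := 2 * (d * n + 1) * (d * n + 1 : ℝ) ^ d with hW
    have hW0 : 0 < W := by positivity
    have hpq : p ^ q ≤ (1 - ε₁) * Y ^ q := by
      rw [hp, mul_pow]
      exact mul_le_mul_of_nonneg_right
        (pow_le_of_le_one (by linarith) (by linarith) (by omega)) (by positivity)
    have hc : (d : ℝ) / (q + 1) * p ^ q * Real.exp (16 * (q + 1) * p) ≤ (1 - ε₁ / 2) * L := by
      have e1 : Real.exp (16 * (q + 1) * p) ≤ Real.exp (16 * (q + 1) * Y) :=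
        Real.exp_le_exp.2 (mul_le_mul_of_nonneg_left hpY (by positivity))
      calc (d : ℝ) / (q + 1) * p ^ q * Real.exp (16 * (q + 1) * p)
          ≤ (d : ℝ) / (q + 1) * ((1 - ε₁) * Y ^ q) * Real.exp (16 * (q + 1) * Y) :=
            mul_le_mul (mul_le_mul_of_nonneg_left hpq (by positivity)) e1
              (Real.exp_pos _).le (mul_nonneg (by positivity)
                (mul_nonneg (by linarith) (by positivity)))
        _ = ((1 - ε₁) * Real.exp (16 * (q + 1) * Y)) * L := by rw [← hLD.L_eq]; ring
        _ ≤ _ := mul_le_mul_of_nonneg_right hLD.exp_small hL0.le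
    have hc1 : 10 * ((1 - ε₁ / 2) * L) * p ≤ 1 / 2 := by
      have h1 := hLD.LY_small
      have h2 : (1 - ε₁ / 2) * L ≤ L := by nlinarith
      have h3 : (1 - ε₁ / 2) * L * p ≤ L * Y :=
        mul_le_mul h2 hpY hp0.le hL0.le
      linarith
    have hc2 : (1 - ε₁ / 2) * L + 11 / 10 + Real.log p ≤ 0 := by
      have h1 := hLD.log_upper
      have h2 := Real.log_le_log hp0 hpY
      linarith
    have hθ : 128 * 577 ^ q * d * p ^ (2 * q) ≤ θ := by
      rw [hLD.θ_eq]
      exact mul_le_mul_of_nonneg_left (pow_le_pow_left₀ hp0.le hpY _) (by positivity)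
    have key := card_wordAlpha_ge_lower hq hnpos hM hp0
      ((mul_le_mul_of_nonneg_left hpY (by positivity)).trans hYs) hk1 hk2 hθ hLD.θ_small
      hc hc1 hc2 hW0 hk3
    refine key.trans (mul_le_mul_of_nonneg_left ?_ (Nat.cast_nonneg _))
    have hexp : Real.exp (k * ((k : ℝ) / n) * θ ^ 2) ≤
        Real.exp (ε₁ ^ 2 * Y ^ 2 / (128 * d) * n) := by
      apply Real.exp_le_exp.2
      have h1 : (k : ℝ) ≤ Y * n := by
        rw [div_le_iff₀ hnR] at hk2
        exact hk2.trans (mul_le_mul_of_nonneg_right hpY hnR.le)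
      have h2 : (k : ℝ) * ((k : ℝ) / n) ≤ Y * n * Y :=
        mul_le_mul h1 (hk2.trans hpY) (by positivity) (by positivity)
      have h3 : θ ^ 2 ≤ ε₁ ^ 2 / (128 * d) := by
        rw [le_div_iff₀ (by positivity)]; linarith [hLD.θ_sq]
      calc (k : ℝ) * ((k : ℝ) / n) * θ ^ 2 ≤ Y * n * Y * (ε₁ ^ 2 / (128 * d)) :=
            mul_le_mul h2 h3 (sq_nonneg _) (by positivity)
        _ = _ := by ring
    have hn2 : (n : ℝ) + 1 ≤ d * n + 1 := by nlinarith
    refine mul_le_mul ?_ hexp (Real.exp_pos _).le (by positivity)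
    calc ((n : ℝ) + 1) * (Real.exp 1 * (d * n + 1)) ^ 4 * W ^ 2
        ≤ (d * n + 1) * (Real.exp 1 * (d * n + 1)) ^ 4 * W ^ 2 := by gcongr
      _ = _ := by rw [hW]; ring

/-- Lower tail: the second moment bound locates the concentration point of `wordAlpha` above
`k - ε₁ Y n`, and the concentration inequality makes a further deficit of `ε₁ Y n` unlikely. -/
lemma card_lower_tail {q d : ℕ} {ε₁ Y L θ : ℝ} (hLD : LargeDegree q ε₁ d Y L θ)
    (hq : 1 ≤ q) (hε₁ : 0 < ε₁) (hε₂ : ε₁ ≤ 1 / 16) :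
    ∃ n₀ : ℕ, ∀ n : ℕ, n₀ ≤ n → 0 < n → ∀ M : ℕ, M * (q + 1) = d * n →
      (((balanced (Fin M × Fin (q + 1)) n d).filter
          fun w => (wordAlpha w : ℝ) < (1 - 4 * ε₁) * Y * n).card : ℝ) ≤
        Real.exp (-(ε₁ ^ 2 * Y ^ 2 / (64 * d) * n)) *
          (balanced (Fin M × Fin (q + 1)) n d).card := by
  have hY := hLD.Y_pos
  have hd := hLD.d_pos
  have hdR : (1 : ℝ) ≤ d := by exact_mod_cast hd
  have hqR : (1 : ℝ) ≤ q := by exact_mod_cast hq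
  have hYs := hLD.Y_small
  have hY1 : Y ≤ 1 / 2000 := by nlinarith
  obtain ⟨n₀, hn₀⟩ := card_second_moment hLD hq hε₁ hε₂
  set a := ε₁ ^ 2 * Y ^ 2 / (128 * d) with ha
  have ha0 : 0 < a := by positivity
  have ha2 : ε₁ ^ 2 * Y ^ 2 / (64 * d) = 2 * a := by rw [ha]; field_simp; norm_num
  have hlim := (tendsto_poly_mul_exp_neg hd ha0 (7 + 2 * d)).const_mul (4 * Real.exp 1 ^ 4)
  rw [mul_zero] at hlim
  obtain ⟨n₁, hn₁⟩ := eventually_atTop.1 (hlim.eventually_lt_const one_pos)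
  refine ⟨max n₀ n₁, fun n hn hnpos M hM => ?_⟩
  obtain ⟨k, hk, hcard⟩ := hn₀ n (le_trans (le_max_left _ _) hn) hnpos M hM
  have hsmall := hn₁ n (le_trans (le_max_right _ _) hn)
  have hnR : (0 : ℝ) < n := by exact_mod_cast hnpos
  have hB : 0 < ((balanced (Fin M × Fin (q + 1)) n d).card : ℝ) := by
    have := balanced_nonempty (I := Fin M × Fin (q + 1)) (n := n) (d := d) (by simpa using hM)
    exact_mod_cast this.card_pos
  obtain ⟨m, hm⟩ := balanced_concentration (I := Fin M × Fin (q + 1)) (n := n) (d := d)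
    (N := d * n) (by simpa using hM) (Nat.mul_pos hd hnpos) (fun w => (wordAlpha w : ℝ))
    (fun w _ a b => by convert wordAlpha_lipschitz (Nat.succ_pos q) w a b)
  set t := ε₁ * Y * n with ht
  have ht0 : 0 ≤ t := by positivity
  have ht8 : t ≤ 8 * ((d * n : ℕ) : ℝ) := by
    push_cast
    have h1 : ε₁ * Y ≤ 1 := by nlinarith
    have h2 : t ≤ 1 * n := mul_le_mul_of_nonneg_right h1 hnR.le
    have h3 : (1 : ℝ) * n ≤ d * n := mul_le_mul_of_nonneg_right hdR hnR.le
    linarith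
  have hrate : t ^ 2 / (64 * ((d * n : ℕ) : ℝ)) = 2 * a * n := by
    rw [ht, ha]; push_cast; field_simp; norm_num
  obtain ⟨hup, hlow⟩ := hm t ht0 ht8
  rw [hrate] at hup hlow
  have hmk : (k : ℝ) < m + t := by
    by_contra hcon
    push Not at hcon
    have h1 : (((balanced (Fin M × Fin (q + 1)) n d).filter fun w => k ≤ wordAlpha w).card : ℝ)
        ≤ (balanced (Fin M × Fin (q + 1)) n d).card * Real.exp (-(2 * a * n)) := by
      refine le_trans ?_ hup
      norm_cast
      refine card_le_card fun w hw => ?_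
      simp only [mem_filter] at hw ⊢
      exact ⟨hw.1, hcon.trans (by exact_mod_cast hw.2)⟩
    have h2 := hcard.trans (mul_le_mul_of_nonneg_right h1 (by positivity))
    have h3 : Real.exp (-(2 * a * n)) * Real.exp (a * n) = Real.exp (-(a * n)) := by
      rw [← Real.exp_add]; congr 1; ring
    have h4 : ((balanced (Fin M × Fin (q + 1)) n d).card : ℝ) * Real.exp (-(2 * a * n)) *
        (4 * Real.exp 1 ^ 4 * (d * n + 1) ^ (7 + 2 * d) * Real.exp (a * n)) =
        (balanced (Fin M × Fin (q + 1)) n d).card *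
          (4 * Real.exp 1 ^ 4 * ((d * n + 1) ^ (7 + 2 * d) * Real.exp (-(a * n)))) := by
      rw [← h3]; ring
    rw [h4] at h2
    have h5 := mul_lt_mul_of_pos_left hsmall hB
    linarith
  rw [ha2, mul_comm (Real.exp _)]
  refine le_trans ?_ hlow
  norm_cast
  refine card_le_card fun w hw => ?_
  simp only [mem_filter] at hw ⊢
  refine ⟨hw.1, ?_⟩
  have h1 := hw.2
  rw [ht] at hmk ⊢
  linarith

/-! ### Transfer to simple hypergraphs -/

lemma tendsto_error {d : ℕ} (hd : 0 < d) {Y b : ℝ} (hY : 0 < Y) (hb : 0 < b) (K : ℕ) :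
    Tendsto (fun n : ℕ => ((Real.exp 1 * (d * n + 1)) ^ 2 * Real.exp (-(Y * n)) +
      Real.exp (-(b * n))) * (2 * ((d : ℝ) * n + 1) ^ K)) atTop (nhds 0) := by
  have h1 := (tendsto_poly_mul_exp_neg hd hY (K + 2)).const_mul (2 * Real.exp 1 ^ 2)
  have h2 := (tendsto_poly_mul_exp_neg hd hb K).const_mul 2
  have h3 := h1.add h2
  rw [mul_zero, mul_zero, add_zero] at h3
  refine h3.congr fun n => ?_
  ring

/-- The two-sided estimate for a fixed large degree. -/
lemma tendsto_uniformProb {q d : ℕ} {ε ε₁ Y L θ : ℝ} (hLD : LargeDegree q ε₁ d Y L θ)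
    (hq : 1 ≤ q) (hε₁ : 0 < ε₁) (hε₂ : ε₁ ≤ 1 / 16) (hε : 4 * ε₁ ≤ ε) :
    Tendsto (fun n : ℕ => uniformProb (regularFamily n (q + 1) d)
        (fun E => |(independenceNumber E : ℝ) - Y * n| ≤ ε * (Y * n)))
      (atTop ⊓ principal {n : ℕ | q + 1 ∣ d * n}) (nhds 1) := by
  have hY := hLD.Y_pos
  have hd := hLD.d_pos
  have hdR : (1 : ℝ) ≤ d := by exact_mod_cast hd
  have hL0 : 0 < L := by rw [← hLD.L_eq]; positivity
  obtain ⟨n₀, hn₀⟩ := card_lower_tail hLD hq hε₁ hε₂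
  set b := ε₁ ^ 2 * Y ^ 2 / (64 * d) with hb
  have hb0 : 0 < b := by positivity
  set K := 40 * (q + 1) ^ 2 * d ^ 2 with hK
  set T := 20 * (q + 1) ^ 2 * d ^ 2 + (q + 1) * d + ((q + 1) * d) * ((q + 1) * d) + 6 with hT
  have hlim := ((tendsto_error hd hY hb0 K).const_sub 1).mono_left
    (inf_le_left : atTop ⊓ principal {n : ℕ | q + 1 ∣ d * n} ≤ atTop)
  rw [sub_zero] at hlim
  have hall : ∀ᶠ n : ℕ in atTop ⊓ principal {n : ℕ | q + 1 ∣ d * n},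
      1 - ((Real.exp 1 * (d * n + 1)) ^ 2 * Real.exp (-(Y * n)) + Real.exp (-(b * n))) *
          (2 * ((d : ℝ) * n + 1) ^ K) ≤
        uniformProb (regularFamily n (q + 1) d)
          (fun E => |(independenceNumber E : ℝ) - Y * n| ≤ ε * (Y * n)) ∧
      uniformProb (regularFamily n (q + 1) d)
          (fun E => |(independenceNumber E : ℝ) - Y * n| ≤ ε * (Y * n)) ≤ 1 := by
    rw [eventually_inf_principal]
    filter_upwards [eventually_ge_atTop n₀, eventually_gt_atTop ((T + 1) * (q + 1))]
      with n hn hnT hdvd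
    obtain ⟨M, hM'⟩ := hdvd
    have hM : M * (q + 1) = d * n := by rw [hM', mul_comm]
    have hnpos : 0 < n := lt_of_le_of_lt (Nat.zero_le _) hnT
    have hnR : (0 : ℝ) < n := by exact_mod_cast hnpos
    have hMT : T < M := by
      have h1 : (T + 1) * (q + 1) < M * (q + 1) :=
        lt_of_lt_of_le hnT (hM ▸ Nat.le_mul_of_pos_left n hd)
      have := lt_of_mul_lt_mul_right h1 (Nat.zero_le _)
      omega
    have hMpos : 0 < M := by omega
    have hMr : (M : ℝ) * ((q + 1 : ℕ) : ℝ) = d * n := by exact_mod_cast hM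
    have hdn : (0 : ℝ) < d * n := by positivity
    have hsimple := card_simple_ge (n := n) (M := M) (r := q + 1) (d := d) (by omega) hd hMT
    rw [hMr] at hsimple
    have hκ : 0 < 1 / (2 * ((d : ℝ) * n) ^ K) := by positivity
    have hbad : (((balanced (Fin M × Fin (q + 1)) n d).filter
        fun w => ¬ |((wordAlpha w : ℕ) : ℝ) - Y * n| ≤ ε * (Y * n)).card : ℝ) ≤
        ((Real.exp 1 * (d * n + 1)) ^ 2 * Real.exp (-(Y * n)) + Real.exp (-(b * n))) *
          (balanced (Fin M × Fin (q + 1)) n d).card := by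
      have h1 := card_upper_tail hLD hq hnpos hM (ε' := ε) (by linarith) (by
        have := hLD.L_large
        nlinarith)
      have h2 := hn₀ n hn hnpos M hM
      rw [add_mul]
      refine le_trans ?_ (add_le_add h1 h2)
      rw [← Nat.cast_add]
      refine Nat.cast_le.2 (le_trans (card_le_card fun w hw => ?_) (card_union_le _ _))
      simp only [mem_union, mem_filter] at hw ⊢
      rw [abs_le, not_and_or] at hw
      obtain ⟨hwB, h | h⟩ := hw
      · right
        refine ⟨hwB, ?_⟩
        have : 4 * ε₁ * (Y * n) ≤ ε * (Y * n) :=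
          mul_le_mul_of_nonneg_right hε (by positivity)
        linarith
      · left
        exact ⟨hwB, by linarith⟩
    have hfin := uniformProb_ge (Nat.succ_pos q) hM
      (fun x => |(x : ℝ) - Y * n| ≤ ε * (Y * n)) _ _ hκ hsimple hbad
    refine ⟨le_trans ?_ hfin.1, hfin.2⟩
    have hpow : ((d : ℝ) * n) ^ K ≤ ((d : ℝ) * n + 1) ^ K :=
      pow_le_pow_left₀ hdn.le (by linarith) K
    rw [div_div_eq_mul_div, div_one]
    have h0 : 0 ≤ (Real.exp 1 * (d * n + 1)) ^ 2 * Real.exp (-(Y * n)) + Real.exp (-(b * n)) := by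
      positivity
    have := mul_le_mul_of_nonneg_left (mul_le_mul_of_nonneg_left hpow zero_le_two) h0
    linarith
  exact tendsto_of_tendsto_of_tendsto_of_le_of_le' hlim tendsto_const_nhds
    (hall.mono fun _ h => h.1) (hall.mono fun _ h => h.2)

/-- For every integer `r ≥ 2` and every `ε > 0` there exists `d₀ = d₀(r, ε)` such that
for every fixed integer `d ≥ d₀`, w.h.p. (as `n → ∞` along `n` with `r ∣ d·n`)
`|α(H_r(n,d)) − Y·n| ≤ ε·Y·n` where `Y = (r log d/((r−1)d))^(1/(r−1))`. -/
theorem independence_number_of_random_regular_hypergraph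
    (r : ℕ) (hr : 2 ≤ r) (ε : ℝ) (hε : 0 < ε) :
    ∃ d₀ : ℕ, ∀ d : ℕ, d₀ ≤ d →
      Filter.Tendsto
        (fun n : ℕ =>
          uniformProb (regularFamily n r d)
            (fun E =>
              |(independenceNumber E : ℝ) -
                  ((r * Real.log d / (((r : ℝ) - 1) * d)) ^ ((1 : ℝ) / ((r : ℝ) - 1))) * n| ≤
                ε * (((r * Real.log d / (((r : ℝ) - 1) * d)) ^ ((1 : ℝ) / ((r : ℝ) - 1))) * n)))
        (Filter.atTop ⊓ Filter.principal {n : ℕ | r ∣ d * n}) (nhds 1) := by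
  obtain ⟨q, rfl⟩ : ∃ q, r = q + 1 := ⟨r - 1, by omega⟩
  have hq : 1 ≤ q := by omega
  set ε₁ := min (ε / 4) (1 / 16) with hε₁
  have h0 : 0 < ε₁ := by rw [hε₁]; positivity
  have h1 : ε₁ ≤ 1 / 16 := min_le_right _ _
  have h2 : ε₁ ≤ ε / 4 := min_le_left _ _
  obtain ⟨d₀, hd₀⟩ := eventually_atTop.1 (eventually_largeDegree hq h0 (by linarith))
  refine ⟨d₀, fun d hd => ?_⟩
  obtain ⟨L, θ, hLD⟩ := hd₀ d hd
  have h := tendsto_uniformProb hLD hq h0 h1 (ε := ε) (by linarith)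
  have hthr : (((q + 1 : ℕ) : ℝ) * Real.log d / ((((q + 1 : ℕ) : ℝ) - 1) * d)) ^
      ((1 : ℝ) / (((q + 1 : ℕ) : ℝ) - 1)) = threshold q d := by
    rw [threshold]; push_cast; rw [add_sub_cancel_right]
  rw [hthr]
  exact h
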